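/- Let 1 < p ≤ q < p*. For every open bounded convex set Ω ⊂ ℝ^N and every open ball B ⊂ ℝ^N one has the strict inequality μ_{p,q}(Ω) < λ_{p,q}(B) · (|B|/|Ω|)^{p/N + p/q − 1}. -/

import Mathlib

open MeasureTheory Metric Set Real

noncomputable section

/-- The Rayleigh quotient `(∫_Ω |∇v|^p) / (∫_Ω |v|^q)^(p/q)`, where the gradient is
understood as the (a.e. defined) Fréchet derivative. -/
def rayleighQuot {N : ℕ} (p q : ℝ) (Ω : Set (EuclideanSpace ℝ (Fin N)))
    (v : EuclideanSpace ℝ (Fin N) → ℝ) : ℝ :=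
  (∫ x in Ω, ‖fderiv ℝ v x‖ ^ p) / (∫ x in Ω, |v x| ^ q) ^ (p / q)

/-- The first (generalized) Dirichlet eigenvalue `λ_{p,q}(Ω)`: infimum of the Rayleigh
quotient over nontrivial smooth functions compactly supported in `Ω`. -/
def lambdaPQ {N : ℕ} (p q : ℝ) (Ω : Set (EuclideanSpace ℝ (Fin N))) : ℝ :=
  sInf { R : ℝ | ∃ v : EuclideanSpace ℝ (Fin N) → ℝ,
    ContDiff ℝ (⊤ : ℕ∞) v ∧ HasCompactSupport v ∧ tsupport v ⊆ Ω ∧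
    (∃ x ∈ Ω, v x ≠ 0) ∧ R = rayleighQuot p q Ω v }

/-- The first nontrivial (generalized) Neumann eigenvalue `μ_{p,q}(Ω)`: infimum of the
Rayleigh quotient over nontrivial Lipschitz functions on the closure of `Ω` satisfying
the constraint `∫_Ω |v|^(q-2) v = 0`. -/
def muPQ {N : ℕ} (p q : ℝ) (Ω : Set (EuclideanSpace ℝ (Fin N))) : ℝ :=
  sInf { R : ℝ | ∃ v : EuclideanSpace ℝ (Fin N) → ℝ, ∃ K : NNReal,
    LipschitzOnWith K v (closure Ω) ∧ (∃ x ∈ Ω, v x ≠ 0) ∧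
    (∫ x in Ω, |v x| ^ (q - 2) * v x) = 0 ∧ R = rayleighQuot p q Ω v }

/-- `q` is below the critical Sobolev exponent `p* = Np/(N-p)` (with `p* = ∞` if `p ≥ N`). -/
def ltCritical (N : ℕ) (p q : ℝ) : Prop := p < N → q < N * p / (N - p)

end

/-! Let `κ = p / N + p / q - 1`, which is positive by subcriticality, and let `ρ` be the radius of
a ball of the volume of `Ω`. After scaling, the claim is that `μ_{p,q}(Ω)` is smaller than the
Dirichlet eigenvalue of a ball of radius `ρ`. By symmetrization (Pólya–Szegő) the latter is
attained in the limit along radial nonincreasing profiles `f`.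

Place two copies of such a profile, supported in balls of radius `R = diam Ω / 2`, at the endpoints
`x₀`, `x₁` of a diameter. The bumps `f ‖x - x₀‖` and `c * f ‖x - x₁‖` have disjoint supports, and
for a suitable `c > 0` their difference is admissible for `μ_{p,q}(Ω)`. Seen from `x₀` or `x₁`, `Ω`
is star-shaped. Testing the Euler–Lagrange equation of a minimizing profile with `(f - f ℓ)⁺` shows
that the energy of `f` along a ray of length `ℓ` is at most the eigenvalue times its mass there,
with a gain proportional to `f ℓ`. Together with `p ≤ q` this bounds `μ_{p,q}(Ω)` by the Dirichlet
eigenvalue of a ball of radius `R`, strictly if a set of directions of positive measure has rays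
leaving `Ω` inside the support of `f`. Minimizers are replaced by near-minimizers throughout, with
errors that vanish in the limit.

The isodiametric inequality, which follows from the Brunn–Minkowski inequality for `Ω - Ω`, gives
`ρ ≤ R`. If `ρ < R`, scaling by `R / ρ` is strict because `κ > 0`. If `ρ = R`, the difference body
fills the ball of radius `diam Ω`; hence a point of `∂Ω` touched by an interior ball is the
endpoint of a diameter orthogonal to its tangent hyperplane. Rays from there nearly orthogonal to
that diameter leave `Ω` early, and the gain is positive.
-/

section BrunnMinkowski

open scoped ENNReal Pointwise

lemma volume_add_volume_le_volume_add_of_isCompact {K L : Set ℝ} (hK : IsCompact K)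
    (hL : IsCompact L) (hK₀ : K.Nonempty) (hL₀ : L.Nonempty) :
    volume K + volume L ≤ volume (K + L) := by
  -- The translates of `K` by `min L` and of `L` by `max K` lie in `K + L` and meet in one point.
  have hM : sSup K ∈ K := hK.sSup_mem hK₀
  have hm : sInf L ∈ L := hL.sInf_mem hL₀
  have hinter : volume ((K + {sInf L}) ∩ ({sSup K} + L)) = 0 := by
    refine measure_mono_null (t := {sSup K + sInf L}) ?_ (by simp)
    rintro x ⟨⟨a, ha, _, rfl, rfl⟩, ⟨_, rfl, b, hb, hab⟩⟩
    have := le_csSup hK.bddAbove ha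
    have := csInf_le hL.bddBelow hb
    simp only [mem_singleton_iff] at *
    linarith
  calc volume K + volume L
      = volume (K + {sInf L}) + volume ({sSup K} + L) := by simp
    _ = volume ((K + {sInf L}) ∪ ({sSup K} + L)) := by
        rw [← measure_union_add_inter _ (isCompact_singleton.add hL).measurableSet, hinter,
          add_zero]
    _ ≤ volume (K + L) := measure_mono <| union_subset
        (add_subset_add_left (singleton_subset_iff.2 hm))
        (add_subset_add_right (singleton_subset_iff.2 hM))

lemma volume_add_volume_le_volume_add {A B : Set ℝ} (hA : MeasurableSet A)
    (hB : MeasurableSet B) (hA₀ : A.Nonempty) (hB₀ : B.Nonempty) :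
    volume A + volume B ≤ volume (A + B) := by
  obtain ⟨x, hx⟩ := hA₀
  obtain ⟨y, hy⟩ := hB₀
  have compact_le : ∀ K, K ⊆ A ∧ IsCompact K → ∀ L, L ⊆ B ∧ IsCompact L →
      volume K + volume L ≤ volume (A + B) := by
    rintro K ⟨hKA, hK⟩ L ⟨hLB, hL⟩
    calc volume K + volume L ≤ volume (insert x K) + volume (insert y L) := by
          gcongr <;> exact subset_insert _ _
      _ ≤ volume (insert x K + insert y L) := volume_add_volume_le_volume_add_of_isCompact
          (hK.insert x) (hL.insert y) (insert_nonempty _ _) (insert_nonempty _ _)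
      _ ≤ volume (A + B) := measure_mono <|
          add_subset_add (insert_subset hx hKA) (insert_subset hy hLB)
  rw [hA.measure_eq_iSup_isCompact, hB.measure_eq_iSup_isCompact]
  simp only [iSup_and']
  exact ENNReal.biSup_add_biSup_le' ⟨∅, by simp⟩ ⟨∅, by simp⟩ compact_le

lemma ofReal_mul_volume_add_le_volume_smul_add_smul {A B : Set ℝ} (hA : MeasurableSet A)
    (hB : MeasurableSet B) (hA₀ : A.Nonempty) (hB₀ : B.Nonempty) {a b : ℝ} (ha : 0 < a)
    (hb : 0 < b) :
    ENNReal.ofReal a * volume A + ENNReal.ofReal b * volume B ≤ volume (a • A + b • B) := by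
  have h := volume_add_volume_le_volume_add (hA.const_smul₀ a) (hB.const_smul₀ b)
    (hA₀.smul_set (a := a)) (hB₀.smul_set (a := b))
  simpa [Measure.addHaar_smul, abs_of_pos ha, abs_of_pos hb] using h

lemma lintegral_eq_lintegral_measure_ofReal_lt {α : Type*} [MeasurableSpace α] (μ : Measure α)
    {f : α → ℝ≥0∞} (hf : Measurable f) (hfin : ∀ x, f x ≠ ∞) :
    ∫⁻ x, f x ∂μ = ∫⁻ t in Ioi (0 : ℝ), μ {x | ENNReal.ofReal t < f x} := by
  have h := lintegral_eq_lintegral_meas_lt μ (f := fun x => (f x).toReal)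
    (.of_forall fun _ => ENNReal.toReal_nonneg) hf.ennreal_toReal.aemeasurable
  simp only [ENNReal.ofReal_toReal (hfin _)] at h
  rw [h]
  refine setLIntegral_congr_fun measurableSet_Ioi fun t (ht : 0 < t) => ?_
  simp only [ENNReal.ofReal_lt_iff_lt_toReal ht.le (hfin _)]

lemma rpow_mul_rpow_le_ofReal_mul_add_ofReal_mul {a b : ℝ} (ha : 0 < a) (hb : 0 < b)
    (hab : a + b = 1) (x y : ℝ≥0∞) :
    x ^ a * y ^ b ≤ ENNReal.ofReal a * x + ENNReal.ofReal b * y := by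
  induction x with
  | top => simp [ENNReal.mul_top, ha]
  | coe x =>
    induction y with
    | top => simp [ENNReal.mul_top, hb]
    | coe y =>
      lift a to NNReal using ha.le
      lift b to NNReal using hb.le
      have := NNReal.geom_mean_le_arith_mean2_weighted a b x y (by exact_mod_cast hab)
      rw [ENNReal.ofReal_coe_nnreal, ENNReal.ofReal_coe_nnreal,
        ← ENNReal.coe_rpow_of_nonneg _ ha.le, ← ENNReal.coe_rpow_of_nonneg _ hb.le]
      exact_mod_cast this

section PrekopaLeindler

variable {a b : ℝ} {f g h : ℝ → ℝ≥0∞}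

lemma lintegral_add_le_of_rpow_mul_rpow_le_of_iSup_eq_one (ha : 0 < a) (hb : 0 < b)
    (hab : a + b = 1) (hf : Measurable f) (hg : Measurable g) (hh : Measurable h)
    (hf₁ : ⨆ x, f x = 1) (hg₁ : ⨆ x, g x = 1)
    (hle : ∀ x y, f x ^ a * g y ^ b ≤ h (a * x + b * y)) :
    ENNReal.ofReal a * (∫⁻ x, f x) + ENNReal.ofReal b * (∫⁻ x, g x) ≤ ∫⁻ x, h x := by
  have hf_le : ∀ x, f x ≤ 1 := fun x => hf₁ ▸ le_iSup f x
  have hg_le : ∀ x, g x ≤ 1 := fun x => hg₁ ▸ le_iSup g x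
  refine le_trans ?_ (lintegral_mono fun x => min_le_left (h x) 1)
  rw [lintegral_eq_lintegral_measure_ofReal_lt _ hf fun x => (hf_le x).trans_lt (by simp) |>.ne,
    lintegral_eq_lintegral_measure_ofReal_lt _ hg fun x => (hg_le x).trans_lt (by simp) |>.ne,
    lintegral_eq_lintegral_measure_ofReal_lt _ (hh.min measurable_const) fun x => by simp,
    ← lintegral_const_mul' _ _ ENNReal.ofReal_ne_top,
    ← lintegral_const_mul' _ _ ENNReal.ofReal_ne_top]
  have measurable_level : ∀ u : ℝ → ℝ≥0∞,
      Measurable fun t : ℝ => volume {x | ENNReal.ofReal t < u x} := fun u =>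
    Antitone.measurable fun t t' htt' => measure_mono fun x (hx : _ < _) =>
      (ENNReal.ofReal_le_ofReal htt').trans_lt hx
  rw [← lintegral_add_left ((measurable_level f).const_mul _)]
  refine setLIntegral_mono (measurable_level _) fun t _ => ?_
  rcases lt_or_ge (ENNReal.ofReal t) 1 with ht₁ | ht₁
  · refine (ofReal_mul_volume_add_le_volume_smul_add_smul (measurableSet_lt measurable_const hf)
      (measurableSet_lt measurable_const hg) (lt_iSup_iff.1 (ht₁.trans_eq hf₁.symm))
      (lt_iSup_iff.1 (ht₁.trans_eq hg₁.symm)) ha hb).trans (measure_mono ?_)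
    rintro _ ⟨_, ⟨x, hx, rfl⟩, _, ⟨y, hy, rfl⟩, rfl⟩
    refine lt_min (lt_of_lt_of_le ?_ (hle x y)) ht₁
    calc ENNReal.ofReal t = ENNReal.ofReal t ^ a * ENNReal.ofReal t ^ b := by
          rw [← ENNReal.rpow_add_of_nonneg _ _ ha.le hb.le, hab, ENNReal.rpow_one]
      _ < f x ^ a * g y ^ b :=
          ENNReal.mul_lt_mul (ENNReal.rpow_lt_rpow hx ha) (ENNReal.rpow_lt_rpow hy hb)
  · simp [((hf_le _).trans ht₁).not_gt, ((hg_le _).trans ht₁).not_gt]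

lemma rpow_lintegral_mul_rpow_lintegral_le_of_bounded (ha : 0 < a) (hb : 0 < b)
    (hab : a + b = 1) (hf : Measurable f) (hg : Measurable g) (hh : Measurable h)
    (hf_top : ⨆ x, f x ≠ ∞) (hg_top : ⨆ x, g x ≠ ∞)
    (hle : ∀ x y, f x ^ a * g y ^ b ≤ h (a * x + b * y)) :
    (∫⁻ x, f x) ^ a * (∫⁻ x, g x) ^ b ≤ ∫⁻ x, h x := by
  set α := ⨆ x, f x
  set β := ⨆ x, g x
  rcases eq_or_ne α 0 with hα₀ | hα₀
  · simp [fun x => ENNReal.iSup_eq_zero.1 hα₀ x, ha]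
  rcases eq_or_ne β 0 with hβ₀ | hβ₀
  · simp [fun x => ENNReal.iSup_eq_zero.1 hβ₀ x, hb]
  set γ := α ^ a * β ^ b with hγ
  have hα_rpow : α ^ a ≠ ∞ := ENNReal.rpow_ne_top_of_nonneg ha.le hf_top
  have hγ₀ : γ ≠ 0 := mul_ne_zero (by simp [hα₀, hf_top]) (by simp [hβ₀, hg_top])
  have hγ_top : γ ≠ ∞ := ENNReal.mul_ne_top hα_rpow (ENNReal.rpow_ne_top_of_nonneg hb.le hg_top)
  have rpow_div_mul : ∀ x y : ℝ≥0∞, (x / α) ^ a * (y / β) ^ b = x ^ a * y ^ b / γ := by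
    intro x y
    rw [ENNReal.div_rpow_of_nonneg _ _ ha.le, ENNReal.div_rpow_of_nonneg _ _ hb.le, hγ,
      div_eq_mul_inv, div_eq_mul_inv, div_eq_mul_inv,
      ENNReal.mul_inv (.inl (by simp [hα₀, hf_top])) (.inl hα_rpow), mul_mul_mul_comm]
  have lintegral_div : ∀ (u : ℝ → ℝ≥0∞) {c : ℝ≥0∞}, c ≠ 0 → ∫⁻ x, u x / c = (∫⁻ x, u x) / c :=
    fun u c hc => by
      simp_rw [div_eq_mul_inv]
      exact lintegral_mul_const' _ _ (ENNReal.inv_ne_top.2 hc)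
  have normalized := lintegral_add_le_of_rpow_mul_rpow_le_of_iSup_eq_one ha hb hab
    (f := fun x => f x / α) (g := fun x => g x / β) (h := fun x => h x / γ)
    (hf.div_const _) (hg.div_const _) (hh.div_const _)
    (by rw [← ENNReal.iSup_div, ENNReal.div_self hα₀ hf_top])
    (by rw [← ENNReal.iSup_div, ENNReal.div_self hβ₀ hg_top])
    (fun x y => by rw [rpow_div_mul]; exact ENNReal.div_le_div_right (hle x y) γ)
  rw [lintegral_div _ hα₀, lintegral_div _ hβ₀, lintegral_div _ hγ₀] at normalized
  have h_div := (rpow_mul_rpow_le_ofReal_mul_add_ofReal_mul ha hb hab _ _).trans normalized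
  rwa [rpow_div_mul, ENNReal.div_le_iff hγ₀ hγ_top, ENNReal.div_mul_cancel hγ₀ hγ_top] at h_div

theorem prekopa_leindler (ha : 0 < a) (hb : 0 < b) (hab : a + b = 1) (hf : Measurable f)
    (hg : Measurable g) (hh : Measurable h)
    (hle : ∀ x y, f x ^ a * g y ^ b ≤ h (a * x + b * y)) :
    (∫⁻ x, f x) ^ a * (∫⁻ x, g x) ^ b ≤ ∫⁻ x, h x := by
  have truncated : ∀ m n : ℕ,
      (∫⁻ x, min (f x) m) ^ a * (∫⁻ x, min (g x) n) ^ b ≤ ∫⁻ x, h x := by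
    intro m n
    have iSup_min_ne_top : ∀ (u : ℝ → ℝ≥0∞) (k : ℕ), ⨆ x, min (u x) k ≠ ∞ := fun u k =>
      ne_top_of_le_ne_top (ENNReal.natCast_ne_top k) (iSup_le fun _ => min_le_right _ _)
    refine rpow_lintegral_mul_rpow_lintegral_le_of_bounded ha hb hab (hf.min measurable_const)
      (hg.min measurable_const) hh (iSup_min_ne_top f m) (iSup_min_ne_top g n)
      fun x y => le_trans ?_ (hle x y)
    gcongr <;> exact min_le_left _ _
  have monotone_truncation : ∀ u : ℝ → ℝ≥0∞, Monotone fun (n : ℕ) x => min (u x) n :=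
    fun u m n hmn x => min_le_min_left _ (by exact_mod_cast hmn)
  have rpow_lintegral_eq_iSup : ∀ {c : ℝ}, 0 < c → ∀ {u : ℝ → ℝ≥0∞}, Measurable u →
      (∫⁻ x, u x) ^ c = ⨆ n : ℕ, (∫⁻ x, min (u x) n) ^ c := by
    intro c hc u hu
    change ENNReal.orderIsoRpow c hc _ = ⨆ n : ℕ, ENNReal.orderIsoRpow c hc _
    rw [← OrderIso.map_iSup, ← lintegral_iSup (fun n => hu.min measurable_const)
      (monotone_truncation u)]
    simp_rw [← inf_iSup_eq, ENNReal.iSup_natCast, inf_top_eq]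
  rw [rpow_lintegral_eq_iSup ha hf, rpow_lintegral_eq_iSup hb hg]
  simp_rw [ENNReal.iSup_mul, ENNReal.mul_iSup]
  exact iSup₂_le truncated

end PrekopaLeindler

/-- The multiplicative Brunn–Minkowski inequality for the measure `μ` and the weights `a`, `b`,
restricted to open sets; as a predicate it can be propagated by induction on the dimension. -/
def BrunnMinkowski {E : Type*} [NormedAddCommGroup E] [NormedSpace ℝ E] [MeasurableSpace E]
    (μ : Measure E) (a b : ℝ) : Prop :=
  ∀ A B : Set E, IsOpen A → IsOpen B → μ A ^ a * μ B ^ b ≤ μ (a • A + b • B)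

namespace BrunnMinkowski

variable {a b : ℝ} {E F : Type*} [NormedAddCommGroup E] [NormedSpace ℝ E] [MeasurableSpace E]
  [NormedAddCommGroup F] [NormedSpace ℝ F] [MeasurableSpace F]

lemma of_subsingleton [Subsingleton E] (μ : Measure E) (ha : 0 < a) (hb : 0 < b)
    (hab : a + b = 1) : BrunnMinkowski μ a b := by
  intro A B _ _
  rcases A.eq_empty_or_nonempty with rfl | hA
  · simp [ha]
  rcases B.eq_empty_or_nonempty with rfl | hB
  · simp [hb]
  rw [Subsingleton.eq_univ_of_nonempty hA, Subsingleton.eq_univ_of_nonempty hB,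
    Subsingleton.eq_univ_of_nonempty (univ_nonempty.smul_set.add univ_nonempty.smul_set),
    ← ENNReal.rpow_add_of_nonneg _ _ ha.le hb.le, hab, ENNReal.rpow_one]

lemma prod_real [BorelSpace F] [SecondCountableTopology F] {ν : Measure F} [SFinite ν]
    (hν : BrunnMinkowski ν a b) (ha : 0 < a) (hb : 0 < b) (hab : a + b = 1) :
    BrunnMinkowski ((volume : Measure ℝ).prod ν) a b := by
  intro A B hA hB
  have hC : IsOpen (a • A + b • B) := (hA.smul₀ ha.ne').add_right
  rw [Measure.prod_apply hA.measurableSet, Measure.prod_apply hB.measurableSet,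
    Measure.prod_apply hC.measurableSet]
  refine prekopa_leindler ha hb hab (measurable_measure_prodMk_left hA.measurableSet)
    (measurable_measure_prodMk_left hB.measurableSet)
    (measurable_measure_prodMk_left hC.measurableSet) fun s t => ?_
  refine (hν _ _ (hA.preimage (by fun_prop)) (hB.preimage (by fun_prop))).trans (measure_mono ?_)
  rintro _ ⟨_, ⟨x, hx, rfl⟩, _, ⟨y, hy, rfl⟩, rfl⟩
  exact ⟨_, ⟨_, hx, rfl⟩, _, ⟨_, hy, rfl⟩, rfl⟩

lemma of_continuousLinearEquiv [BorelSpace E] [BorelSpace F] [FiniteDimensional ℝ F]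
    {μ : Measure E} [μ.IsAddHaarMeasure] {ν : Measure F} [ν.IsAddHaarMeasure] (e : E ≃L[ℝ] F)
    (hν : BrunnMinkowski ν a b) (ha : 0 < a) (hb : 0 < b) (hab : a + b = 1) :
    BrunnMinkowski μ a b := by
  intro A B hA hB
  obtain ⟨c, hc⟩ : ∃ c : ℝ≥0∞, ∀ s, μ s = c * ν (e '' s) := by
    refine ⟨Measure.addHaarScalarFactor (μ.map e) ν, fun s => ?_⟩
    have := Measure.isAddLeftInvariant_eq_smul (μ.map e) ν
    have map_apply := e.toHomeomorph.toMeasurableEquiv.map_apply (μ := μ) (e '' s)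
    change μ.map e (e '' s) = μ (e ⁻¹' (e '' s)) at map_apply
    rw [preimage_image_eq _ e.injective] at map_apply
    exact map_apply ▸ congrArg (fun m : Measure F => m (e '' s)) this
  have image_comb : e '' (a • A + b • B) = a • (e '' A) + b • (e '' B) := by
    rw [image_add, image_smul_set, image_smul_set]
  rw [hc, hc, hc, image_comb, ENNReal.mul_rpow_of_nonneg _ _ ha.le,
    ENNReal.mul_rpow_of_nonneg _ _ hb.le, mul_mul_mul_comm,
    ← ENNReal.rpow_add_of_nonneg _ _ ha.le hb.le, hab, ENNReal.rpow_one]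
  gcongr
  exact hν _ _ (e.isOpenMap A hA) (e.isOpenMap B hB)

lemma pi (ha : 0 < a) (hb : 0 < b) (hab : a + b = 1) (n : ℕ) :
    BrunnMinkowski (volume : Measure (Fin n → ℝ)) a b := by
  induction n with
  | zero => exact .of_subsingleton _ ha hb hab
  | succ n ih =>
    exact .of_continuousLinearEquiv (.ofFinrankEq (by simp [add_comm]))
      (ih.prod_real ha hb hab) ha hb hab

theorem addHaar [BorelSpace E] [FiniteDimensional ℝ E] (μ : Measure E) [μ.IsAddHaarMeasure]
    (ha : 0 < a) (hb : 0 < b) (hab : a + b = 1) : BrunnMinkowski μ a b :=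
  .of_continuousLinearEquiv (.ofFinrankEq (by simp)) (pi ha hb hab (Module.finrank ℝ E)) ha hb hab

end BrunnMinkowski

section Balls

variable {E : Type*} [NormedAddCommGroup E] [NormedSpace ℝ E] [FiniteDimensional ℝ E]
  [MeasurableSpace E] [BorelSpace E] (μ : Measure E) [μ.IsAddHaarMeasure]

theorem measure_ball_add_le_measure_add {A B : Set E} (hA : IsOpen A) (hB : IsOpen B) {a b : ℝ}
    (ha : 0 < a) (hb : 0 < b) (hμA : μ A = μ (ball 0 a)) (hμB : μ B = μ (ball 0 b)) :
    μ (ball 0 (a + b)) ≤ μ (A + B) := by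
  have hs : 0 < a + b := by positivity
  have measure_dilate : ∀ {S : Set E} {c : ℝ}, 0 < c → μ S = μ (ball 0 c) →
      μ (((a + b) / c) • S) = μ (ball 0 (a + b)) := by
    intro S c hc hS
    rw [Measure.addHaar_smul, hS, ← Measure.addHaar_smul, _root_.smul_ball (by positivity),
      smul_zero, Real.norm_of_nonneg (by positivity), div_mul_cancel₀ _ hc.ne']
  have h := BrunnMinkowski.addHaar μ (a := a / (a + b)) (b := b / (a + b)) (by positivity)
    (by positivity) (by field_simp) (((a + b) / a) • A) (((a + b) / b) • B)
    (hA.smul₀ (by positivity)) (hB.smul₀ (by positivity))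
  rwa [measure_dilate ha hμA, measure_dilate hb hμB, smul_smul, smul_smul,
    div_mul_div_cancel₀ hs.ne', div_mul_div_cancel₀ hs.ne', div_self ha.ne', div_self hb.ne',
    one_smul, one_smul, ← ENNReal.rpow_add_of_nonneg _ _ (by positivity) (by positivity),
    ← add_div, div_self hs.ne', ENNReal.rpow_one] at h

variable [Nontrivial E]

lemma exists_measure_ball_eq {V : ℝ≥0∞} (hV : V ≠ ∞) : ∃ r : ℝ, 0 ≤ r ∧ μ (ball 0 r) = V := by
  set w := μ (ball 0 1)
  have hw₀ : w ≠ 0 := (measure_ball_pos _ _ one_pos).ne'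
  have hw_top : w ≠ ∞ := measure_ball_lt_top.ne
  have hd : (Module.finrank ℝ E : ℝ) ≠ 0 := by exact_mod_cast Module.finrank_pos.ne'
  refine ⟨(V / w).toReal ^ (1 / (Module.finrank ℝ E : ℝ)), by positivity, ?_⟩
  rw [Measure.addHaar_ball _ _ (by positivity), ← Real.rpow_natCast,
    ← Real.rpow_mul (by positivity), one_div, inv_mul_cancel₀ hd, Real.rpow_one,
    ENNReal.ofReal_toReal (ENNReal.div_ne_top hV hw₀), ENNReal.div_mul_cancel hw₀ hw_top]

lemma measure_ball_lt_measure_ball_iff {r s : ℝ} (hr : 0 ≤ r) :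
    μ (ball 0 r) < μ (ball 0 s) ↔ r < s := by
  refine ⟨fun h => ?_, fun h => ?_⟩
  · by_contra! hsr
    exact (measure_mono (ball_subset_ball hsr)).not_gt h
  · rw [Measure.addHaar_ball _ _ hr, Measure.addHaar_ball _ _ (hr.trans h.le),
      ENNReal.mul_lt_mul_iff_left (measure_ball_pos _ _ one_pos).ne' measure_ball_lt_top.ne,
      ENNReal.ofReal_lt_ofReal_iff_of_nonneg (by positivity)]
    exact pow_lt_pow_left₀ h hr Module.finrank_pos.ne'

lemma measure_ball_add_lt_measure_thickening {A : Set E} (hA : IsOpen A) {r ε : ℝ} (hr : 0 ≤ r)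
    (hε : 0 < ε) (h : μ (ball 0 r) < μ A) : μ (ball 0 (r + ε)) < μ (thickening ε A) := by
  by_cases hA_top : μ A = ∞
  · refine measure_ball_lt_top.trans_le (hA_top.symm.trans_le (measure_mono ?_))
    exact self_subset_thickening hε A
  obtain ⟨a, -, ha⟩ := exists_measure_ball_eq μ hA_top
  rw [← ha, measure_ball_lt_measure_ball_iff μ hr] at h
  calc μ (ball 0 (r + ε)) < μ (ball 0 (a + ε)) :=
        (measure_ball_lt_measure_ball_iff μ (by positivity)).2 (by linarith)
    _ ≤ μ (A + ball 0 ε) :=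
        measure_ball_add_le_measure_add μ hA isOpen_ball (hr.trans_lt h) hε ha.symm rfl
    _ = μ (thickening ε A) := by rw [add_ball_zero]

end Balls

end BrunnMinkowski

section Contraction

open scoped ENNReal

lemma integral_rpow_mul_sub {p D : ℝ} (hp : 1 < p) (hD : 0 < D) :
    ∫ τ in 0..D, p * (p - 1) * τ ^ (p - 2) * (D - τ) = D ^ p := by
  have rpow_sub_one : ∀ x : ℝ, 0 < x → x ^ (p - 1) = x ^ (p - 2) * x := fun x hx => by
    rw [← Real.rpow_add_one hx.ne']; ring_nf
  have expand : EqOn (fun τ => p * (p - 1) * τ ^ (p - 2) * (D - τ))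
      (fun τ => p * (p - 1) * D * τ ^ (p - 2) - p * (p - 1) * τ ^ (p - 1)) (Ioo 0 D) :=
    fun τ hτ => by simp only [rpow_sub_one τ hτ.1]; ring
  rw [intervalIntegral.integral_congr_Ioo_of_le hD.le expand, intervalIntegral.integral_sub
      ((intervalIntegral.intervalIntegrable_rpow' (by linarith)).const_mul _)
      ((intervalIntegral.intervalIntegrable_rpow' (by linarith)).const_mul _),
    intervalIntegral.integral_const_mul, intervalIntegral.integral_const_mul,
    integral_rpow (Or.inl (by linarith)), integral_rpow (Or.inl (by linarith)),
    show p - 2 + 1 = p - 1 by ring, show p - 1 + 1 = p by ring,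
    Real.zero_rpow (by linarith), Real.zero_rpow (by linarith)]
  have hD_pow : D ^ p = D ^ (p - 1) * D := by rw [← Real.rpow_add_one hD.ne']; ring_nf
  have : p - 1 ≠ 0 := by linarith
  rw [hD_pow]
  field_simp
  ring

lemma lintegral_ofReal_rpow_mul_ofReal_sub {p : ℝ} (hp : 1 < p) (D : ℝ) :
    ∫⁻ τ in Ioi (0 : ℝ), .ofReal (p * (p - 1) * τ ^ (p - 2)) * .ofReal (D - τ) =
      .ofReal D ^ p := by
  have vanish : ∀ τ, D ≤ τ →
      ENNReal.ofReal (p * (p - 1) * τ ^ (p - 2)) * .ofReal (D - τ) = 0 := fun τ hτ => by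
    rw [ENNReal.ofReal_of_nonpos (sub_nonpos.2 hτ), mul_zero]
  rcases le_or_gt D 0 with hD | hD
  · rw [ENNReal.ofReal_of_nonpos hD, ENNReal.zero_rpow_of_pos (by linarith),
      setLIntegral_congr_fun measurableSet_Ioi fun τ hτ => vanish τ (hD.trans (le_of_lt hτ)),
      lintegral_zero]
  have nonneg : ∀ τ ∈ Ioc 0 D, 0 ≤ p * (p - 1) * τ ^ (p - 2) := fun τ hτ => by
    have := hτ.1
    have : 0 < p - 1 := by linarith
    positivity
  have integrable : IntervalIntegrable (fun τ => p * (p - 1) * τ ^ (p - 2) * (D - τ)) volume 0 D :=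
    ((intervalIntegral.intervalIntegrable_rpow' (by linarith)).const_mul _).mul_continuousOn
      (by fun_prop)
  rw [← Ioc_union_Ioi_eq_Ioi hD.le, lintegral_union measurableSet_Ioi (Ioc_disjoint_Ioi le_rfl),
    setLIntegral_congr_fun measurableSet_Ioi fun τ hτ => vanish τ (le_of_lt hτ), lintegral_zero,
    add_zero, setLIntegral_congr_fun measurableSet_Ioc fun τ hτ =>
      (ENNReal.ofReal_mul (nonneg τ hτ)).symm,
    ← ofReal_integral_eq_lintegral_ofReal integrable.1, ← intervalIntegral.integral_of_le hD.le,
    integral_rpow_mul_sub hp hD, ENNReal.ofReal_rpow_of_pos hD]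
  filter_upwards [ae_restrict_mem measurableSet_Ioc] with τ hτ
  exact mul_nonneg (nonneg τ hτ) (sub_nonneg.2 hτ.2)

variable {X : Type*} [MeasurableSpace X] (μ : Measure X) [SFinite μ] {a b a' b' : X → ℝ}

lemma lintegral_ofReal_sub_sub (ha : Measurable a) (hb : Measurable b) (ha₀ : ∀ x, 0 ≤ a x)
    (τ : ℝ) : ∫⁻ x, .ofReal (b x - a x - τ) ∂μ =
      ∫⁻ s in Ioi (0 : ℝ), μ {x | a x ≤ s ∧ s + τ < b x} := by
  let S : Set (X × ℝ) := {z | a z.1 ≤ z.2 ∧ z.2 + τ < b z.1}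
  have hS : MeasurableSet S :=
    (measurableSet_le (ha.comp measurable_fst) measurable_snd).inter
      (measurableSet_lt (measurable_snd.add_const _) (hb.comp measurable_fst))
  rw [restrict_Ioi_eq_restrict_Ici]
  calc ∫⁻ x, .ofReal (b x - a x - τ) ∂μ
      = ∫⁻ x, volume.restrict (Ici (0 : ℝ)) (Prod.mk x ⁻¹' S) ∂μ := by
        refine lintegral_congr fun x => ?_
        have slice : Prod.mk x ⁻¹' S = Ico (a x) (b x - τ) :=
          Set.ext fun s => and_congr_right fun _ => lt_sub_iff_add_lt.symm
        rw [slice, Measure.restrict_eq_self _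
          (Ico_subset_Ici_self.trans (Ici_subset_Ici.2 (ha₀ x))), Real.volume_Ico, sub_right_comm]
    _ = μ.prod (volume.restrict (Ici 0)) S := (Measure.prod_apply hS).symm
    _ = ∫⁻ s in Ici (0 : ℝ), μ {x | a x ≤ s ∧ s + τ < b x} := Measure.prod_apply_symm hS

lemma lintegral_ofReal_sub_rpow (ha : Measurable a) (hb : Measurable b) (ha₀ : ∀ x, 0 ≤ a x)
    {p : ℝ} (hp : 1 < p) : ∫⁻ x, .ofReal (b x - a x) ^ p ∂μ =
      ∫⁻ τ in Ioi (0 : ℝ), .ofReal (p * (p - 1) * τ ^ (p - 2)) *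
        ∫⁻ s in Ioi (0 : ℝ), μ {x | a x ≤ s ∧ s + τ < b x} := by
  simp_rw [← lintegral_ofReal_sub_sub μ ha hb ha₀, ← lintegral_ofReal_rpow_mul_ofReal_sub hp]
  rw [lintegral_lintegral_swap]
  · exact lintegral_congr fun τ => lintegral_const_mul' _ _ ENNReal.ofReal_ne_top
  · refine Measurable.aemeasurable ?_
    fun_prop

theorem lintegral_ofReal_sub_rpow_le_of_equimeasurable (ha : Measurable a) (hb : Measurable b)
    (ha₀ : ∀ x, 0 ≤ a x) (ha' : Measurable a') (hb' : Measurable b') (ha₀' : ∀ x, 0 ≤ a' x)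
    (haa' : ∀ t, 0 ≤ t → μ {x | t < a' x} = μ {x | t < a x})
    (hbb' : ∀ t, 0 ≤ t → μ {x | t < b' x} = μ {x | t < b x})
    (ha_fin : ∀ t, 0 ≤ t → μ {x | t < a x} ≠ ∞)
    (nested : ∀ s t, {x | s < a' x} ⊆ {x | t < b' x} ∨ {x | t < b' x} ⊆ {x | s < a' x})
    {p : ℝ} (hp : 1 < p) :
    ∫⁻ x, .ofReal (b' x - a' x) ^ p ∂μ ≤ ∫⁻ x, .ofReal (b x - a x) ^ p ∂μ := by
  rw [lintegral_ofReal_sub_rpow μ ha hb ha₀ hp, lintegral_ofReal_sub_rpow μ ha' hb' ha₀' hp]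
  refine setLIntegral_mono' measurableSet_Ioi fun τ (hτ : 0 < τ) => mul_le_mul_right
    (setLIntegral_mono' measurableSet_Ioi fun s (hs : 0 < s) => ?_) _
  have level_diff : ∀ f g : X → ℝ,
      {x | f x ≤ s ∧ s + τ < g x} = {x | s + τ < g x} \ {x | s < f x} := fun f g =>
    Set.ext fun x => by simp [and_comm]
  rw [level_diff, level_diff]
  refine le_trans ?_ (le_measure_sdiff (μ := μ) (s₁ := {x | s + τ < b x}) (s₂ := {x | s < a x}))
  rcases nested s (s + τ) with h | h
  · rw [measure_sdiff h (measurableSet_lt measurable_const ha').nullMeasurableSet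
      (haa' s hs.le ▸ ha_fin s hs.le), haa' s hs.le, hbb' _ (by positivity)]
  · simp [sdiff_eq_empty.2 h]

end Contraction

section Rearrangement

open scoped ENNReal Pointwise

variable {E : Type*} [NormedAddCommGroup E] [MeasurableSpace E]

/-- The radial profile of the symmetric decreasing rearrangement: the rearrangement of `u` is
`x ↦ decreasingProfile μ u ‖x‖`. For `r ≤ 0` it is the constant `max 0 (ess sup u)`. -/
noncomputable def decreasingProfile (μ : Measure E) (u : E → ℝ) (r : ℝ) : ℝ :=
  sInf {t | 0 ≤ t ∧ μ {x | t < u x} ≤ μ (ball 0 r)}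

namespace decreasingProfile

variable {μ : Measure E} {u U : E → ℝ}

lemma nonneg (r : ℝ) : 0 ≤ decreasingProfile μ u r := Real.sInf_nonneg fun _ h => h.1

lemma lt_iff (hu : BddAbove (range u)) {t : ℝ} (ht : 0 ≤ t) (r : ℝ) :
    t < decreasingProfile μ u r ↔ μ (ball 0 r) < μ {x | t < u x} := by
  refine ⟨fun h => ?_, fun h => ?_⟩
  · by_contra! hle
    exact notMem_of_lt_csInf h ⟨0, fun _ h => h.1⟩ ⟨ht, hle⟩
  obtain ⟨M, hM⟩ := hu
  obtain ⟨τ, hτ_anti, hτ_gt, hτ⟩ := exists_seq_strictAnti_tendsto t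
  have level_eq : {x | t < u x} = ⋃ n, {x | τ n < u x} := by
    ext x
    simp only [mem_ofPred_eq, mem_iUnion]
    exact ⟨fun hx => (hτ.eventually_lt_const hx).exists, fun ⟨n, hn⟩ => (hτ_gt n).trans hn⟩
  have level_mono : Monotone fun n => {x | τ n < u x} := fun m n hmn x hx =>
    (hτ_anti.antitone hmn).trans_lt hx
  rw [level_eq, level_mono.measure_iUnion, lt_iSup_iff] at h
  obtain ⟨n, hn⟩ := h
  refine (hτ_gt n).trans_le (le_csInf ⟨max M 0, le_max_right _ _, ?_⟩ fun s hs => ?_)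
  · have : {x | max M 0 < u x} = ∅ := eq_empty_of_forall_notMem fun x hx =>
      ((le_max_left M 0).trans_lt hx).not_ge (hM ⟨x, rfl⟩)
    rw [this, measure_empty]
    exact zero_le
  · by_contra! hsτ
    exact (hn.trans_le (measure_mono fun x hx => hsτ.trans hx)).not_ge hs.2

lemma antitone (hu : BddAbove (range u)) : Antitone (decreasingProfile μ u) := fun r s hrs => by
  by_contra! h
  rw [lt_iff hu (nonneg r)] at h
  exact lt_irrefl _ <|
    (lt_iff hu (nonneg r) r).2 ((measure_mono (ball_subset_ball hrs)).trans_lt h)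

lemma eq_zero_of_measure_le (hu : BddAbove (range u)) {r : ℝ}
    (h : μ {x | 0 < u x} ≤ μ (ball 0 r)) : decreasingProfile μ u r = 0 :=
  (not_lt.1 fun h' => ((lt_iff hu le_rfl r).1 h').not_ge h).antisymm (nonneg r)

variable [NormedSpace ℝ E] [FiniteDimensional ℝ E] [BorelSpace E] [Nontrivial E]
  [μ.IsAddHaarMeasure]

lemma measure_lt_norm (hu : BddAbove (range u)) {t : ℝ} (ht : 0 ≤ t)
    (hfin : μ {x | t < u x} ≠ ∞) :
    μ {x | t < decreasingProfile μ u ‖x‖} = μ {x | t < u x} := by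
  obtain ⟨a, -, ha⟩ := exists_measure_ball_eq μ hfin
  rw [← ha]
  congr 1
  ext x
  rw [mem_ofPred_eq, lt_iff hu ht, ← ha,
    measure_ball_lt_measure_ball_iff μ (norm_nonneg x), mem_ball_zero_iff]

lemma le_add_of_forall_dist_lt (hu : BddAbove (range u)) (hU : BddAbove (range U))
    (hu_cont : Continuous u) {ε δ : ℝ} (hε : 0 < ε) (hδ : 0 ≤ δ)
    (hle : ∀ x y, dist x y < ε → u y ≤ U x + δ) (r : ℝ) :
    decreasingProfile μ u r ≤ decreasingProfile μ U (r + ε) + δ := by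
  wlog hr : 0 ≤ r generalizing r
  · calc decreasingProfile μ u r = decreasingProfile μ u 0 := by
          rw [decreasingProfile, decreasingProfile, ball_eq_empty.2 (not_le.1 hr).le, ball_zero]
      _ ≤ decreasingProfile μ U (0 + ε) + δ := this 0 le_rfl
      _ ≤ decreasingProfile μ U (r + ε) + δ := by
          gcongr; exact antitone hU (by linarith)
  by_contra! h
  set t := decreasingProfile μ U (r + ε)
  have ht : 0 ≤ t := nonneg _
  rw [lt_iff hu (by positivity)] at h
  refine lt_irrefl t ((lt_iff hU ht _).2 ?_)
  refine (measure_ball_add_lt_measure_thickening μ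
    (isOpen_lt continuous_const hu_cont) hr hε h).trans_le (measure_mono fun x hx => ?_)
  obtain ⟨y, hy : t + δ < u y, hxy⟩ := mem_thickening_iff.1 hx
  exact lt_of_add_lt_add_right (hy.trans_le (hle x y hxy))

lemma lipschitzWith (hu : BddAbove (range u)) {K : NNReal} (hK : LipschitzWith K u) :
    LipschitzWith K (decreasingProfile μ u) := by
  refine LipschitzWith.of_le_add_mul K fun r s => ?_
  rcases lt_or_ge r s with hrs | hsr
  · rw [Real.dist_eq, abs_sub_comm, abs_of_pos (sub_pos.2 hrs)]
    have h := le_add_of_forall_dist_lt (μ := μ) hu hu hK.continuous (sub_pos.2 hrs)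
      (mul_nonneg K.2 (sub_pos.2 hrs).le) (fun x y hxy => ?_) r
    · rwa [add_sub_cancel] at h
    · refine (hK.le_add_mul y x).trans ?_
      rw [dist_comm]
      exact add_le_add_right (mul_le_mul_of_nonneg_left hxy.le K.2) _
  · exact (antitone hu hsr).trans (le_add_of_nonneg_right (by positivity))

lemma lintegral_sub_rpow_le (hu : BddAbove (range u)) (hu_cont : Continuous u)
    (hu₀ : ∀ x, 0 ≤ u x) (hu_fin : μ {x | 0 < u x} ≠ ∞)
    (hU : BddAbove (range U)) (hU_meas : Measurable U) (hU_fin : μ {x | 0 < U x} ≠ ∞)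
    {ε p : ℝ} (hε : 0 < ε) (hp : 1 < p) (hle : ∀ x y, dist x y < ε → u y ≤ U x) :
    ∫⁻ x, .ofReal (decreasingProfile μ u (‖x‖ - ε) - decreasingProfile μ u ‖x‖) ^ p ∂μ ≤
      ∫⁻ x, .ofReal (U x - u x) ^ p ∂μ := by
  have level_ne_top : ∀ {w : E → ℝ}, μ {x | 0 < w x} ≠ ∞ → ∀ t, 0 ≤ t → μ {x | t < w x} ≠ ∞ :=
    fun hw t ht => measure_ne_top_of_subset (fun x => ht.trans_lt) hw
  have radial_nested : ∀ s t, {x : E | s < decreasingProfile μ u ‖x‖} ⊆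
      {x | t < decreasingProfile μ U ‖x‖} ∨ {x : E | t < decreasingProfile μ U ‖x‖} ⊆
      {x | s < decreasingProfile μ u ‖x‖} := fun s t => by
    refine or_iff_not_imp_left.2 fun h y hy => ?_
    obtain ⟨x, hxs, hxt⟩ := not_subset.1 h
    have hyx : ‖y‖ ≤ ‖x‖ := le_of_not_gt fun hxy => hxt (hy.trans_le (antitone hU hxy.le))
    exact lt_of_lt_of_le hxs (antitone hu hyx)
  calc _ ≤ ∫⁻ x, .ofReal (decreasingProfile μ U ‖x‖ - decreasingProfile μ u ‖x‖) ^ p ∂μ := by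
        gcongr with x
        simpa using le_add_of_forall_dist_lt (μ := μ) (δ := 0) hu hU hu_cont hε le_rfl
          (by simpa using hle) (‖x‖ - ε)
    _ ≤ _ := lintegral_ofReal_sub_rpow_le_of_equimeasurable μ hu_cont.measurable hU_meas hu₀
        ((antitone hu).measurable.comp measurable_norm)
        ((antitone hU).measurable.comp measurable_norm) (fun _ => nonneg _)
        (fun t ht => measure_lt_norm hu ht (level_ne_top hu_fin t ht))
        (fun t ht => measure_lt_norm hU ht (level_ne_top hU_fin t ht))
        (level_ne_top hu_fin) radial_nested hp

end decreasingProfile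

end Rearrangement

section PolyaSzego

open scoped ENNReal Topology
open Filter

section CompactSupport

variable {X : Type*} [TopologicalSpace X] {v : X → ℝ}

lemma bddAbove_range_abs (hv : Continuous v) (hv_supp : HasCompactSupport v) :
    BddAbove (range fun x => |v x|) := by
  obtain ⟨M, hM⟩ := hv_supp.exists_bound_of_continuous hv
  exact ⟨M, by rintro _ ⟨x, rfl⟩; exact hM x⟩

lemma measure_pos_abs_ne_top [MeasurableSpace X] {μ : Measure X} [IsFiniteMeasureOnCompacts μ]
    (hv_supp : HasCompactSupport v) : μ {x | 0 < |v x|} ≠ ∞ :=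
  measure_ne_top_of_subset (fun _ hx => subset_tsupport v (abs_pos.1 hx))
    hv_supp.isCompact.measure_lt_top.ne

end CompactSupport

variable {E : Type*} [NormedAddCommGroup E] [NormedSpace ℝ E] {v : E → ℝ}

lemma exists_forall_dist_lt_abs_le_abs_add (hv : ContDiff ℝ 1 v) (hv_supp : HasCompactSupport v)
    {δ : ℝ} (hδ : 0 < δ) : ∃ ε > 0, ∀ x y, dist x y < ε → |v y| ≤ |v x| +
      dist x y * (cthickening 1 (tsupport v)).indicator (fun z => ‖fderiv ℝ v z‖ + δ) x := by
  have fderiv_cont : Continuous (fderiv ℝ v) := hv.continuous_fderiv one_ne_zero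
  obtain ⟨ε, hε, hfderiv⟩ := Metric.uniformContinuous_iff.1
    ((hv_supp.fderiv ℝ).uniformContinuous_of_continuous fderiv_cont) δ hδ
  refine ⟨min ε 1, by positivity, fun x y hxy => ?_⟩
  obtain ⟨hxyε, hxy1⟩ := lt_min_iff.1 hxy
  by_cases hx : x ∈ cthickening 1 (tsupport v)
  · rw [indicator_of_mem hx]
    have fderiv_le : ∀ z ∈ ball x ε, ‖fderiv ℝ v z‖ ≤ ‖fderiv ℝ v x‖ + δ := fun z hz => by
      have := (norm_sub_norm_le _ _).trans_lt ((dist_eq_norm _ _).symm.trans_lt (hfderiv hz))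
      linarith
    have mean_value := (convex_ball x ε).norm_image_sub_le_of_norm_fderiv_le
      (fun z _ => hv.differentiable one_ne_zero z) fderiv_le (mem_ball_self hε)
      (mem_ball'.2 hxyε)
    rw [Real.norm_eq_abs, ← dist_eq_norm, dist_comm y x, mul_comm] at mean_value
    linarith [abs_sub_abs_le_abs_sub (v y) (v x)]
  · have hy : y ∉ tsupport v := fun hy => hx (mem_cthickening_of_dist_le x y 1 _ hy hxy1.le)
    rw [image_eq_zero_of_notMem_tsupport hy, indicator_of_notMem hx]
    simp

variable [FiniteDimensional ℝ E] [MeasurableSpace E] [BorelSpace E] (μ : Measure E)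
  [μ.IsAddHaarMeasure]

lemma ae_norm_of_ae [Nontrivial E] {P : ℝ → Prop} (h : ∀ᵐ r, P r) : ∀ᵐ x ∂μ, P ‖x‖ := by
  let S := toMeasurable volume {r | ¬P r}
  have notMem_S : ∀ᵐ r, r ∉ S :=
    measure_eq_zero_iff_ae_notMem.1 ((measure_toMeasurable _).trans h)
  have weighted_zero : (fun r : ℝ => r ^ (Module.finrank ℝ E - 1) • S.indicator (1 : ℝ → ℝ) r)
      =ᵐ[volume.restrict (Ioi 0)] 0 := by
    filter_upwards [ae_restrict_of_ae notMem_S] with r hr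
    simp [indicator_of_notMem hr]
  have integrable : Integrable (fun x : E => S.indicator (1 : ℝ → ℝ) ‖x‖) μ :=
    (integrable_fun_norm_addHaar μ).2 ((integrable_zero _ _ _).congr weighted_zero.symm)
  have integral_zero : ∫ x, S.indicator (1 : ℝ → ℝ) ‖x‖ ∂μ = 0 := by
    rw [integral_fun_norm_addHaar, integral_congr_ae weighted_zero]
    simp
  filter_upwards [(integral_eq_zero_iff_of_nonneg
    (fun x => indicator_nonneg (fun _ _ => zero_le_one) _) integrable).1 integral_zero] with x hx
  by_contra hP
  have hxS : ‖x‖ ∈ S := subset_toMeasurable _ _ hP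
  simp [hxS] at hx

lemma tendsto_sub_div_one_div_abs_deriv {f : ℝ → ℝ} (hf : Antitone f) {r : ℝ}
    (hr : DifferentiableAt ℝ f r) :
    Tendsto (fun n : ℕ => (f (r - 1 / ((n : ℝ) + 1)) - f r) / (1 / ((n : ℝ) + 1))) atTop
      (𝓝 |deriv f r|) := by
  have steps : Tendsto (fun n : ℕ => -(1 / ((n : ℝ) + 1))) atTop (𝓝[≠] 0) :=
    tendsto_nhdsWithin_iff.2 ⟨by simpa using (tendsto_one_div_add_atTop_nhds_zero_nat (𝕜 := ℝ)).neg,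
      .of_forall fun n => (neg_lt_zero.2 (by positivity)).ne⟩
  rw [abs_of_nonpos hf.deriv_nonpos]
  refine (hr.hasDerivAt.tendsto_slope_zero.comp steps).neg.congr fun n => ?_
  simp only [Function.comp, smul_eq_mul, inv_neg, neg_mul, neg_neg, ← sub_eq_add_neg,
    div_eq_inv_mul]

namespace decreasingProfile

variable {μ} [Nontrivial E] {p : ℝ} {u G : E → ℝ}

lemma lintegral_sub_div_rpow_le (hu : BddAbove (range u)) (hu_cont : Continuous u)
    (hu₀ : ∀ x, 0 ≤ u x) (hu_fin : μ {x | 0 < u x} ≠ ∞) (hG : BddAbove (range G))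
    (hG_meas : Measurable G) (hG_fin : μ {x | 0 < G x} ≠ ∞) {ε : ℝ} (hε : 0 < ε) (hp : 1 < p)
    (hle : ∀ x y, dist x y < ε → u y ≤ u x + ε * G x) :
    ∫⁻ x, .ofReal ((decreasingProfile μ u (‖x‖ - ε) - decreasingProfile μ u ‖x‖) / ε) ^ p ∂μ ≤
      ∫⁻ x, .ofReal (G x) ^ p ∂μ := by
  have hp₀ : 0 ≤ p := by linarith
  have ofReal_div : ∀ D : ℝ, ENNReal.ofReal (D / ε) ^ p = .ofReal ε⁻¹ ^ p * .ofReal D ^ p :=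
    fun D => by
      rw [← ENNReal.mul_rpow_of_nonneg _ _ hp₀, ← ENNReal.ofReal_mul (by positivity),
        div_eq_inv_mul]
  have const_ne_top : ENNReal.ofReal ε⁻¹ ^ p ≠ ∞ :=
    ENNReal.rpow_ne_top_of_nonneg hp₀ ENNReal.ofReal_ne_top
  obtain ⟨M, hM⟩ := hu
  obtain ⟨C, hC⟩ := hG
  have hU : BddAbove (range fun x => u x + ε * G x) := ⟨M + ε * C, by
    rintro _ ⟨x, rfl⟩
    have := hM ⟨x, rfl⟩
    have := hC ⟨x, rfl⟩
    dsimp only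
    gcongr⟩
  have hU_fin : μ {x | 0 < u x + ε * G x} ≠ ∞ := by
    refine measure_ne_top_of_subset (fun x hx => ?_) (measure_union_ne_top hu_fin hG_fin)
    by_contra! h
    simp only [mem_union, mem_ofPred_eq, not_or, not_lt] at h hx
    nlinarith
  calc _ = .ofReal ε⁻¹ ^ p *
          ∫⁻ x, .ofReal (decreasingProfile μ u (‖x‖ - ε) - decreasingProfile μ u ‖x‖) ^ p ∂μ := by
        simp_rw [ofReal_div]
        exact lintegral_const_mul' _ _ const_ne_top
    _ ≤ .ofReal ε⁻¹ ^ p * ∫⁻ x, .ofReal (u x + ε * G x - u x) ^ p ∂μ := by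
        exact mul_le_mul_right (lintegral_sub_rpow_le ⟨M, hM⟩ hu_cont hu₀ hu_fin hU
          (hu_cont.measurable.add (hG_meas.const_mul ε)) hU_fin hε hp hle) _
    _ = ∫⁻ x, .ofReal (G x) ^ p ∂μ := by
        rw [← lintegral_const_mul' _ _ const_ne_top]
        exact lintegral_congr fun x => by rw [← ofReal_div, add_sub_cancel_left,
          mul_div_cancel_left₀ _ hε.ne']

lemma lintegral_abs_deriv_rpow_le (hu : BddAbove (range u)) {K : NNReal} (hK : LipschitzWith K u)
    (hu₀ : ∀ x, 0 ≤ u x) (hu_fin : μ {x | 0 < u x} ≠ ∞) (hG : BddAbove (range G))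
    (hG_meas : Measurable G) (hG_fin : μ {x | 0 < G x} ≠ ∞) (hG₀ : ∀ x, 0 ≤ G x) {ε₀ : ℝ}
    (hε₀ : 0 < ε₀) (hp : 1 < p) (hle : ∀ x y, dist x y < ε₀ → u y ≤ u x + dist x y * G x) :
    ∫⁻ x, .ofReal |deriv (decreasingProfile μ u) ‖x‖| ^ p ∂μ ≤ ∫⁻ x, .ofReal (G x) ^ p ∂μ := by
  set f := decreasingProfile μ u
  have f_anti : Antitone f := antitone hu
  have f_meas : Measurable f := f_anti.measurable
  have quotient_lim : ∀ᵐ x ∂μ, liminf (fun n : ℕ =>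
      ENNReal.ofReal ((f (‖x‖ - 1 / ((n : ℝ) + 1)) - f ‖x‖) / (1 / ((n : ℝ) + 1))) ^ p) atTop =
      .ofReal |deriv f ‖x‖| ^ p := by
    filter_upwards [ae_norm_of_ae μ (lipschitzWith (μ := μ) hu hK).ae_differentiableAt] with x hx
    exact ((ENNReal.tendsto_ofReal
      (tendsto_sub_div_one_div_abs_deriv f_anti hx)).ennrpow_const p).liminf_eq
  rw [← lintegral_congr_ae quotient_lim]
  refine (lintegral_liminf_le fun n => by fun_prop).trans
    (liminf_le_of_frequently_le' (Eventually.frequently ?_))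
  filter_upwards [tendsto_one_div_add_atTop_nhds_zero_nat.eventually_lt_const hε₀] with n hn
  refine lintegral_sub_div_rpow_le hu hK.continuous hu₀ hu_fin hG hG_meas hG_fin (by positivity)
    hp fun x y hxy => (hle x y (hxy.trans hn)).trans ?_
  gcongr
  exact hG₀ x

end decreasingProfile

variable {μ} {p : ℝ}

lemma tendsto_lintegral_indicator_norm_fderiv_add (hv : ContDiff ℝ 1 v)
    (hv_supp : HasCompactSupport v) (hp : 0 < p) :
    Tendsto (fun n : ℕ => ∫⁻ x, .ofReal ((cthickening 1 (tsupport v)).indicator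
      (fun z => ‖fderiv ℝ v z‖ + 1 / ((n : ℝ) + 1)) x) ^ p ∂μ) atTop
      (𝓝 (∫⁻ x, .ofReal ‖fderiv ℝ v x‖ ^ p ∂μ)) := by
  set K := cthickening 1 (tsupport v)
  have hK : IsCompact K := hv_supp.isCompact.cthickening
  have fderiv_cont : Continuous (fderiv ℝ v) := hv.continuous_fderiv one_ne_zero
  obtain ⟨C, hC⟩ := (hv_supp.fderiv ℝ).exists_bound_of_continuous fderiv_cont
  refine tendsto_lintegral_of_dominated_convergence (K.indicator fun _ => .ofReal (C + 1) ^ p)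
    (fun n => ((fderiv_cont.norm.measurable.add_const _).indicator
      hK.measurableSet).ennreal_ofReal.pow_const _) (fun n => .of_forall fun x => ?_) ?_
    (.of_forall fun x => (ENNReal.tendsto_ofReal ?_).ennrpow_const p)
  · by_cases hx : x ∈ K
    · simp only [indicator_of_mem hx]
      gcongr
      · exact hC x
      · exact div_le_one_of_le₀ (by linarith [n.cast_nonneg (α := ℝ)]) (by positivity)
    · simp [hx, hp]
  · rw [lintegral_indicator_const hK.measurableSet]
    exact ENNReal.mul_ne_top (ENNReal.rpow_ne_top_of_nonneg hp.le ENNReal.ofReal_ne_top)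
      hK.measure_lt_top.ne
  · by_cases hx : x ∈ K
    · simpa [hx] using tendsto_one_div_add_atTop_nhds_zero_nat.const_add ‖fderiv ℝ v x‖
    · have : x ∉ tsupport (fderiv ℝ v) := fun h =>
        hx (self_subset_cthickening _ (tsupport_fderiv_subset ℝ h))
      simp [hx, image_eq_zero_of_notMem_tsupport this]

theorem lintegral_abs_deriv_decreasingProfile_rpow_le [Nontrivial E] (hv : ContDiff ℝ 1 v)
    (hv_supp : HasCompactSupport v) (hp : 1 < p) :
    ∫⁻ x, .ofReal |deriv (decreasingProfile μ fun y => |v y|) ‖x‖| ^ p ∂μ ≤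
      ∫⁻ x, .ofReal ‖fderiv ℝ v x‖ ^ p ∂μ := by
  obtain ⟨L, hL⟩ := hv.lipschitzWith_of_hasCompactSupport hv_supp one_ne_zero
  have fderiv_cont : Continuous (fderiv ℝ v) := hv.continuous_fderiv one_ne_zero
  obtain ⟨C, hC⟩ := (hv_supp.fderiv ℝ).exists_bound_of_continuous fderiv_cont
  have hK : IsCompact (cthickening 1 (tsupport v)) := hv_supp.isCompact.cthickening
  refine ge_of_tendsto' (tendsto_lintegral_indicator_norm_fderiv_add hv hv_supp
    (zero_lt_one.trans hp)) fun n => ?_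
  set δ := 1 / ((n : ℝ) + 1)
  have hδ : 0 < δ := by positivity
  obtain ⟨ε, hε, hle⟩ := exists_forall_dist_lt_abs_le_abs_add hv hv_supp hδ
  have bound : ∀ x, 0 ≤ ‖fderiv ℝ v x‖ + δ ∧ ‖fderiv ℝ v x‖ + δ ≤ C + δ := fun x =>
    ⟨by positivity, add_le_add_left (hC x) δ⟩
  refine decreasingProfile.lintegral_abs_deriv_rpow_le (bddAbove_range_abs hv.continuous hv_supp)
    (lipschitzWith_one_norm.comp hL) (fun x => abs_nonneg _) (measure_pos_abs_ne_top hv_supp)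
    ⟨C + δ, ?_⟩ ((fderiv_cont.norm.measurable.add_const _).indicator hK.measurableSet)
    (measure_ne_top_of_subset (fun x hx => ?_) hK.measure_lt_top.ne)
    (fun x => indicator_nonneg (fun y _ => (bound y).1) x) hε hp hle
  · rintro _ ⟨x, rfl⟩
    exact indicator_le' (fun y _ => (bound y).2) (fun y _ => (bound y).1.trans (bound y).2) x
  · exact mem_of_indicator_ne_zero (mem_ofPred_eq.mp hx).ne'

theorem lintegral_decreasingProfile_rpow [Nontrivial E] (hv : Continuous v)
    (hv_supp : HasCompactSupport v) (hp : 0 < p) :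
    ∫⁻ x, .ofReal (decreasingProfile μ (fun y => |v y|) ‖x‖ ^ p) ∂μ =
      ∫⁻ x, .ofReal (|v x| ^ p) ∂μ := by
  have hv_bdd := bddAbove_range_abs hv hv_supp
  rw [lintegral_rpow_eq_lintegral_meas_lt_mul _ (.of_forall fun x => decreasingProfile.nonneg _)
      ((decreasingProfile.antitone hv_bdd).measurable.comp measurable_norm).aemeasurable hp,
    lintegral_rpow_eq_lintegral_meas_lt_mul _ (.of_forall fun x => abs_nonneg _)
      hv.abs.measurable.aemeasurable hp]
  congr 1
  refine setLIntegral_congr_fun measurableSet_Ioi fun t (ht : 0 < t) => ?_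
  rw [decreasingProfile.measure_lt_norm hv_bdd ht.le (measure_ne_top_of_subset
    (fun x => ht.le.trans_lt) (measure_pos_abs_ne_top hv_supp))]

end PolyaSzego

section RadialProfiles

/-- A radial competitor for the Dirichlet problem on a ball of radius `R`, as a function of the
distance to the centre. It is defined on the whole line, where it is Lipschitz and decreasing, so
that no regularity at `0` has to be discussed separately. -/
structure IsRadialProfile (R : ℝ) (f : ℝ → ℝ) : Prop where
  exists_lipschitzWith : ∃ K, LipschitzWith K f
  antitone : Antitone f
  eq_zero_of_le : ∀ ⦃r⦄, R ≤ r → f r = 0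

/-- The Dirichlet integral `∫ |∇v|^p` of the radial function `v x = f ‖x‖` on `ℝ^N`, divided by the
area of the unit sphere. -/
noncomputable def radialEnergy (N : ℕ) (p : ℝ) (f : ℝ → ℝ) : ℝ :=
  ∫ r in Ioi (0 : ℝ), r ^ (N - 1) * |deriv f r| ^ p

/-- The integral `∫ v^q` of the nonnegative radial function `v x = f ‖x‖` on `ℝ^N`, divided by the
area of the unit sphere. -/
noncomputable def radialMass (N : ℕ) (q : ℝ) (f : ℝ → ℝ) : ℝ :=
  ∫ r in Ioi (0 : ℝ), r ^ (N - 1) * f r ^ q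

/-- The eigenvalue `λ_{p,q}` of the ball of radius `R`, computed on radial profiles and without the
factor `sphereArea N ^ (1 - p / q)`. -/
noncomputable def radialEigenvalue (N : ℕ) (p q R : ℝ) : ℝ :=
  sInf {Λ | ∃ f, IsRadialProfile R f ∧ 0 < radialMass N q f ∧
    Λ = radialEnergy N p f / radialMass N q f ^ (p / q)}

/-- The area of the unit sphere of `ℝ^N`. -/
noncomputable def sphereArea (N : ℕ) : ℝ :=
  (volume : Measure (EuclideanSpace ℝ (Fin N))).toSphere.real univ

variable {N : ℕ} {p q R : ℝ} {f : ℝ → ℝ}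

lemma integrableOn_pow_mul_of_abs_le (n : ℕ) {g : ℝ → ℝ} (hg : Measurable g) {C : ℝ}
    (hC : ∀ r ∈ Ioc 0 R, |g r| ≤ C) (hg₀ : ∀ r, R < r → g r = 0) :
    IntegrableOn (fun r => r ^ n * g r) (Ioi 0) := by
  have near : IntegrableOn (fun r => r ^ n * g r) (Ioc 0 R) := by
    refine Measure.integrableOn_of_bounded (M := R ^ n * C) measure_Ioc_lt_top.ne
      ((measurable_id.pow_const _).mul hg).aestronglyMeasurable ?_
    filter_upwards [ae_restrict_mem measurableSet_Ioc] with r hr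
    have hr₀ : 0 ≤ r := hr.1.le
    rw [norm_mul, norm_pow, Real.norm_of_nonneg hr₀]
    exact mul_le_mul (pow_le_pow_left₀ hr₀ hr.2 _) (hC r hr) (abs_nonneg _)
      (pow_nonneg (hr₀.trans hr.2) _)
  refine near.of_forall_sdiff_eq_zero measurableSet_Ioi fun r hr => ?_
  rw [hg₀ r (not_le.1 fun h => hr.2 ⟨hr.1, h⟩), mul_zero]

lemma radialEnergy_nonneg : 0 ≤ radialEnergy N p f :=
  setIntegral_nonneg measurableSet_Ioi fun r (hr : 0 < r) => by positivity

namespace IsRadialProfile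

lemma nonneg (hf : IsRadialProfile R f) (r : ℝ) : 0 ≤ f r :=
  (hf.eq_zero_of_le (le_max_right r R)).symm.trans_le (hf.antitone (le_max_left r R))

lemma abs_deriv (hf : IsRadialProfile R f) (r : ℝ) : |deriv f r| = -deriv f r :=
  abs_of_nonpos hf.antitone.deriv_nonpos

lemma exists_abs_deriv_le (hf : IsRadialProfile R f) : ∃ K, 0 ≤ K ∧ ∀ r, |deriv f r| ≤ K := by
  obtain ⟨K, hK⟩ := hf.exists_lipschitzWith
  exact ⟨K, K.2, fun r => norm_deriv_le_of_lipschitz hK⟩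

lemma deriv_eq_zero (hf : IsRadialProfile R f) {r : ℝ} (hr : R < r) : deriv f r = 0 := by
  have : f =ᶠ[nhds r] fun _ => 0 := by
    filter_upwards [lt_mem_nhds hr] with s hs using hf.eq_zero_of_le hs.le
  rw [this.deriv_eq, deriv_const]

lemma integral_deriv (hf : IsRadialProfile R f) (r s : ℝ) :
    ∫ ρ in r..s, deriv f ρ = f s - f r := by
  obtain ⟨K, hK⟩ := hf.exists_lipschitzWith
  exact hK.lipschitzOnWith.absolutelyContinuousOnInterval.integral_deriv_eq_sub

lemma integrableOn_energy (hf : IsRadialProfile R f) (hp : 0 < p) :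
    IntegrableOn (fun r => r ^ (N - 1) * |deriv f r| ^ p) (Ioi 0) := by
  obtain ⟨K, -, hK⟩ := hf.exists_abs_deriv_le
  refine integrableOn_pow_mul_of_abs_le (C := K ^ p) (R := R) _
    ((measurable_deriv f).abs.pow_const _) (fun r _ => ?_) (fun r hr => ?_)
  · rw [abs_of_nonneg (by positivity)]
    exact rpow_le_rpow (abs_nonneg _) (hK r) hp.le
  · rw [hf.deriv_eq_zero hr, abs_zero, zero_rpow hp.ne']

lemma integrableOn_mass (hf : IsRadialProfile R f) (hq : 0 < q) :
    IntegrableOn (fun r => r ^ (N - 1) * f r ^ q) (Ioi 0) := by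
  refine integrableOn_pow_mul_of_abs_le (C := f 0 ^ q) (R := R) _
    (hf.antitone.measurable.pow_const _) (fun r hr => ?_) (fun r hr => ?_)
  · rw [abs_of_nonneg (rpow_nonneg (hf.nonneg r) q)]
    exact rpow_le_rpow (hf.nonneg r) (hf.antitone hr.1.le) hq.le
  · rw [hf.eq_zero_of_le hr.le, zero_rpow hq.ne']

lemma radialMass_nonneg (hf : IsRadialProfile R f) : 0 ≤ radialMass N q f :=
  setIntegral_nonneg measurableSet_Ioi fun r (hr : 0 < r) =>
    mul_nonneg (by positivity) (rpow_nonneg (hf.nonneg r) q)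

lemma radialMass_eq_setIntegral_Ioc (hf : IsRadialProfile R f) (hq : 0 < q) :
    radialMass N q f = ∫ r in Ioc 0 R, r ^ (N - 1) * f r ^ q := by
  refine setIntegral_eq_of_subset_of_forall_sdiff_eq_zero measurableSet_Ioi
    (fun r hr => hr.1) fun r hr => ?_
  have hRr : R ≤ r := le_of_not_ge fun h => hr.2 ⟨hr.1, h⟩
  rw [hf.eq_zero_of_le hRr, zero_rpow hq.ne', mul_zero]

lemma radialEigenvalue_mul_le (hf : IsRadialProfile R f) (hp : 0 < p) (hq : 0 < q) :
    radialEigenvalue N p q R * radialMass N q f ^ (p / q) ≤ radialEnergy N p f := by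
  rcases (hf.radialMass_nonneg (N := N) (q := q)).eq_or_lt with h₀ | h₀
  · rw [← h₀, zero_rpow (by positivity), mul_zero]
    exact radialEnergy_nonneg
  · rw [← le_div_iff₀ (by positivity)]
    refine csInf_le ⟨0, ?_⟩ ⟨f, hf, h₀, rfl⟩
    rintro _ ⟨g, -, hg, rfl⟩
    exact div_nonneg radialEnergy_nonneg (by positivity)

protected lemma tent : IsRadialProfile R fun r => max (R - r) 0 where
  exists_lipschitzWith := ⟨_, ((LipschitzWith.const R).sub LipschitzWith.id).max_const 0⟩
  antitone := fun _ _ h => max_le_max_right 0 (sub_le_sub_left h R)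
  eq_zero_of_le := fun _ h => max_eq_right (sub_nonpos.2 h)

lemma radialMass_tent_pos (hR : 0 < R) (hq : 0 < q) :
    0 < radialMass N q fun r => max (R - r) 0 := by
  refine (setIntegral_pos_iff_support_of_nonneg_ae ?_
    (IsRadialProfile.tent.integrableOn_mass hq)).2 ?_
  · filter_upwards [ae_restrict_mem measurableSet_Ioi] with r (hr : 0 < r)
    exact mul_nonneg (by positivity) (by positivity)
  · refine lt_of_lt_of_le ?_ (measure_mono (s := Ioo 0 R) fun r hr => ⟨?_, hr.1⟩)
    · simpa using hR
    · have : 0 < r := hr.1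
      have : 0 < max (R - r) 0 := lt_max_of_lt_left (sub_pos.2 hr.2)
      exact ne_of_gt (by positivity)

end IsRadialProfile

lemma nonempty_radialEigenvalue_set (hR : 0 < R) (hq : 0 < q) :
    {Λ | ∃ f, IsRadialProfile R f ∧ 0 < radialMass N q f ∧
      Λ = radialEnergy N p f / radialMass N q f ^ (p / q)}.Nonempty :=
  ⟨_, _, IsRadialProfile.tent, IsRadialProfile.radialMass_tent_pos hR hq, rfl⟩

end RadialProfiles

section Scaling

variable {N : ℕ} [NeZero N] {p q R t : ℝ} {f : ℝ → ℝ}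

lemma radialMass_comp_mul_left (ht : 0 < t) :
    radialMass N q (fun s => f (t * s)) = t⁻¹ ^ N * radialMass N q f := by
  have change_of_variables := integral_comp_mul_left_Ioi (fun s => s ^ (N - 1) * f s ^ q) 0 ht
  rw [mul_zero, smul_eq_mul] at change_of_variables
  calc ∫ s in Ioi 0, s ^ (N - 1) * f (t * s) ^ q
      = t⁻¹ ^ (N - 1) * ∫ s in Ioi 0, (t * s) ^ (N - 1) * f (t * s) ^ q := by
        rw [← integral_const_mul]
        congr 1 with s
        rw [mul_pow, inv_pow]
        field_simp
    _ = t⁻¹ ^ N * radialMass N q f := by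
        rw [change_of_variables, ← mul_assoc, ← pow_succ, Nat.sub_one_add_one (NeZero.ne N),
          radialMass]

lemma radialEnergy_comp_mul_left (ht : 0 < t) :
    radialEnergy N p (fun s => f (t * s)) = t ^ p * t⁻¹ ^ N * radialEnergy N p f := by
  have change_of_variables :=
    integral_comp_mul_left_Ioi (fun s => s ^ (N - 1) * |deriv f s| ^ p) 0 ht
  rw [mul_zero, smul_eq_mul] at change_of_variables
  calc ∫ s in Ioi 0, s ^ (N - 1) * |deriv (fun s => f (t * s)) s| ^ p
      = t ^ p * t⁻¹ ^ (N - 1) * ∫ s in Ioi 0, (t * s) ^ (N - 1) * |deriv f (t * s)| ^ p := by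
        rw [← integral_const_mul]
        congr 1 with s
        rw [deriv_comp_mul_left, smul_eq_mul, abs_mul, abs_of_pos ht,
          mul_rpow ht.le (abs_nonneg _), mul_pow, inv_pow]
        field_simp
    _ = t ^ p * t⁻¹ ^ N * radialEnergy N p f := by
        rw [change_of_variables, ← mul_assoc, mul_assoc (t ^ p), ← pow_succ,
          Nat.sub_one_add_one (NeZero.ne N), radialEnergy]

lemma IsRadialProfile.comp_mul_left (hf : IsRadialProfile (t * R) f) (ht : 0 ≤ t) :
    IsRadialProfile R fun s => f (t * s) where
  exists_lipschitzWith :=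
    let ⟨K, hK⟩ := hf.exists_lipschitzWith
    ⟨K * ‖t‖₊, hK.comp (lipschitzWith_smul t)⟩
  antitone := fun _ _ h => hf.antitone (mul_le_mul_of_nonneg_left h ht)
  eq_zero_of_le := fun _ h => hf.eq_zero_of_le (mul_le_mul_of_nonneg_left h ht)

lemma radialEigenvalue_mul_rpow_le {r : ℝ} (hp : 0 < p) (hq : 0 < q) (hr : 0 < r) (hR : 0 < R) :
    radialEigenvalue N p q R * (R / r) ^ (N * (p / N + p / q - 1)) ≤
      radialEigenvalue N p q r := by
  have hN : (N : ℝ) ≠ 0 := NeZero.ne _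
  refine le_csInf (nonempty_radialEigenvalue_set hr hq) ?_
  rintro _ ⟨f, hf, hmass, rfl⟩
  obtain ⟨t, ht, rfl⟩ : ∃ t, 0 < t ∧ t * R = r := ⟨r / R, by positivity, by field_simp⟩
  have le := (hf.comp_mul_left ht.le).radialEigenvalue_mul_le (N := N) hp hq
  rw [radialMass_comp_mul_left ht, radialEnergy_comp_mul_left ht,
    mul_rpow (by positivity) hmass.le] at le
  have power : (R / (t * R)) ^ ((N : ℝ) * (p / N + p / q - 1)) =
      (t ^ p * t⁻¹ ^ N)⁻¹ * (t⁻¹ ^ N) ^ (p / q) := by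
    rw [div_mul_cancel_right₀ hR.ne', ← rpow_natCast, ← rpow_mul (by positivity), mul_inv,
      ← inv_rpow ht.le, ← rpow_neg (by positivity), ← rpow_add (by positivity),
      ← rpow_add (by positivity)]
    congr 1
    field_simp
    ring
  rw [le_div_iff₀ (by positivity), power]
  calc radialEigenvalue N p q R * ((t ^ p * t⁻¹ ^ N)⁻¹ * (t⁻¹ ^ N) ^ (p / q)) *
        radialMass N q f ^ (p / q)
      = (t ^ p * t⁻¹ ^ N)⁻¹ *
        (radialEigenvalue N p q R * ((t⁻¹ ^ N) ^ (p / q) * radialMass N q f ^ (p / q))) := by ring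
    _ ≤ (t ^ p * t⁻¹ ^ N)⁻¹ * (t ^ p * t⁻¹ ^ N * radialEnergy N p f) := by gcongr
    _ = radialEnergy N p f := inv_mul_cancel_left₀ (by positivity) _

end Scaling

section Positivity

variable {p q R r : ℝ} {f : ℝ → ℝ}

lemma setIntegral_abs_le_rpow_mul_rpow {g : ℝ → ℝ} (hg : Measurable g) {K : ℝ}
    (hK : ∀ ρ, |g ρ| ≤ K) {a : ℝ} (ha : 0 ≤ a) (hp : 1 < p) (hr : 0 < r) :
    ∫ ρ in Ioc r R, |g ρ| ≤ (∫ ρ in Ioc r R, ρ ^ a * |g ρ| ^ p) ^ (1 / p) *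
      (∫ ρ in Ioc r R, ρ ^ (-(a / (p - 1)))) ^ ((p - 1) / p) := by
  have hp₀ : 0 < p := zero_lt_one.trans hp
  have pos : ∀ ρ ∈ Ioc r R, 0 < ρ := fun ρ hρ => hr.trans hρ.1
  have ae_mem := ae_restrict_mem (μ := volume) (measurableSet_Ioc (a := r) (b := R))
  have weighted_memLp :
      MemLp (fun ρ => ρ ^ (a / p) * |g ρ|) (.ofReal p) (volume.restrict (Ioc r R)) := by
    refine MemLp.of_bound ((measurable_id.pow_const _).mul hg.abs).aestronglyMeasurable
      (R ^ (a / p) * K) ?_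
    filter_upwards [ae_mem] with ρ hρ
    have hρ₀ := pos ρ hρ
    rw [Real.norm_of_nonneg (by positivity)]
    exact mul_le_mul (rpow_le_rpow hρ₀.le hρ.2 (by positivity)) (hK ρ) (abs_nonneg _)
      (rpow_nonneg (hρ₀.le.trans hρ.2) _)
  have weight_memLp :
      MemLp (fun ρ => ρ ^ (-(a / p))) (.ofReal (p / (p - 1))) (volume.restrict (Ioc r R)) := by
    refine MemLp.of_bound (measurable_id.pow_const _).aestronglyMeasurable (r ^ (-(a / p))) ?_
    filter_upwards [ae_mem] with ρ hρ
    rw [Real.norm_of_nonneg (rpow_nonneg (pos ρ hρ).le _)]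
    exact rpow_le_rpow_of_nonpos hr hρ.1.le (neg_nonpos.2 (by positivity))
  convert integral_mul_le_Lp_mul_Lq_of_nonneg (.conjExponent hp) ?_ ?_ weighted_memLp
    weight_memLp using 1
  · refine setIntegral_congr_fun measurableSet_Ioc fun ρ hρ => ?_
    rw [mul_right_comm, ← rpow_add (pos ρ hρ), add_neg_cancel, rpow_zero, one_mul]
  · rw [conjExponent, one_div_div]
    congr 2 <;> refine setIntegral_congr_fun measurableSet_Ioc fun ρ hρ => ?_
    · rw [mul_rpow (rpow_nonneg (pos ρ hρ).le _) (abs_nonneg _), ← rpow_mul (pos ρ hρ).le,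
        div_mul_cancel₀ _ hp₀.ne']
    · rw [← rpow_mul (pos ρ hρ).le]
      congr 1
      field_simp
  · filter_upwards [ae_mem] with ρ hρ using mul_nonneg (rpow_nonneg (pos ρ hρ).le _) (abs_nonneg _)
  · filter_upwards [ae_mem] with ρ hρ using rpow_nonneg (pos ρ hρ).le _

lemma setIntegral_Ioc_rpow_le {a γ : ℝ} (hγ : 0 ≤ γ) (haγ : -1 < γ - a) (hr : 0 < r) :
    ∫ ρ in Ioc r R, ρ ^ (-a) ≤ r ^ (-γ) * ∫ ρ in Ioc 0 R, ρ ^ (γ - a) := by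
  have int : IntegrableOn (fun ρ : ℝ => ρ ^ (γ - a)) (Ioc 0 R) :=
    (intervalIntegral.intervalIntegrable_rpow' haγ).1
  have subset : Ioc r R ⊆ Ioc 0 R := Ioc_subset_Ioc_left hr.le
  calc ∫ ρ in Ioc r R, ρ ^ (-a) ≤ ∫ ρ in Ioc r R, r ^ (-γ) * ρ ^ (γ - a) := by
        refine integral_mono_of_nonneg ?_ ((int.mono_set subset).const_mul _) ?_
        · filter_upwards [ae_restrict_mem measurableSet_Ioc] with ρ hρ
            using rpow_nonneg (hr.trans hρ.1).le _
        · filter_upwards [ae_restrict_mem measurableSet_Ioc] with ρ hρ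
          have hρ₀ : 0 < ρ := hr.trans hρ.1
          rw [show -a = -γ + (γ - a) by ring, rpow_add hρ₀]
          exact mul_le_mul_of_nonneg_right
            (rpow_le_rpow_of_nonpos hr hρ.1.le (neg_nonpos.2 hγ)) (by positivity)
    _ = r ^ (-γ) * ∫ ρ in Ioc r R, ρ ^ (γ - a) := integral_const_mul _ _
    _ ≤ r ^ (-γ) * ∫ ρ in Ioc 0 R, ρ ^ (γ - a) := by
        refine mul_le_mul_of_nonneg_left (setIntegral_mono_set int ?_ subset.eventuallyLE)
          (by positivity)
        filter_upwards [ae_restrict_mem measurableSet_Ioc] with ρ hρ using rpow_nonneg hρ.1.le _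

variable {N : ℕ} [NeZero N]

lemma IsRadialProfile.le_energy_rpow_mul (hf : IsRadialProfile R f) (hp : 1 < p) (hr : 0 < r)
    (hrR : r ≤ R) : f r ≤ radialEnergy N p f ^ (1 / p) *
      (∫ ρ in Ioc r R, ρ ^ (-((N - 1) / (p - 1)))) ^ ((p - 1) / p) := by
  have hp₀ : 0 < p := zero_lt_one.trans hp
  obtain ⟨K, -, hK⟩ := hf.exists_abs_deriv_le
  have ftc : f r = ∫ ρ in Ioc r R, |deriv f ρ| := by
    simp only [hf.abs_deriv, integral_neg]
    rw [← intervalIntegral.integral_of_le hrR, hf.integral_deriv, hf.eq_zero_of_le le_rfl, zero_sub,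
      neg_neg]
  have energy_le : ∫ ρ in Ioc r R, ρ ^ ((N : ℝ) - 1) * |deriv f ρ| ^ p ≤ radialEnergy N p f := by
    simp only [← Nat.cast_pred (NeZero.pos N), rpow_natCast]
    refine setIntegral_mono_set (hf.integrableOn_energy hp₀) ?_
      (.of_forall fun ρ hρ => hr.trans hρ.1)
    filter_upwards [ae_restrict_mem measurableSet_Ioi] with ρ (hρ : 0 < ρ)
    exact mul_nonneg (by positivity) (by positivity)
  rw [ftc]
  refine (setIntegral_abs_le_rpow_mul_rpow (measurable_deriv f) hK
    (sub_nonneg.2 (Nat.one_le_cast.2 (NeZero.one_le (n := N)))) hp hr).trans ?_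
  have nonneg : ∀ g : ℝ → ℝ, (∀ ρ, 0 < ρ → 0 ≤ g ρ) → 0 ≤ ∫ ρ in Ioc r R, g ρ := fun g hg =>
    setIntegral_nonneg measurableSet_Ioc fun ρ hρ => hg ρ (hr.trans hρ.1)
  have := nonneg (fun ρ => ρ ^ ((N : ℝ) - 1) * |deriv f ρ| ^ p) fun ρ hρ => by positivity
  have := nonneg (fun ρ => ρ ^ (-(((N : ℝ) - 1) / (p - 1)))) fun ρ hρ => by positivity
  gcongr

lemma IsRadialProfile.le_energy_rpow_mul_rpow (hf : IsRadialProfile R f) (hp : 1 < p) {γ : ℝ}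
    (hγ : 0 ≤ γ) (hγ₁ : -1 < γ - (N - 1) / (p - 1)) (hr : 0 < r) (hrR : r ≤ R) :
    f r ≤ radialEnergy N p f ^ (1 / p) *
      (r ^ (-γ) * ∫ ρ in Ioc 0 R, ρ ^ (γ - (N - 1) / (p - 1))) ^ ((p - 1) / p) := by
  refine (hf.le_energy_rpow_mul hp hr hrR).trans (mul_le_mul_of_nonneg_left (rpow_le_rpow ?_
    (setIntegral_Ioc_rpow_le hγ hγ₁ hr) (div_nonneg (sub_nonneg.2 hp.le) (by linarith)))
    (rpow_nonneg radialEnergy_nonneg _))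
  exact setIntegral_nonneg measurableSet_Ioc fun ρ hρ => rpow_nonneg (hr.trans hρ.1).le _

/-- Subcriticality of `q` is exactly what leaves room for the exponent `γ`. -/
lemma exists_rpow_exponent (hp : 1 < p) (hq : 0 < q) (hκ : 0 < p / N + p / q - 1) :
    ∃ γ : ℝ, 0 ≤ γ ∧ -1 < γ - (N - 1) / (p - 1) ∧ -1 < N - 1 - γ * (q * (p - 1) / p) := by
  have hp₁ : 0 < p - 1 := sub_pos.2 hp
  have hN : (0 : ℝ) < N := Nat.cast_pos.2 (NeZero.pos N)
  have subcritical : q * (N - p) < N * p := by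
    have : p / N + p / q - 1 = (N * p - q * (N - p)) / (N * q) := by
      field_simp
      ring
    rw [this, div_pos_iff_of_pos_right (by positivity)] at hκ
    linarith
  obtain ⟨γ, hγ, hγ'⟩ : ∃ γ, max 0 ((N - p) / (p - 1)) < γ ∧ γ < N * p / (q * (p - 1)) := by
    refine exists_between (max_lt (by positivity) ?_)
    rw [div_lt_div_iff₀ hp₁ (by positivity)]
    nlinarith
  obtain ⟨hγ₀, hγ₁⟩ := max_lt_iff.1 hγ
  rw [lt_div_iff₀ (by positivity)] at hγ'
  refine ⟨γ, hγ₀.le, ?_, ?_⟩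
  · have : ((N : ℝ) - p) / (p - 1) = (N - 1) / (p - 1) - 1 := by
      field_simp
      ring
    linarith
  · have : γ * (q * (p - 1) / p) < N := by
      rw [← mul_div_assoc, div_lt_iff₀ (by linarith)]
      exact hγ'
    linarith

lemma exists_radialMass_le (hp : 1 < p) (hq : 0 < q) (hκ : 0 < p / N + p / q - 1) (R : ℝ) :
    ∃ C, 0 ≤ C ∧ ∀ f, IsRadialProfile R f →
      radialMass N q f ≤ C * radialEnergy N p f ^ (q / p) := by
  obtain ⟨γ, hγ, hγ₁, hγ₂⟩ := exists_rpow_exponent (N := N) hp hq hκ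
  set D := ∫ ρ in Ioc 0 R, ρ ^ (γ - (N - 1) / (p - 1))
  have nonneg : ∀ b : ℝ, 0 ≤ ∫ ρ in Ioc 0 R, ρ ^ b := fun b =>
    setIntegral_nonneg measurableSet_Ioc fun ρ hρ => rpow_nonneg hρ.1.le _
  have hD : 0 ≤ D := nonneg _
  refine ⟨D ^ (q * (p - 1) / p) * ∫ r in Ioc 0 R, r ^ (N - 1 - γ * (q * (p - 1) / p)),
    mul_nonneg (by positivity) (nonneg _), fun f hf => ?_⟩
  have hE : 0 ≤ radialEnergy N p f := radialEnergy_nonneg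
  rw [hf.radialMass_eq_setIntegral_Ioc hq, mul_right_comm, ← integral_const_mul]
  refine integral_mono_of_nonneg ?_
    ((intervalIntegral.intervalIntegrable_rpow' hγ₂).1.const_mul _) ?_
  · filter_upwards [ae_restrict_mem measurableSet_Ioc] with r hr
      using mul_nonneg (pow_nonneg hr.1.le _) (rpow_nonneg (hf.nonneg r) _)
  filter_upwards [ae_restrict_mem measurableSet_Ioc] with r hr
  have hr₀ : 0 < r := hr.1
  calc r ^ (N - 1) * f r ^ q
      ≤ r ^ (N - 1) * (radialEnergy N p f ^ (1 / p) * (r ^ (-γ) * D) ^ ((p - 1) / p)) ^ q := by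
        gcongr
        · exact hf.nonneg r
        · exact hf.le_energy_rpow_mul_rpow hp hγ hγ₁ hr₀ hr.2
    _ = D ^ (q * (p - 1) / p) * radialEnergy N p f ^ (q / p) *
          r ^ ((N : ℝ) - 1 - γ * (q * (p - 1) / p)) := by
        rw [mul_rpow (by positivity) (by positivity), ← rpow_mul hE, ← rpow_mul (by positivity),
          mul_rpow (by positivity) hD, ← rpow_mul hr₀.le, sub_eq_add_neg ((N : ℝ) - 1),
          rpow_add hr₀, ← Nat.cast_pred (NeZero.pos N), rpow_natCast]
        ring_nf

lemma radialEigenvalue_pos (hp : 1 < p) (hq : 0 < q) (hκ : 0 < p / N + p / q - 1) (hR : 0 < R) :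
    0 < radialEigenvalue N p q R := by
  obtain ⟨C, hC, hle⟩ := exists_radialMass_le (N := N) hp hq hκ R
  refine lt_of_lt_of_le (b := (C ^ (p / q) + 1)⁻¹) (by positivity)
    (le_csInf (nonempty_radialEigenvalue_set hR hq) ?_)
  rintro _ ⟨f, hf, hmass, rfl⟩
  have hE : 0 ≤ radialEnergy N p f := radialEnergy_nonneg
  rw [le_div_iff₀ (by positivity), inv_mul_le_iff₀ (by positivity)]
  calc radialMass N q f ^ (p / q) ≤ (C * radialEnergy N p f ^ (q / p)) ^ (p / q) := by
        gcongr
        exact hle f hf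
    _ = C ^ (p / q) * radialEnergy N p f := by
        rw [mul_rpow hC (by positivity), ← rpow_mul hE, div_mul_div_cancel₀ (by linarith),
          div_self hq.ne', rpow_one]
    _ ≤ (C ^ (p / q) + 1) * radialEnergy N p f := by
        gcongr
        exact (lt_add_one _).le

end Positivity

section DirichletEigenvalue

variable {N : ℕ} [NeZero N] {p q R : ℝ} {v : EuclideanSpace ℝ (Fin N) → ℝ}

lemma sphereArea_pos : 0 < sphereArea N := by
  have : NeZero (volume : Measure (EuclideanSpace ℝ (Fin N))).toSphere :=
    ⟨Measure.toSphere_ne_zero _⟩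
  exact measureReal_univ_pos

lemma integral_fun_norm_eq_sphereArea_mul (h : ℝ → ℝ) :
    ∫ x : EuclideanSpace ℝ (Fin N), h ‖x‖ =
      sphereArea N * ∫ r in Ioi (0 : ℝ), r ^ (N - 1) * h r := by
  rw [integral_fun_norm_addHaar, sphereArea, Measure.toSphere_real_apply_univ]
  simp [mul_assoc]

lemma isRadialProfile_decreasingProfile (hv : ContDiff ℝ 1 v) (hv_supp : HasCompactSupport v)
    {c : EuclideanSpace ℝ (Fin N)} (hR : tsupport v ⊆ ball c R) :
    IsRadialProfile R (decreasingProfile volume fun x => |v x|) where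
  exists_lipschitzWith :=
    let ⟨_, hK⟩ := hv.lipschitzWith_of_hasCompactSupport hv_supp one_ne_zero
    ⟨_, decreasingProfile.lipschitzWith (bddAbove_range_abs hv.continuous hv_supp)
      (lipschitzWith_one_norm.comp hK)⟩
  antitone := decreasingProfile.antitone (bddAbove_range_abs hv.continuous hv_supp)
  eq_zero_of_le r hr := by
    refine decreasingProfile.eq_zero_of_measure_le
      (bddAbove_range_abs hv.continuous hv_supp) ?_
    rw [← Measure.addHaar_ball_center volume c r]
    exact measure_mono fun x hx =>
      ball_subset_ball hr (hR (subset_tsupport v (abs_pos.1 hx)))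

lemma sphereArea_mul_radialEnergy_le (hv : ContDiff ℝ 1 v) (hv_supp : HasCompactSupport v)
    (hp : 1 < p) :
    sphereArea N * radialEnergy N p (decreasingProfile volume fun x => |v x|) ≤
      ∫ x, ‖fderiv ℝ v x‖ ^ p := by
  have hp₀ : 0 < p := zero_lt_one.trans hp
  have fderiv_cont : Continuous (fderiv ℝ v) := hv.continuous_fderiv one_ne_zero
  have int : Integrable fun x => ‖fderiv ℝ v x‖ ^ p :=
    (fderiv_cont.norm.rpow_const fun _ => .inr hp₀.le).integrable_of_hasCompactSupport
      ((hv_supp.fderiv ℝ).comp_left (g := fun y => ‖y‖ ^ p)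
        (by rw [norm_zero, zero_rpow hp₀.ne']))
  have deriv_meas : Measurable fun x : EuclideanSpace ℝ (Fin N) =>
      |deriv (decreasingProfile volume fun x => |v x|) ‖x‖| ^ p :=
    ((measurable_deriv _).comp measurable_norm).abs.pow_const _
  rw [radialEnergy, ← integral_fun_norm_eq_sphereArea_mul fun r => |deriv _ r| ^ p,
    integral_eq_lintegral_of_nonneg_ae (.of_forall fun x => by positivity)
      deriv_meas.aestronglyMeasurable,
    integral_eq_lintegral_of_nonneg_ae (.of_forall fun x => by positivity)
      int.aestronglyMeasurable]
  refine ENNReal.toReal_mono int.lintegral_lt_top.ne ?_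
  simpa only [ENNReal.ofReal_rpow_of_nonneg, abs_nonneg, norm_nonneg, hp₀.le]
    using lintegral_abs_deriv_decreasingProfile_rpow_le (μ := volume) hv hv_supp hp

lemma sphereArea_mul_radialMass (hv : Continuous v) (hv_supp : HasCompactSupport v)
    (hq : 0 < q) :
    sphereArea N * radialMass N q (decreasingProfile volume fun x => |v x|) =
      ∫ x, |v x| ^ q := by
  have profile_meas : Measurable (decreasingProfile volume fun x => |v x|) :=
    (decreasingProfile.antitone (bddAbove_range_abs hv hv_supp)).measurable
  rw [radialMass, ← integral_fun_norm_eq_sphereArea_mul fun r => decreasingProfile _ _ r ^ q,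
    integral_eq_lintegral_of_nonneg_ae
      (.of_forall fun x => rpow_nonneg (decreasingProfile.nonneg _) _)
      ((profile_meas.comp measurable_norm).pow_const _).aestronglyMeasurable,
    integral_eq_lintegral_of_nonneg_ae (.of_forall fun x => by positivity)
      (hv.abs.measurable.pow_const _).aestronglyMeasurable,
    lintegral_decreasingProfile_rpow hv hv_supp hq]

lemma sphereArea_rpow_mul_le_rayleighQuot (hp : 1 < p) (hq : 0 < q) (hv : ContDiff ℝ 1 v)
    (hv_supp : HasCompactSupport v) {c : EuclideanSpace ℝ (Fin N)} (hR : tsupport v ⊆ ball c R)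
    (hv₀ : ∃ x, v x ≠ 0) :
    sphereArea N ^ (1 - p / q) * radialEigenvalue N p q R ≤ rayleighQuot p q (ball c R) v := by
  have hp₀ : 0 < p := zero_lt_one.trans hp
  have area_pos : 0 < sphereArea N := sphereArea_pos
  have energy_eq : ∫ x in ball c R, ‖fderiv ℝ v x‖ ^ p = ∫ x, ‖fderiv ℝ v x‖ ^ p :=
    setIntegral_eq_integral_of_forall_compl_eq_zero fun x hx => by
      rw [image_eq_zero_of_notMem_tsupport fun h => hx (hR (tsupport_fderiv_subset ℝ h)),
        norm_zero, zero_rpow hp₀.ne']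
  have mass_eq : ∫ x in ball c R, |v x| ^ q = ∫ x, |v x| ^ q :=
    setIntegral_eq_integral_of_forall_compl_eq_zero fun x hx => by
      rw [image_eq_zero_of_notMem_tsupport fun h => hx (hR h), abs_zero, zero_rpow hq.ne']
  have mass_pos : 0 < ∫ x, |v x| ^ q := by
    obtain ⟨y, hy⟩ := hv₀
    refine (hv.continuous.abs.rpow_const fun _ => .inr
      hq.le).integral_pos_of_hasCompactSupport_nonneg_nonzero (x := y) ?_ ?_ ?_
    · exact hv_supp.comp_left (g := fun y => |y| ^ q) (by rw [abs_zero, zero_rpow hq.ne'])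
    · exact fun x => rpow_nonneg (abs_nonneg _) q
    · exact (rpow_pos_of_pos (abs_pos.2 hy) q).ne'
  rw [rayleighQuot, energy_eq, mass_eq]
  rw [← sphereArea_mul_radialMass hv.continuous hv_supp hq] at mass_pos ⊢
  set f := decreasingProfile volume fun x => |v x|
  have mass_nonneg : 0 ≤ radialMass N q f := (pos_of_mul_pos_right mass_pos area_pos.le).le
  rw [le_div_iff₀ (by positivity), mul_rpow area_pos.le mass_nonneg]
  calc sphereArea N ^ (1 - p / q) * radialEigenvalue N p q R *
        (sphereArea N ^ (p / q) * radialMass N q f ^ (p / q))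
      = sphereArea N ^ (1 - p / q) * sphereArea N ^ (p / q) *
        (radialEigenvalue N p q R * radialMass N q f ^ (p / q)) := by ring
    _ = sphereArea N * (radialEigenvalue N p q R * radialMass N q f ^ (p / q)) := by
        rw [← rpow_add area_pos, sub_add_cancel, rpow_one]
    _ ≤ sphereArea N * radialEnergy N p f := by
        gcongr
        exact (isRadialProfile_decreasingProfile hv hv_supp hR).radialEigenvalue_mul_le hp₀ hq
    _ ≤ ∫ x, ‖fderiv ℝ v x‖ ^ p := sphereArea_mul_radialEnergy_le hv hv_supp hp

theorem sphereArea_rpow_mul_radialEigenvalue_le_lambdaPQ_ball (hp : 1 < p) (hq : 0 < q)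
    (c : EuclideanSpace ℝ (Fin N)) (hR : 0 < R) :
    sphereArea N ^ (1 - p / q) * radialEigenvalue N p q R ≤ lambdaPQ p q (ball c R) := by
  refine le_csInf ?_ ?_
  · let b : ContDiffBump c := ⟨R / 3, R / 2, by positivity, by linarith⟩
    refine ⟨_, b, b.contDiff, b.hasCompactSupport, ?_, ⟨c, mem_ball_self hR, ?_⟩, rfl⟩
    · rw [b.tsupport_eq]
      exact closedBall_subset_ball (half_lt_self hR)
    · rw [b.one_of_mem_closedBall (mem_closedBall_self b.rIn_pos.le)]
      exact one_ne_zero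
  · rintro _ ⟨v, hv, hv_supp, hvR, ⟨x, -, hx⟩, rfl⟩
    exact sphereArea_rpow_mul_le_rayleighQuot hp hq (hv.of_le (mod_cast le_top)) hv_supp hvR
      ⟨x, hx⟩

end DirichletEigenvalue

section NearMinimizers

variable {N : ℕ} {p q R s t : ℝ} {f : ℝ → ℝ}

/-- The part of `f` above its value at `s`; for a decreasing `f` it is supported in `(-∞, s]`. -/
noncomputable def excess (f : ℝ → ℝ) (s r : ℝ) : ℝ := max (f r - f s) 0

/-- The first variation, up to the factor `q`, of `radialMass N q f` in the direction
`excess f s`. -/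
noncomputable def excessMass (N : ℕ) (q : ℝ) (f : ℝ → ℝ) (s : ℝ) : ℝ :=
  ∫ r in Ioi (0 : ℝ), r ^ (N - 1) * (excess f s r * f r ^ (q - 1))

lemma excess_nonneg (f : ℝ → ℝ) (s r : ℝ) : 0 ≤ excess f s r := le_max_right _ _

lemma sub_excess_eq_min (f : ℝ → ℝ) (s r : ℝ) : f r - excess f s r = min (f r) (f s) := by
  rcases le_total (f r) (f s) with h | h
  · rw [excess, max_eq_right (sub_nonpos.2 h), sub_zero, min_eq_left h]
  · rw [excess, max_eq_left (sub_nonneg.2 h), sub_sub_cancel, min_eq_right h]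

lemma mul_rpow_sub_one_eq_rpow {x : ℝ} (hx : 0 ≤ x) (hq : 1 < q) : x * x ^ (q - 1) = x ^ q := by
  rw [← rpow_one_add' hx (by linarith), add_sub_cancel]

lemma rpow_sub_mul_rpow_le {x y z : ℝ} (hq : 1 < q) (hx : 0 ≤ x) (hz : 0 ≤ z) (h : x - y ≤ z) :
    x ^ q - q * (y * x ^ (q - 1)) ≤ z ^ q := by
  have hq₀ : 0 < q := zero_lt_one.trans hq
  rcases hx.eq_or_lt with rfl | hx
  · rw [zero_rpow hq₀.ne', zero_rpow (sub_pos.2 hq).ne', mul_zero, mul_zero, sub_zero]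
    exact rpow_nonneg hz q
  · have bernoulli : 1 + q * (z / x - 1) ≤ (z / x) ^ q := by
      have := one_add_mul_self_le_rpow_one_add (s := z / x - 1)
        (by linarith [div_nonneg hz hx.le]) hq.le
      rwa [add_sub_cancel] at this
    rw [div_rpow hz hx.le, le_div_iff₀ (rpow_pos_of_pos hx q)] at bernoulli
    have expand : (1 + q * (z / x - 1)) * x ^ q = x ^ q - q * ((x - z) * x ^ (q - 1)) := by
      rw [← mul_rpow_sub_one_eq_rpow hx.le hq]
      field_simp
      ring
    have : (x - z) * x ^ (q - 1) ≤ y * x ^ (q - 1) :=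
      mul_le_mul_of_nonneg_right (by linarith) (rpow_nonneg hx.le _)
    nlinarith

lemma rpow_sub_one_le_one_add_rpow {x : ℝ} (hx : 0 ≤ x) (hq : 1 ≤ q) :
    x ^ (q - 1) ≤ 1 + x ^ q := by
  rcases le_total x 1 with h | h
  · exact (rpow_le_one hx h (sub_nonneg.2 hq)).trans (le_add_of_nonneg_right (rpow_nonneg hx q))
  · exact (rpow_le_rpow_of_exponent_le h (sub_le_self q zero_le_one)).trans
      (le_add_of_nonneg_left zero_le_one)

lemma mul_div_one_add_mul_le (hp : 1 < p) (ht : 0 < t) (ht₁ : t < 1) :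
    p * t / (1 + p * t) ≤ 1 - (1 - t) ^ p := by
  have bernoulli := one_add_mul_self_le_rpow_one_add (s := t) (by linarith) hp.le
  have product : (1 + t) ^ p * (1 - t) ^ p ≤ 1 := by
    rw [← mul_rpow (by linarith) (by linarith)]
    exact rpow_le_one (by nlinarith) (by nlinarith) (by linarith)
  have := rpow_nonneg (sub_nonneg.2 ht₁.le) p
  rw [div_le_iff₀ (by positivity)]
  nlinarith

lemma one_sub_mul_div_le_rpow {a x : ℝ} (ha : 0 ≤ a) (ha₁ : a ≤ 1) (hx : 0 ≤ x) (hx₁ : x < 1) :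
    1 - a * (x / (1 - x)) ≤ (1 - x) ^ a := by
  have pos : 0 < 1 - x := sub_pos.2 hx₁
  have product : (1 - x) ^ a * (1 + x / (1 - x)) ^ a = 1 := by
    rw [← mul_rpow pos.le (by positivity), show (1 - x) * (1 + x / (1 - x)) = 1 by field_simp; ring,
      one_rpow]
  have bernoulli := rpow_one_add_le_one_add_mul_self (s := x / (1 - x))
    (neg_one_lt_zero.le.trans (by positivity)) ha ha₁
  have lower : 1 ≤ (1 - x) ^ a * (1 + a * (x / (1 - x))) := product.symm.le.trans (by gcongr)
  have : (1 - x) ^ a ≤ 1 := rpow_le_one pos.le (by linarith) ha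
  have : 0 ≤ a * (x / (1 - x)) := by positivity
  nlinarith

lemma setIntegral_Ioi_eq_add {g : ℝ → ℝ} (hg : IntegrableOn g (Ioi 0)) (hs : 0 ≤ s) :
    ∫ r in Ioi 0, g r = (∫ r in Ioc 0 s, g r) + ∫ r in Ioi s, g r := by
  rw [← Ioc_union_Ioi_eq_Ioi hs, setIntegral_union (Ioc_disjoint_Ioi le_rfl) measurableSet_Ioi
    (hg.mono_set Ioc_subset_Ioi_self) (hg.mono_set (Ioi_subset_Ioi hs))]

lemma setIntegral_Ioc_pow_sub_one [NeZero N] (hs : 0 ≤ s) :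
    ∫ r in Ioc 0 s, r ^ (N - 1) = s ^ N / N := by
  rw [← intervalIntegral.integral_of_le hs, integral_pow, Nat.sub_one_add_one (NeZero.ne N),
    zero_pow (NeZero.ne N), sub_zero, Nat.cast_pred (NeZero.pos N), sub_add_cancel]

namespace IsRadialProfile

protected lemma excess (hf : IsRadialProfile R f) (s : ℝ) : IsRadialProfile s (excess f s) where
  exists_lipschitzWith :=
    let ⟨_, hK⟩ := hf.exists_lipschitzWith
    ⟨_, (hK.sub (LipschitzWith.const (f s))).max_const 0⟩
  antitone := fun _ _ h => max_le_max_right 0 (sub_le_sub_right (hf.antitone h) _)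
  eq_zero_of_le := fun _ h => max_eq_right (sub_nonpos.2 (hf.antitone h))

lemma excess_eq_sub (hf : IsRadialProfile R f) {r : ℝ} (h : r ≤ s) : excess f s r = f r - f s :=
  max_eq_left (sub_nonneg.2 (hf.antitone h))

lemma excess_le (hf : IsRadialProfile R f) (s r : ℝ) : excess f s r ≤ f r :=
  max_le (sub_le_self _ (hf.nonneg s)) (hf.nonneg r)

lemma deriv_excess_of_lt (hf : IsRadialProfile R f) {r : ℝ} (h : r < s) :
    deriv (excess f s) r = deriv f r := by
  have : excess f s =ᶠ[nhds r] fun r => f r - f s := by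
    filter_upwards [gt_mem_nhds h] with r' hr' using hf.excess_eq_sub hr'.le
  rw [this.deriv_eq, deriv_sub_const]

protected lemma sub_mul_excess (hf : IsRadialProfile R f) (s : ℝ) (ht : 0 ≤ t) (ht₁ : t ≤ 1) :
    IsRadialProfile R fun r => f r - t * excess f s r where
  exists_lipschitzWith :=
    let ⟨_, hK⟩ := hf.exists_lipschitzWith
    let ⟨_, hL⟩ := (hf.excess s).exists_lipschitzWith
    ⟨_, hK.sub ((lipschitzWith_smul t).comp hL)⟩
  antitone := fun a b h => by
    have combination : ∀ r, f r - t * excess f s r = (1 - t) * f r + t * min (f r) (f s) :=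
      fun r => by rw [← sub_excess_eq_min]; ring
    have := sub_nonneg.2 ht₁
    have := hf.antitone h
    simp only [combination]
    gcongr
  eq_zero_of_le := fun r h => by
    have : excess f s r = 0 :=
      le_antisymm ((hf.excess_le s r).trans_eq (hf.eq_zero_of_le h)) (excess_nonneg f s r)
    rw [this, hf.eq_zero_of_le h, mul_zero, sub_zero]

lemma deriv_sub_mul_excess_of_lt (hf : IsRadialProfile R f) {r : ℝ} (h : r < s) :
    deriv (fun r => f r - t * excess f s r) r = (1 - t) * deriv f r := by
  have : (fun r => f r - t * excess f s r) =ᶠ[nhds r] fun r => (1 - t) * f r + t * f s := by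
    filter_upwards [gt_mem_nhds h] with r' hr'
    rw [hf.excess_eq_sub hr'.le]
    ring
  rw [this.deriv_eq, deriv_add_const, deriv_const_mul_field]

lemma deriv_sub_mul_excess_of_gt (hf : IsRadialProfile R f) {r : ℝ} (h : s < r) :
    deriv (fun r => f r - t * excess f s r) r = deriv f r := by
  have : (fun r => f r - t * excess f s r) =ᶠ[nhds r] f := by
    filter_upwards [lt_mem_nhds h] with r' hr'
    rw [(hf.excess s).eq_zero_of_le hr'.le, mul_zero, sub_zero]
  rw [this.deriv_eq]

lemma radialEnergy_sub_mul_excess (hf : IsRadialProfile R f) (hp : 0 < p) (hs : 0 ≤ s)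
    (ht : 0 ≤ t) (ht₁ : t ≤ 1) : radialEnergy N p (fun r => f r - t * excess f s r) =
      radialEnergy N p f - (1 - (1 - t) ^ p) * ∫ r in Ioc 0 s, r ^ (N - 1) * |deriv f r| ^ p := by
  have inner : ∫ r in Ioc 0 s, r ^ (N - 1) * |deriv (fun r => f r - t * excess f s r) r| ^ p =
      (1 - t) ^ p * ∫ r in Ioc 0 s, r ^ (N - 1) * |deriv f r| ^ p := by
    rw [integral_Ioc_eq_integral_Ioo, integral_Ioc_eq_integral_Ioo, ← integral_const_mul]
    refine setIntegral_congr_fun measurableSet_Ioo fun r hr => ?_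
    simp only [hf.deriv_sub_mul_excess_of_lt hr.2]
    rw [abs_mul, abs_of_nonneg (sub_nonneg.2 ht₁), mul_rpow (sub_nonneg.2 ht₁) (abs_nonneg _)]
    ring
  have outer : ∫ r in Ioi s, r ^ (N - 1) * |deriv (fun r => f r - t * excess f s r) r| ^ p =
      ∫ r in Ioi s, r ^ (N - 1) * |deriv f r| ^ p :=
    setIntegral_congr_fun measurableSet_Ioi fun r hr => by
      simp only [hf.deriv_sub_mul_excess_of_gt hr]
  rw [radialEnergy, radialEnergy, setIntegral_Ioi_eq_add (hf.integrableOn_energy hp) hs,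
    setIntegral_Ioi_eq_add ((hf.sub_mul_excess s ht ht₁).integrableOn_energy hp) hs, inner, outer]
  ring

lemma radialEnergy_excess_le (hf : IsRadialProfile R f) (hp : 0 < p) (s : ℝ) :
    radialEnergy N p (excess f s) ≤ radialEnergy N p f := by
  refine integral_mono_ae ((hf.excess s).integrableOn_energy hp) (hf.integrableOn_energy hp) ?_
  filter_upwards [ae_restrict_mem measurableSet_Ioi, ae_restrict_of_ae (Measure.ae_ne volume s)]
    with r (hr : 0 < r) hrs
  rcases hrs.lt_or_gt with hrs | hrs
  · rw [hf.deriv_excess_of_lt hrs]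
  · rw [(hf.excess s).deriv_eq_zero hrs, abs_zero, zero_rpow hp.ne', mul_zero]
    positivity

lemma radialMass_sub_le {w g : ℝ → ℝ} {R' : ℝ} (hf : IsRadialProfile R f)
    (hw : IsRadialProfile R' w) (hq : 1 < q)
    (hg : IntegrableOn (fun r => r ^ (N - 1) * (g r * f r ^ (q - 1))) (Ioi 0))
    (hfgw : ∀ r, f r - g r ≤ w r) :
    radialMass N q f - q * ∫ r in Ioi 0, r ^ (N - 1) * (g r * f r ^ (q - 1)) ≤
      radialMass N q w := by
  have hq₀ : 0 < q := zero_lt_one.trans hq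
  rw [radialMass, radialMass, ← integral_const_mul,
    ← integral_sub (hf.integrableOn_mass hq₀) (hg.const_mul _)]
  refine setIntegral_mono_on ((hf.integrableOn_mass hq₀).sub (hg.const_mul _))
    (hw.integrableOn_mass hq₀) measurableSet_Ioi fun r (hr : 0 < r) => ?_
  calc r ^ (N - 1) * f r ^ q - q * (r ^ (N - 1) * (g r * f r ^ (q - 1)))
      = r ^ (N - 1) * (f r ^ q - q * (g r * f r ^ (q - 1))) := by ring
    _ ≤ r ^ (N - 1) * w r ^ q := by
        have := rpow_sub_mul_rpow_le hq (hf.nonneg r) (hw.nonneg r) (hfgw r)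
        gcongr

lemma radialMass_sub_one_le [NeZero N] (hf : IsRadialProfile R f) (hq : 1 < q) (hR : 0 ≤ R) :
    radialMass N (q - 1) f ≤ R ^ N / N + radialMass N q f := by
  have integrable_pow : IntegrableOn (fun r : ℝ => r ^ (N - 1)) (Ioc 0 R) :=
    (continuous_pow _).integrableOn_Ioc
  have hq₀ : 0 < q := zero_lt_one.trans hq
  have mass_int := (hf.integrableOn_mass (N := N) hq₀).mono_set (Ioc_subset_Ioi_self (a := R))
  have hq₁ : 0 < q - 1 := sub_pos.2 hq
  rw [hf.radialMass_eq_setIntegral_Ioc hq₁, hf.radialMass_eq_setIntegral_Ioc hq₀,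
    ← setIntegral_Ioc_pow_sub_one hR, ← integral_add integrable_pow mass_int]
  refine setIntegral_mono_on ((hf.integrableOn_mass hq₁).mono_set Ioc_subset_Ioi_self)
    (integrable_pow.add mass_int) measurableSet_Ioc fun r hr => ?_
  rw [← mul_one_add]
  exact mul_le_mul_of_nonneg_left (rpow_sub_one_le_one_add_rpow (hf.nonneg r) hq.le)
    (pow_nonneg hr.1.le _)

lemma integrableOn_excessMass (hf : IsRadialProfile R f) (hq : 1 < q) (s : ℝ) :
    IntegrableOn (fun r => r ^ (N - 1) * (excess f s r * f r ^ (q - 1))) (Ioi 0) := by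
  refine integrableOn_pow_mul_of_abs_le (C := f 0 ^ q) (R := R) _
    ((hf.excess s).antitone.measurable.mul (hf.antitone.measurable.pow_const _))
    (fun r hr => ?_) (fun r hr => ?_)
  · have := rpow_nonneg (hf.nonneg r) (q - 1)
    rw [abs_of_nonneg (mul_nonneg (excess_nonneg f s r) this)]
    calc excess f s r * f r ^ (q - 1) ≤ f r * f r ^ (q - 1) := by
          gcongr
          exact hf.excess_le s r
      _ = f r ^ q := mul_rpow_sub_one_eq_rpow (hf.nonneg r) hq
      _ ≤ f 0 ^ q := rpow_le_rpow (hf.nonneg r) (hf.antitone hr.1.le) (by linarith)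
  · rw [hf.eq_zero_of_le hr.le, zero_rpow (sub_pos.2 hq).ne', mul_zero]

lemma excessMass_nonneg (hf : IsRadialProfile R f) : 0 ≤ excessMass N q f s :=
  setIntegral_nonneg measurableSet_Ioi fun r (hr : 0 < r) =>
    mul_nonneg (by positivity) (mul_nonneg (excess_nonneg f s r) (rpow_nonneg (hf.nonneg r) _))

lemma excessMass_le_radialMass (hf : IsRadialProfile R f) (hq : 1 < q) :
    excessMass N q f s ≤ radialMass N q f := by
  refine setIntegral_mono_on (hf.integrableOn_excessMass hq s)
    (hf.integrableOn_mass (by linarith)) measurableSet_Ioi fun r (hr : 0 < r) => ?_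
  rw [← mul_rpow_sub_one_eq_rpow (hf.nonneg r) hq]
  have := rpow_nonneg (hf.nonneg r) (q - 1)
  gcongr
  exact hf.excess_le s r

lemma excessMass_eq_sub (hf : IsRadialProfile R f) (hq : 1 < q) : excessMass N q f s =
    (∫ r in Ioc 0 s, r ^ (N - 1) * f r ^ q) -
      f s * ∫ r in Ioc 0 s, r ^ (N - 1) * f r ^ (q - 1) := by
  have mass_int {a : ℝ} (ha : 0 < a) := (hf.integrableOn_mass (N := N) ha).mono_set
    (Ioc_subset_Ioi_self (a := s))
  rw [excessMass, setIntegral_eq_of_subset_of_forall_sdiff_eq_zero (s := Ioc 0 s) measurableSet_Ioi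
    Ioc_subset_Ioi_self, ← integral_const_mul, ← integral_sub (mass_int (by linarith))
    ((mass_int (sub_pos.2 hq)).const_mul _)]
  · refine setIntegral_congr_fun measurableSet_Ioc fun r hr => ?_
    simp only [hf.excess_eq_sub hr.2, ← mul_rpow_sub_one_eq_rpow (hf.nonneg r) hq]
    ring
  · intro r hr
    rw [(hf.excess s).eq_zero_of_le (le_of_not_ge fun h => hr.2 ⟨hr.1, h⟩), zero_mul, mul_zero]

end IsRadialProfile

lemma radialEigenvalue_nonneg : 0 ≤ radialEigenvalue N p q R := by
  refine Real.sInf_nonneg ?_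
  rintro _ ⟨f, hf, -, rfl⟩
  exact div_nonneg radialEnergy_nonneg (rpow_nonneg hf.radialMass_nonneg _)

lemma IsRadialProfile.one_sub_mul_excessMass_le (hf : IsRadialProfile R f)
    (hmass : radialMass N q f = 1) (hq : 1 < q) (ht : 0 ≤ t) (ht₁ : t ≤ 1) :
    1 - q * t * excessMass N q f s ≤ radialMass N q fun r => f r - t * excess f s r := by
  have scaled : ∀ r, r ^ (N - 1) * (t * excess f s r * f r ^ (q - 1)) =
      t * (r ^ (N - 1) * (excess f s r * f r ^ (q - 1))) := fun r => by ring
  have le := hf.radialMass_sub_le (N := N) (g := fun r => t * excess f s r)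
    (hf.sub_mul_excess s ht ht₁) hq
    (by simp only [scaled]; exact (hf.integrableOn_excessMass hq s).const_mul t) fun _ => le_rfl
  simp only [scaled, integral_const_mul] at le
  rwa [hmass, ← mul_assoc] at le

/-- Lowering the part of `f` above `f s` by the factor `1 - t` decreases the energy by roughly
`p t` times the inner energy and the mass by at most `q t` times the excess mass. -/
lemma IsRadialProfile.setIntegral_energy_le (hf : IsRadialProfile R f) (hp : 1 < p) (hpq : p ≤ q)
    (hmass : radialMass N q f = 1) {ε : ℝ}
    (henergy : radialEnergy N p f ≤ radialEigenvalue N p q R + ε) (ht : 0 < t)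
    (hqt : q * t ≤ 1 / 2) (hs : 0 ≤ s) :
    ∫ r in Ioc 0 s, r ^ (N - 1) * |deriv f r| ^ p ≤ (1 + p * t) *
      (radialEigenvalue N p q R * excessMass N q f s / (1 - q * t) + ε / (p * t)) := by
  have hp₀ : 0 < p := zero_lt_one.trans hp
  have hq : 1 < q := hp.trans_le hpq
  have hq₀ : 0 < q := zero_lt_one.trans hq
  have ht₁ : t < 1 := by nlinarith
  have inner_nonneg : 0 ≤ ∫ r in Ioc 0 s, r ^ (N - 1) * |deriv f r| ^ p :=
    setIntegral_nonneg measurableSet_Ioc fun r hr =>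
      mul_nonneg (pow_nonneg hr.1.le _) (rpow_nonneg (abs_nonneg _) p)
  have variational := (hf.sub_mul_excess s ht.le ht₁.le).radialEigenvalue_mul_le (N := N) hp₀ hq₀
  have mass_le := hf.one_sub_mul_excessMass_le (s := s) hmass hq ht.le ht₁.le
  rw [hf.radialEnergy_sub_mul_excess hp₀ hs ht.le ht₁.le] at variational
  have Λ_nonneg := radialEigenvalue_nonneg (N := N) (p := p) (q := q) (R := R)
  have D_nonneg := hf.excessMass_nonneg (N := N) (q := q) (s := s)
  have D_le_one := (hf.excessMass_le_radialMass (s := s) hq).trans_eq hmass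
  set Λ := radialEigenvalue N p q R
  set P := ∫ r in Ioc 0 s, r ^ (N - 1) * |deriv f r| ^ p
  set D := excessMass N q f s
  have pos : 0 < 1 - q * t := by linarith
  have D_le : q * t * D ≤ q * t := mul_le_of_le_one_right (by positivity) D_le_one
  have mass_rpow : 1 - p * t * D / (1 - q * t) ≤
      radialMass N q (fun r => f r - t * excess f s r) ^ (p / q) := by
    calc 1 - p * t * D / (1 - q * t) ≤ 1 - p * t * D / (1 - q * t * D) := by gcongr
      _ = 1 - p / q * (q * t * D / (1 - q * t * D)) := by field_simp
      _ ≤ (1 - q * t * D) ^ (p / q) := one_sub_mul_div_le_rpow (by positivity)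
          ((div_le_one hq₀).2 hpq) (by positivity) (by linarith)
      _ ≤ _ := rpow_le_rpow (by linarith) mass_le (by positivity)
  have key : p * t / (1 + p * t) * P ≤ Λ * (p * t * D / (1 - q * t)) + ε := by
    have := mul_le_mul_of_nonneg_right (mul_div_one_add_mul_le hp ht ht₁) inner_nonneg
    have := mul_le_mul_of_nonneg_left mass_rpow Λ_nonneg
    linarith
  calc P = (1 + p * t) * (p * t / (1 + p * t) * P) / (p * t) := by field_simp
    _ ≤ (1 + p * t) * (Λ * (p * t * D / (1 - q * t)) + ε) / (p * t) := by gcongr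
    _ = (1 + p * t) * (Λ * D / (1 - q * t) + ε / (p * t)) := by field_simp

lemma IsRadialProfile.const_mul (hf : IsRadialProfile R f) {c : ℝ} (hc : 0 ≤ c) :
    IsRadialProfile R fun r => c * f r where
  exists_lipschitzWith :=
    let ⟨_, hK⟩ := hf.exists_lipschitzWith
    ⟨_, (lipschitzWith_smul c).comp hK⟩
  antitone := hf.antitone.const_mul hc
  eq_zero_of_le := fun r h => by rw [hf.eq_zero_of_le h, mul_zero]

lemma IsRadialProfile.radialMass_const_mul (hf : IsRadialProfile R f) {c : ℝ} (hc : 0 ≤ c) :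
    radialMass N q (fun r => c * f r) = c ^ q * radialMass N q f := by
  rw [radialMass, radialMass, ← integral_const_mul]
  congr 1 with r
  rw [mul_rpow hc (hf.nonneg r)]
  ring

lemma radialEnergy_const_mul {c : ℝ} (hc : 0 ≤ c) :
    radialEnergy N p (fun r => c * f r) = c ^ p * radialEnergy N p f := by
  rw [radialEnergy, radialEnergy, ← integral_const_mul]
  congr 1 with r
  rw [deriv_const_mul_field, abs_mul, abs_of_nonneg hc, mul_rpow hc (abs_nonneg _)]
  ring

lemma exists_radialEnergy_le_add (hq : 0 < q) (hR : 0 < R) {ε : ℝ} (hε : 0 < ε) :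
    ∃ f, IsRadialProfile R f ∧ radialMass N q f = 1 ∧
      radialEnergy N p f ≤ radialEigenvalue N p q R + ε := by
  obtain ⟨_, ⟨f, hf, hmass, rfl⟩, hlt⟩ :=
    exists_lt_of_csInf_lt (nonempty_radialEigenvalue_set (N := N) (p := p) hR hq)
      (lt_add_of_pos_right (radialEigenvalue N p q R) hε)
  have hc : 0 ≤ radialMass N q f ^ (-1 / q) := rpow_nonneg hmass.le _
  refine ⟨_, hf.const_mul hc, ?_, ?_⟩
  · rw [hf.radialMass_const_mul hc, ← rpow_mul hmass.le, div_mul_cancel₀ _ hq.ne', rpow_neg_one,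
      inv_mul_cancel₀ hmass.ne']
  · rw [radialEnergy_const_mul hc, ← rpow_mul hmass.le, show -1 / q * p = -(p / q) by ring,
      rpow_neg hmass.le, mul_comm, ← div_eq_mul_inv]
    exact hlt.le

/-- Testing the Euler–Lagrange equation of an exact minimiser with `excess f s` would give the
last inequality as an identity with `η = 0`. -/
lemma exists_nearMinimizer (hp : 1 < p) (hpq : p ≤ q) (hR : 0 < R) {η : ℝ} (hη : 0 < η) :
    ∃ f, IsRadialProfile R f ∧ radialMass N q f = 1 ∧
      radialEnergy N p f ≤ radialEigenvalue N p q R + η ∧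
      ∀ s, 0 ≤ s → ∫ r in Ioc 0 s, r ^ (N - 1) * |deriv f r| ^ p ≤
        radialEigenvalue N p q R * excessMass N q f s + η := by
  have : 0 < p := zero_lt_one.trans hp
  have hq : 1 < q := hp.trans_le hpq
  have hq₀ : 0 < q := zero_lt_one.trans hq
  have Λ_nonneg := radialEigenvalue_nonneg (N := N) (p := p) (q := q) (R := R)
  obtain ⟨t, ht, hqt, hΛt⟩ : ∃ t, 0 < t ∧ q * t ≤ 1 / 2 ∧
      radialEigenvalue N p q R * ((p + q) * t) ≤ η / 4 := by
    set Λ := radialEigenvalue N p q R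
    refine ⟨min (1 / (2 * q)) (η / (4 * (Λ + 1) * (p + q))), by positivity, ?_, ?_⟩
    · calc q * min (1 / (2 * q)) (η / (4 * (Λ + 1) * (p + q))) ≤ q * (1 / (2 * q)) := by
            gcongr
            exact min_le_left _ _
        _ = 1 / 2 := by field_simp
    · calc Λ * ((p + q) * min (1 / (2 * q)) (η / (4 * (Λ + 1) * (p + q))))
          ≤ (Λ + 1) * ((p + q) * (η / (4 * (Λ + 1) * (p + q)))) := by
            gcongr
            · linarith
            · exact min_le_right _ _
        _ = η / 4 := by field_simp
  obtain ⟨f, hf, hmass, henergy⟩ := exists_radialEnergy_le_add (N := N) (p := p) (ε :=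
    min η (η * (p * t) / 4)) hq₀ hR (by positivity)
  refine ⟨f, hf, hmass, henergy.trans (add_le_add_right (min_le_left _ _) _), fun s hs => ?_⟩
  refine (hf.setIntegral_energy_le hp hpq hmass
    (henergy.trans (add_le_add_right (min_le_right _ _) _)) ht hqt hs).trans ?_
  have D_nonneg := hf.excessMass_nonneg (N := N) (q := q) (s := s)
  have D_le_one := (hf.excessMass_le_radialMass (s := s) hq).trans_eq hmass
  set Λ := radialEigenvalue N p q R
  set D := excessMass N q f s
  have hpt : p * t ≤ 1 / 2 := (mul_le_mul_of_nonneg_right hpq ht.le).trans hqt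
  have main_term : (1 + p * t) * (Λ * D / (1 - q * t)) ≤ Λ * D + 2 * (Λ * ((p + q) * t)) := by
    have x_nonneg : 0 ≤ Λ * ((p + q) * t) := by positivity
    have := mul_le_of_le_one_right x_nonneg D_le_one
    rw [← mul_div_assoc, div_le_iff₀ (by linarith)]
    nlinarith
  have error_term : η * (p * t) / 4 / (p * t) = η / 4 := by field_simp
  rw [error_term]
  nlinarith

variable [NeZero N]

lemma radialEigenvalue_lt_radialEigenvalue {r : ℝ} (hp : 1 < p) (hq : 0 < q)
    (hκ : 0 < p / N + p / q - 1) (hr : 0 < r) (hrR : r < R) :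
    radialEigenvalue N p q R < radialEigenvalue N p q r := by
  have hN : (0 : ℝ) < N := Nat.cast_pos.2 (NeZero.pos N)
  exact (lt_mul_of_one_lt_right (radialEigenvalue_pos hp hq hκ (hr.trans hrR))
    (one_lt_rpow ((one_lt_div hr).2 hrR) (by positivity))).trans_le
    (radialEigenvalue_mul_rpow_le (by linarith) hq hr (hr.trans hrR))

lemma IsRadialProfile.one_sub_mul_le_radialMass_excess (hf : IsRadialProfile R f) (hq : 1 < q)
    (hR : 0 ≤ R) (hmass : radialMass N q f = 1) (s : ℝ) :
    1 - f s * (q * (R ^ N / N + 1)) ≤ radialMass N q (excess f s) := by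
  have scaled : ∀ r, r ^ (N - 1) * (f s * f r ^ (q - 1)) =
      f s * (r ^ (N - 1) * f r ^ (q - 1)) := fun r => by ring
  have le := hf.radialMass_sub_le (N := N) (g := fun _ => f s) (hf.excess s) hq
    (by simp only [scaled]; exact (hf.integrableOn_mass (sub_pos.2 hq)).const_mul (f s))
    fun r => le_max_left _ _
  simp only [scaled, integral_const_mul] at le
  have mass_sub_one := hf.radialMass_sub_one_le (N := N) hq hR
  rw [hmass] at le mass_sub_one
  have := mul_le_mul_of_nonneg_left mass_sub_one
    (mul_nonneg (zero_le_one.trans hq.le) (hf.nonneg s))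
  rw [radialMass] at this
  linarith

/-- Otherwise truncating at the small height `f b` would give a competitor on the smaller ball of
radius `b`, whose eigenvalue is larger. -/
lemma exists_le_nearMinimizer {b : ℝ} (hp : 1 < p) (hpq : p ≤ q)
    (hκ : 0 < p / N + p / q - 1) (hb : 0 < b) (hbR : b < R) :
    ∃ m > 0, ∃ η₀ > 0, ∀ f, IsRadialProfile R f → radialMass N q f = 1 →
      radialEnergy N p f ≤ radialEigenvalue N p q R + η₀ → m ≤ f b := by
  have hp₀ : 0 < p := zero_lt_one.trans hp
  have hq : 1 < q := hp.trans_le hpq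
  have hq₀ : 0 < q := zero_lt_one.trans hq
  have gap := sub_pos.2 (radialEigenvalue_lt_radialEigenvalue hp hq₀ hκ hb hbR)
  have Λ_pos := radialEigenvalue_pos hp hq₀ hκ (hb.trans hbR)
  have Λb_pos := radialEigenvalue_pos hp hq₀ hκ hb
  have hR : 0 < R := hb.trans hbR
  set Λ := radialEigenvalue N p q R
  set Λb := radialEigenvalue N p q b
  set C := q * (R ^ N / N + 1)
  have C_pos : 0 < C := by positivity
  refine ⟨(Λb - Λ) / (2 * Λb * C), by positivity, (Λb - Λ) / 2, by positivity,
    fun f hf hmass henergy => ?_⟩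
  have variational := (hf.excess b).radialEigenvalue_mul_le (N := N) hp₀ hq₀
  have energy_le := hf.radialEnergy_excess_le (N := N) hp₀ b
  have mass_ge := hf.one_sub_mul_le_radialMass_excess hq hR.le hmass b
  rw [div_le_iff₀ (by positivity)]
  rcases le_or_gt 1 (f b * C) with large | small
  · nlinarith
  · have fb_nonneg : 0 ≤ f b * C := mul_nonneg (hf.nonneg b) C_pos.le
    have mass_rpow : 1 - f b * C ≤ radialMass N q (excess f b) ^ (p / q) :=
      (self_le_rpow_of_le_one (by linarith) (by linarith) ((div_le_one hq₀).2 hpq)).trans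
        (rpow_le_rpow (by linarith) mass_ge (by positivity))
    have := mul_le_mul_of_nonneg_left mass_rpow Λb_pos.le
    linarith

end NearMinimizers

section PolarCoordinates

open Module

variable {E F : Type*} [NormedAddCommGroup E] [NormedSpace ℝ E] [FiniteDimensional ℝ E]
  [MeasurableSpace E] [BorelSpace E] (μ : Measure E) [μ.IsAddHaarMeasure]
  [NormedAddCommGroup F] [NormedSpace ℝ F] {f : E → F}

lemma integral_volumeIoiPow (n : ℕ) (g : ℝ → F) :
    ∫ r, g r ∂Measure.volumeIoiPow n = ∫ r in Ioi (0 : ℝ), r ^ n • g r := by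
  simp only [Measure.volumeIoiPow, ENNReal.ofReal]
  rw [integral_withDensity_eq_integral_smul (measurable_subtype_coe.pow_const _).real_toNNReal,
    integral_subtype_comap measurableSet_Ioi fun r : ℝ => Real.toNNReal (r ^ n) • g r]
  refine setIntegral_congr_fun measurableSet_Ioi fun r hr => ?_
  simp only [NNReal.smul_def, Real.coe_toNNReal _ (pow_nonneg (le_of_lt hr) n)]

lemma homeomorphUnitSphereProd_snd_smul_fst {E : Type*} [NormedAddCommGroup E] [NormedSpace ℝ E]
    (x : ({0}ᶜ : Set E)) :
    ((homeomorphUnitSphereProd E x).2 : ℝ) • ((homeomorphUnitSphereProd E x).1 : E) = x := by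
  simp [smul_smul, norm_ne_zero_iff.2 x.2]

lemma integrable_smul_toSphere_prod_volumeIoiPow {F : Type*} [NormedAddCommGroup F] {f : E → F}
    (hf : Integrable f μ) :
    Integrable (fun z : sphere (0 : E) 1 × Ioi (0 : ℝ) => f ((z.2 : ℝ) • (z.1 : E)))
      (μ.toSphere.prod (.volumeIoiPow (finrank ℝ E - 1))) := by
  rw [← μ.measurePreserving_homeomorphUnitSphereProd.integrable_comp_emb
    (Homeomorph.measurableEmbedding _)]
  simp only [Function.comp_def, homeomorphUnitSphereProd_snd_smul_fst]
  exact (integrableOn_iff_comap_subtypeVal (measurableSet_singleton 0).compl).1 hf.integrableOn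

lemma integrable_setIntegral_Ioi_smul (hf : Integrable f μ) :
    Integrable (fun ω : sphere (0 : E) 1 =>
      ∫ r in Ioi (0 : ℝ), r ^ (finrank ℝ E - 1) • f (r • (ω : E))) μ.toSphere := by
  simp only [← integral_volumeIoiPow]
  exact (integrable_smul_toSphere_prod_volumeIoiPow μ hf).integral_prod_left

lemma integral_eq_integral_toSphere [Nontrivial E] (hf : Integrable f μ) :
    ∫ x, f x ∂μ = ∫ ω : sphere (0 : E) 1,
      (∫ r in Ioi (0 : ℝ), r ^ (finrank ℝ E - 1) • f (r • (ω : E))) ∂μ.toSphere := by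
  simp only [← integral_volumeIoiPow]
  rw [← integral_prod _ (integrable_smul_toSphere_prod_volumeIoiPow μ hf),
    ← μ.measurePreserving_homeomorphUnitSphereProd.integral_comp
      (Homeomorph.measurableEmbedding _)]
  simp only [homeomorphUnitSphereProd_snd_smul_fst]
  rw [integral_subtype_comap (measurableSet_singleton (0 : E)).compl f, restrict_compl_singleton]

end PolarCoordinates

section RayLength

open Module

/-- The distance from `x` to the boundary of `Ω` in the direction `v`, when `Ω` is an open bounded
convex set, `x` lies in its closure and `v` is a unit vector. It is `0` if the ray does not meet
`Ω`. -/
noncomputable def rayLength {E : Type*} [AddCommGroup E] [Module ℝ E] (Ω : Set E) (x v : E) : ℝ :=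
  sSup {r : ℝ | 0 < r ∧ x + r • v ∈ Ω}

lemma rayLength_nonneg {E : Type*} [AddCommGroup E] [Module ℝ E] (Ω : Set E) (x v : E) :
    0 ≤ rayLength Ω x v :=
  Real.sSup_nonneg fun _ hr => hr.1.le

lemma add_smul_mem_of_le {E : Type*} [AddCommGroup E] [Module ℝ E] [TopologicalSpace E]
    [IsTopologicalAddGroup E] [ContinuousConstSMul ℝ E] {Ω : Set E} (hΩo : IsOpen Ω)
    (hΩc : Convex ℝ Ω) {x v : E} (hx : x ∈ closure Ω) {r s : ℝ} (hr : 0 < r) (hrs : r ≤ s)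
    (hs : x + s • v ∈ Ω) : x + r • v ∈ Ω := by
  have hs₀ : 0 < s := hr.trans_le hrs
  have combo_mem := hΩc.combo_closure_interior_mem_interior (a := 1 - r / s) (b := r / s) hx
    (by rwa [hΩo.interior_eq]) (sub_nonneg.2 ((div_le_one hs₀).2 hrs)) (div_pos hr hs₀)
    (sub_add_cancel _ _)
  rw [hΩo.interior_eq] at combo_mem
  convert combo_mem using 1
  rw [smul_add, smul_smul, div_mul_cancel₀ _ hs₀.ne', sub_smul, one_smul]
  abel

section Normed

variable {E : Type*} [NormedAddCommGroup E] [NormedSpace ℝ E] {Ω : Set E} {x v : E} {r : ℝ}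

lemma bddAbove_setOf_add_smul_mem (hΩ : Bornology.IsBounded Ω) (x : E) (hv : ‖v‖ = 1) :
    BddAbove {r : ℝ | 0 < r ∧ x + r • v ∈ Ω} := by
  obtain ⟨B, hB⟩ := hΩ.subset_closedBall x
  refine ⟨B, fun r ⟨hr, hmem⟩ => ?_⟩
  simpa [norm_smul, hv, abs_of_pos hr] using hB hmem

lemma le_rayLength (hΩ : Bornology.IsBounded Ω) (hv : ‖v‖ = 1) (hr : 0 < r)
    (h : x + r • v ∈ Ω) : r ≤ rayLength Ω x v :=
  le_csSup (bddAbove_setOf_add_smul_mem hΩ x hv) ⟨hr, h⟩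

lemma add_smul_mem_of_lt_rayLength (hΩo : IsOpen Ω) (hΩc : Convex ℝ Ω) (hx : x ∈ closure Ω)
    (hr : 0 < r) (h : r < rayLength Ω x v) : x + r • v ∈ Ω := by
  have nonempty : {r : ℝ | 0 < r ∧ x + r • v ∈ Ω}.Nonempty := by
    by_contra! empty
    rw [rayLength, empty, Real.sSup_empty] at h
    exact lt_asymm hr h
  obtain ⟨s, ⟨-, hs⟩, hrs⟩ := exists_lt_of_lt_csSup nonempty h
  exact add_smul_mem_of_le hΩo hΩc hx hr hrs.le hs

lemma rayLength_le (hΩo : IsOpen Ω) (hΩc : Convex ℝ Ω) (hx : x ∈ closure Ω)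
    (hr : 0 < r) (h : x + r • v ∉ Ω) : rayLength Ω x v ≤ r := by
  by_contra! lt
  exact h (add_smul_mem_of_lt_rayLength hΩo hΩc hx hr lt)

lemma setIntegral_Ioi_indicator_add_smul (hΩo : IsOpen Ω) (hΩb : Bornology.IsBounded Ω)
    (hΩc : Convex ℝ Ω) (hx : x ∈ closure Ω) (hv : ‖v‖ = 1) (g : ℝ → ℝ) :
    ∫ r in Ioi 0, ((x + · • v) ⁻¹' Ω).indicator g r = ∫ r in Ioc 0 (rayLength Ω x v), g r := by
  set T : Set ℝ := (x + · • v) ⁻¹' Ω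
  have mem_of_lt : ∀ r ∈ Ioo 0 (rayLength Ω x v), r ∈ T := fun r hr =>
    add_smul_mem_of_lt_rayLength hΩo hΩc hx hr.1 hr.2
  have notMem_of_gt : ∀ r ∈ Ioi 0 \ Ioc 0 (rayLength Ω x v), r ∉ T := fun r hr hmem =>
    hr.2 ⟨hr.1, le_rayLength hΩb hv hr.1 hmem⟩
  rw [setIntegral_eq_of_subset_of_forall_sdiff_eq_zero measurableSet_Ioi (fun _ hr => hr.1)
    fun r hr => indicator_of_notMem (notMem_of_gt r hr) g,
    integral_Ioc_eq_integral_Ioo, integral_Ioc_eq_integral_Ioo]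
  exact setIntegral_congr_fun measurableSet_Ioo fun r hr => indicator_of_mem (mem_of_lt r hr) g

variable [FiniteDimensional ℝ E] [Nontrivial E] [MeasurableSpace E] [BorelSpace E]
  (μ : Measure E) [μ.IsAddHaarMeasure]

lemma setIntegral_fun_norm_sub_eq_integral_toSphere (hΩo : IsOpen Ω)
    (hΩb : Bornology.IsBounded Ω) (hΩc : Convex ℝ Ω) (hx : x ∈ closure Ω) {h : ℝ → ℝ}
    (hint : IntegrableOn (fun y => h ‖y - x‖) Ω μ) :
    Integrable (fun ω : sphere (0 : E) 1 =>
      ∫ r in Ioc 0 (rayLength Ω x ω), r ^ (finrank ℝ E - 1) * h r) μ.toSphere ∧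
    ∫ y in Ω, h ‖y - x‖ ∂μ = ∫ ω : sphere (0 : E) 1,
      (∫ r in Ioc 0 (rayLength Ω x ω), r ^ (finrank ℝ E - 1) * h r) ∂μ.toSphere := by
  set f : E → ℝ := fun y => Ω.indicator (fun z => h ‖z - x‖) (x + y)
  have f_int : Integrable f μ := (hint.integrable_indicator hΩo.measurableSet).comp_add_left x
  have along_ray (ω : sphere (0 : E) 1) :
      ∫ r in Ioi (0 : ℝ), r ^ (finrank ℝ E - 1) • f (r • (ω : E)) =
        ∫ r in Ioc 0 (rayLength Ω x ω), r ^ (finrank ℝ E - 1) * h r := by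
    rw [← setIntegral_Ioi_indicator_add_smul hΩo hΩb hΩc hx (norm_eq_of_mem_sphere ω)]
    refine setIntegral_congr_fun measurableSet_Ioi fun r hr => ?_
    by_cases hmem : x + r • (ω : E) ∈ Ω <;>
      simp [f, indicator, hmem, norm_smul, abs_of_pos (mem_Ioi.1 hr)]
  simp only [← along_ray]
  refine ⟨integrable_setIntegral_Ioi_smul μ f_int, ?_⟩
  rw [← integral_eq_integral_toSphere μ f_int, ← integral_indicator hΩo.measurableSet,
    integral_add_left_eq_self (Ω.indicator fun z => h ‖z - x‖) x]

lemma setIntegral_fun_norm_sub_le (hΩo : IsOpen Ω) (hΩb : Bornology.IsBounded Ω)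
    (hΩc : Convex ℝ Ω) (hx : x ∈ closure Ω) {h : ℝ → ℝ}
    (hint : IntegrableOn (fun y => h ‖y - x‖) Ω μ) {η γ : ℝ}
    (hη : ∀ s, 0 ≤ s → ∫ r in Ioc 0 s, r ^ (finrank ℝ E - 1) * h r ≤ η) {S : Set ℝ}
    (hγ : ∀ s ∈ S, ∫ r in Ioc 0 s, r ^ (finrank ℝ E - 1) * h r ≤ η - γ)
    {W : Set (sphere (0 : E) 1)} (hW : MeasurableSet W) (hWS : ∀ ω ∈ W, rayLength Ω x ω ∈ S) :
    ∫ y in Ω, h ‖y - x‖ ∂μ ≤ η * μ.toSphere.real univ - γ * μ.toSphere.real W := by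
  obtain ⟨inner_int, polar⟩ :=
    setIntegral_fun_norm_sub_eq_integral_toSphere μ hΩo hΩb hΩc hx hint
  have γ_int : Integrable (W.indicator fun _ => γ) μ.toSphere :=
    (integrable_const γ).indicator hW
  calc ∫ y in Ω, h ‖y - x‖ ∂μ
      ≤ ∫ ω, (η - W.indicator (fun _ => γ) ω) ∂μ.toSphere := by
        rw [polar]
        refine integral_mono inner_int ((integrable_const η).sub γ_int) fun ω => ?_
        by_cases hω : ω ∈ W
        · simpa only [indicator_of_mem hω] using hγ _ (hWS ω hω)
        · simpa only [indicator_of_notMem hω, sub_zero] using hη _ (rayLength_nonneg Ω x ω)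
    _ = η * μ.toSphere.real univ - γ * μ.toSphere.real W := by
        rw [integral_sub (integrable_const η) γ_int, integral_const, integral_indicator_const _ hW]
        simp only [smul_eq_mul, mul_comm]

lemma exists_toSphere_pos_of_mem_closure (hΩo : IsOpen Ω) (hΩc : Convex ℝ Ω) (hne : Ω.Nonempty)
    (hx : x ∈ closure Ω) {b : ℝ} (hb : 0 < b) :
    ∃ a, 0 < a ∧ a ≤ b ∧ 0 < μ.toSphere.real {ω | x + a • (ω : E) ∈ Ω} := by
  obtain ⟨z, hz, hzx⟩ : ∃ z ∈ Ω, z ≠ x := by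
    by_contra! eq
    have := hΩo.measure_pos μ hne
    rw [eq_singleton_iff_nonempty_unique_mem.2 ⟨hne, eq⟩, measure_singleton] at this
    exact this.false
  have hzx' : 0 < ‖z - x‖ := norm_sub_pos_iff.2 hzx
  have ha : 0 < min b ‖z - x‖ := lt_min hb hzx'
  have isOpen : IsOpen {ω : sphere (0 : E) 1 | x + min b ‖z - x‖ • (ω : E) ∈ Ω} :=
    hΩo.preimage (by fun_prop)
  refine ⟨min b ‖z - x‖, ha, min_le_left _ _,
    ENNReal.toReal_pos (isOpen.measure_pos _ ⟨⟨‖z - x‖⁻¹ • (z - x), ?_⟩, ?_⟩).ne'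
      (measure_ne_top _ _)⟩
  · simp [norm_smul, hzx'.ne']
  · refine add_smul_mem_of_le hΩo hΩc hx ha (min_le_right _ _) ?_
    rwa [smul_inv_smul₀ hzx'.ne', add_sub_cancel]

end Normed

lemma setIntegral_sub_add_setIntegral_sub_le {E : Type*} [NormedAddCommGroup E]
    [InnerProductSpace ℝ E] [MeasurableSpace E] [BorelSpace E] {μ : Measure E}
    [μ.IsAddRightInvariant] [NullSingletonClass μ] {Ω : Set E} (hΩ : MeasurableSet Ω) {x₀ x₁ : E}
    (h₀ : ∀ x ∈ Ω, ‖x - x₀‖ ≤ ‖x₁ - x₀‖) (h₁ : ∀ x ∈ Ω, ‖x - x₁‖ ≤ ‖x₁ - x₀‖) {g : E → ℝ}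
    (hg : Integrable g μ) (hg₀ : 0 ≤ g) :
    (∫ x in Ω, g (x - x₀) ∂μ) + ∫ x in Ω, g (x - x₁) ∂μ ≤ ∫ x, g x ∂μ := by
  have translate (y : E) : ∫ x in Ω, g (x - y) ∂μ = ∫ x in (· + y) ⁻¹' Ω, g x ∂μ := by
    simpa using ((measurePreserving_add_right μ y).setIntegral_preimage_emb
      (measurableEmbedding_addRight y) (fun x => g (x - y)) Ω).symm
  have disjoint : AEDisjoint μ ((· + x₀) ⁻¹' Ω) ((· + x₁) ⁻¹' Ω) := by
    refine measure_mono_null (t := {0}) ?_ (measure_singleton _)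
    rintro y ⟨hy₀, hy₁⟩
    have sub_le : ‖y - (x₁ - x₀)‖ ≤ ‖x₁ - x₀‖ := by
      rw [show y - (x₁ - x₀) = y + x₀ - x₁ by abel]
      exact h₁ _ hy₀
    have add_le : ‖y + (x₁ - x₀)‖ ≤ ‖x₁ - x₀‖ := by
      rw [show y + (x₁ - x₀) = y + x₁ - x₀ by abel]
      exact h₀ _ hy₁
    have parallelogram := parallelogram_law_with_norm ℝ y (x₁ - x₀)
    rw [mem_singleton_iff, ← norm_eq_zero]
    nlinarith [norm_nonneg y, norm_nonneg (y - (x₁ - x₀)), norm_nonneg (y + (x₁ - x₀))]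
  rw [translate, translate, ← setIntegral_union₀ disjoint
    (hΩ.preimage (measurable_add_const x₁)).nullMeasurableSet hg.integrableOn hg.integrableOn]
  exact setIntegral_le_integral hg (.of_forall hg₀)

end RayLength

section TwoBump

/-- Two disjoint radial bumps of opposite signs, centred at `x₀` and `x₁` and built from the same
profile `f`; the weight `c` is later chosen to meet the Neumann constraint. -/
noncomputable def twoBump {E : Type*} [NormedAddCommGroup E] (f : ℝ → ℝ) (c : ℝ) (x₀ x₁ x : E) :
    ℝ :=
  f ‖x - x₀‖ - c * f ‖x - x₁‖

variable {R : ℝ} {f : ℝ → ℝ}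

namespace IsRadialProfile

section Integrable

variable {E : Type*} [NormedAddCommGroup E] [NormedSpace ℝ E] [FiniteDimensional ℝ E]
  [Nontrivial E] [MeasurableSpace E] [BorelSpace E] (μ : Measure E) [μ.IsAddHaarMeasure]

lemma integrable_rpow_norm_sub (hf : IsRadialProfile R f) {s : ℝ} (hs : 0 < s) (y : E) :
    Integrable (fun x => f ‖x - y‖ ^ s) μ :=
  ((integrable_fun_norm_addHaar μ).2 (hf.integrableOn_mass hs)).comp_sub_right y

lemma integrable_abs_deriv_rpow_norm_sub (hf : IsRadialProfile R f) {s : ℝ} (hs : 0 < s) (y : E) :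
    Integrable (fun x => |deriv f ‖x - y‖| ^ s) μ :=
  ((integrable_fun_norm_addHaar μ).2 (hf.integrableOn_energy hs)).comp_sub_right y

end Integrable

section Normed

variable {E : Type*} [NormedAddCommGroup E] {x₀ x₁ : E} {c s : ℝ}

lemma eq_zero_or_eq_zero (hf : IsRadialProfile R f) (hR : 2 * R ≤ ‖x₁ - x₀‖) (x : E) :
    f ‖x - x₀‖ = 0 ∨ f ‖x - x₁‖ = 0 := by
  have triangle : ‖x₁ - x₀‖ ≤ ‖x - x₀‖ + ‖x - x₁‖ := by
    simpa using norm_sub_le (x - x₀) (x - x₁)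
  rcases le_or_gt R ‖x - x₀‖ with far | near
  · exact Or.inl (hf.eq_zero_of_le far)
  · exact Or.inr (hf.eq_zero_of_le (by linarith))

lemma abs_twoBump_rpow (hf : IsRadialProfile R f) (hR : 2 * R ≤ ‖x₁ - x₀‖) (hc : 0 ≤ c)
    (hs : 0 < s) (x : E) :
    |twoBump f c x₀ x₁ x| ^ s = f ‖x - x₀‖ ^ s + c ^ s * f ‖x - x₁‖ ^ s := by
  have zero_rpow := zero_rpow hs.ne'
  rcases hf.eq_zero_or_eq_zero hR x with h | h
  · rw [twoBump, h, zero_sub, abs_neg, abs_of_nonneg (mul_nonneg hc (hf.nonneg _)),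
      mul_rpow hc (hf.nonneg _), zero_rpow, zero_add]
  · rw [twoBump, h, mul_zero, sub_zero, abs_of_nonneg (hf.nonneg _), zero_rpow, mul_zero, add_zero]

lemma abs_twoBump_rpow_sub_two_mul (hf : IsRadialProfile R f) (hR : 2 * R ≤ ‖x₁ - x₀‖)
    (hc : 0 ≤ c) {q : ℝ} (hq : 1 < q) (x : E) :
    |twoBump f c x₀ x₁ x| ^ (q - 2) * twoBump f c x₀ x₁ x =
      f ‖x - x₀‖ ^ (q - 1) - c ^ (q - 1) * f ‖x - x₁‖ ^ (q - 1) := by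
  have hq₁ : 0 < q - 1 := sub_pos.2 hq
  have zero_rpow := zero_rpow hq₁.ne'
  have rpow_mul_self {y : ℝ} (hy : 0 ≤ y) : y ^ (q - 2) * y = y ^ (q - 1) := by
    rw [show q - 1 = q - 2 + 1 by ring, rpow_add_one' hy (by linarith)]
  rcases hf.eq_zero_or_eq_zero hR x with h | h
  · have hcf : 0 ≤ c * f ‖x - x₁‖ := mul_nonneg hc (hf.nonneg _)
    rw [twoBump, h, zero_sub, abs_neg, abs_of_nonneg hcf, mul_neg, rpow_mul_self hcf,
      mul_rpow hc (hf.nonneg _), zero_rpow, zero_sub]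
  · rw [twoBump, h, mul_zero, sub_zero, abs_of_nonneg (hf.nonneg _), rpow_mul_self (hf.nonneg _),
      zero_rpow, mul_zero, sub_zero]

lemma exists_lipschitzWith_twoBump (hf : IsRadialProfile R f) (c : ℝ) (x₀ x₁ : E) :
    ∃ K, LipschitzWith K (twoBump f c x₀ x₁) := by
  obtain ⟨K, hK⟩ := hf.exists_lipschitzWith
  have norm_sub (y : E) : LipschitzWith 1 fun x : E => ‖x - y‖ := by
    simpa only [dist_eq_norm] using LipschitzWith.dist_left y
  exact ⟨_, (hK.comp (norm_sub x₀)).sub ((lipschitzWith_smul c).comp (hK.comp (norm_sub x₁)))⟩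

end Normed

end IsRadialProfile

section Gradient

variable {E : Type*} [NormedAddCommGroup E] [InnerProductSpace ℝ E] {x₀ x₁ x y : E} {c : ℝ}

lemma norm_fderiv_comp_norm_sub_le {f : ℝ → ℝ} (hxy : x ≠ y)
    (hf : DifferentiableAt ℝ f ‖x - y‖) :
    ‖fderiv ℝ (fun z => f ‖z - y‖) x‖ ≤ |deriv f ‖x - y‖| := by
  have norm_diff : DifferentiableAt ℝ (fun z : E => ‖z - y‖) x :=
    (differentiableAt_id.sub_const y).norm ℝ (sub_ne_zero.2 hxy)
  have norm_lip : LipschitzWith 1 fun z : E => ‖z - y‖ := by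
    simpa only [dist_eq_norm] using LipschitzWith.dist_left y
  have chain := (hf.hasDerivAt.comp_hasFDerivAt x norm_diff.hasFDerivAt).fderiv
  rw [Function.comp_def] at chain
  rw [chain, norm_smul, Real.norm_eq_abs]
  exact mul_le_of_le_one_right (abs_nonneg _)
    (by simpa using norm_fderiv_le_of_lipschitz ℝ norm_lip (x₀ := x))

lemma IsRadialProfile.norm_fderiv_twoBump_le (hf : IsRadialProfile R f)
    (hR : 2 * R ≤ ‖x₁ - x₀‖) (hc : 0 ≤ c) (hx₀ : x ≠ x₀) (hx₁ : x ≠ x₁)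
    (hdiff₀ : DifferentiableAt ℝ f ‖x - x₀‖) (hdiff₁ : DifferentiableAt ℝ f ‖x - x₁‖)
    (hxR : ‖x - x₀‖ ≠ R) :
    ‖fderiv ℝ (twoBump f c x₀ x₁) x‖ ≤ |deriv f ‖x - x₀‖| ∨
      ‖fderiv ℝ (twoBump f c x₀ x₁) x‖ ≤ c * |deriv f ‖x - x₁‖| := by
  have eventually_zero {y : E} (hy : R < ‖x - y‖) : ∀ᶠ z in nhds x, f ‖z - y‖ = 0 := by
    have : ContinuousAt (fun z => ‖z - y‖) x := by fun_prop
    filter_upwards [this.eventually (lt_mem_nhds hy)] with z hz using hf.eq_zero_of_le hz.le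
  rcases lt_or_gt_of_ne hxR with near | far
  · have triangle : ‖x₁ - x₀‖ ≤ ‖x - x₀‖ + ‖x - x₁‖ := by
      simpa using norm_sub_le (x - x₀) (x - x₁)
    have eq : twoBump f c x₀ x₁ =ᶠ[nhds x] fun z => f ‖z - x₀‖ := by
      filter_upwards [eventually_zero (y := x₁) (by linarith)] with z hz
      rw [twoBump, hz, mul_zero, sub_zero]
    rw [eq.fderiv_eq]
    exact Or.inl (norm_fderiv_comp_norm_sub_le hx₀ hdiff₀)
  · have eq : twoBump f c x₀ x₁ =ᶠ[nhds x] (-c) • fun z => f ‖z - x₁‖ := by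
      filter_upwards [eventually_zero far] with z hz
      rw [twoBump, hz, zero_sub, Pi.smul_apply, smul_eq_mul, neg_mul]
    rw [eq.fderiv_eq, fderiv_const_smul_field, Pi.smul_apply, norm_smul, norm_neg,
      Real.norm_of_nonneg hc]
    exact Or.inr (mul_le_mul_of_nonneg_left (norm_fderiv_comp_norm_sub_le hx₁ hdiff₁) hc)

variable [FiniteDimensional ℝ E] [Nontrivial E] [MeasurableSpace E] [BorelSpace E]
  (μ : Measure E) [μ.IsAddHaarMeasure]

lemma ae_norm_sub_of_ae {P : ℝ → Prop} (h : ∀ᵐ r, P r) (y : E) : ∀ᵐ x ∂μ, P ‖x - y‖ :=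
  (measurePreserving_sub_right μ y).quasiMeasurePreserving.ae (ae_norm_of_ae μ h)

lemma IsRadialProfile.ae_norm_fderiv_twoBump_rpow_le (hf : IsRadialProfile R f)
    (hR : 2 * R ≤ ‖x₁ - x₀‖) (hc : 0 ≤ c) {p : ℝ} (hp : 0 ≤ p) :
    ∀ᵐ x ∂μ, ‖fderiv ℝ (twoBump f c x₀ x₁) x‖ ^ p ≤
      |deriv f ‖x - x₀‖| ^ p + c ^ p * |deriv f ‖x - x₁‖| ^ p := by
  obtain ⟨K, hK⟩ := hf.exists_lipschitzWith
  have ae_diff : ∀ᵐ r : ℝ, DifferentiableAt ℝ f r ∧ r ≠ R ∧ r ≠ 0 := by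
    filter_upwards [hK.ae_differentiableAt_real, Measure.ae_ne volume R, Measure.ae_ne volume 0]
      with r hdiff hne hne₀ using ⟨hdiff, hne, hne₀⟩
  filter_upwards [ae_norm_sub_of_ae μ ae_diff x₀, ae_norm_sub_of_ae μ ae_diff x₁]
    with x ⟨hdiff₀, hxR, hx₀⟩ ⟨hdiff₁, _, hx₁⟩
  rcases hf.norm_fderiv_twoBump_le hR hc (sub_ne_zero.1 (norm_ne_zero_iff.1 hx₀))
    (sub_ne_zero.1 (norm_ne_zero_iff.1 hx₁)) hdiff₀ hdiff₁ hxR with le | le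
  · exact (rpow_le_rpow (norm_nonneg _) le hp).trans (le_add_of_nonneg_right (by positivity))
  · rw [← mul_rpow hc (abs_nonneg _)]
    exact (rpow_le_rpow (norm_nonneg _) le hp).trans (le_add_of_nonneg_left (by positivity))

end Gradient

section RayleighQuotient

variable {N : ℕ} {p q c : ℝ} {Ω : Set (EuclideanSpace ℝ (Fin N))}
  {x₀ x₁ : EuclideanSpace ℝ (Fin N)}

lemma muPQ_le_rayleighQuot {v : EuclideanSpace ℝ (Fin N) → ℝ} {K : NNReal}
    (hK : LipschitzOnWith K v (closure Ω)) (hv : ∃ x ∈ Ω, v x ≠ 0)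
    (hmean : ∫ x in Ω, |v x| ^ (q - 2) * v x = 0) : muPQ p q Ω ≤ rayleighQuot p q Ω v := by
  refine csInf_le ⟨0, ?_⟩ ⟨v, K, hK, hv, hmean, rfl⟩
  rintro _ ⟨v, -, -, -, -, rfl⟩
  exact div_nonneg (integral_nonneg fun x => by positivity)
    (rpow_nonneg (integral_nonneg fun x => by positivity) _)

variable [NeZero N]

lemma IsRadialProfile.setIntegral_abs_twoBump_rpow (hf : IsRadialProfile R f)
    (hR : 2 * R ≤ ‖x₁ - x₀‖) (hc : 0 ≤ c) (hq : 0 < q) :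
    ∫ x in Ω, |twoBump f c x₀ x₁ x| ^ q =
      (∫ x in Ω, f ‖x - x₀‖ ^ q) + c ^ q * ∫ x in Ω, f ‖x - x₁‖ ^ q := by
  simp only [hf.abs_twoBump_rpow hR hc hq]
  rw [integral_add (hf.integrable_rpow_norm_sub volume hq x₀).restrict
    ((hf.integrable_rpow_norm_sub volume hq x₁).restrict.const_mul _), integral_const_mul]

lemma IsRadialProfile.setIntegral_abs_twoBump_rpow_sub_two_mul (hf : IsRadialProfile R f)
    (hR : 2 * R ≤ ‖x₁ - x₀‖) (hc : 0 ≤ c) (hq : 1 < q) :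
    ∫ x in Ω, |twoBump f c x₀ x₁ x| ^ (q - 2) * twoBump f c x₀ x₁ x =
      (∫ x in Ω, f ‖x - x₀‖ ^ (q - 1)) - c ^ (q - 1) * ∫ x in Ω, f ‖x - x₁‖ ^ (q - 1) := by
  have hq₁ : 0 < q - 1 := sub_pos.2 hq
  simp only [hf.abs_twoBump_rpow_sub_two_mul hR hc hq]
  rw [integral_sub (hf.integrable_rpow_norm_sub volume hq₁ x₀).restrict
    ((hf.integrable_rpow_norm_sub volume hq₁ x₁).restrict.const_mul _), integral_const_mul]

lemma IsRadialProfile.setIntegral_norm_fderiv_twoBump_rpow_le (hf : IsRadialProfile R f)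
    (hR : 2 * R ≤ ‖x₁ - x₀‖) (hc : 0 ≤ c) (hp : 0 < p) :
    ∫ x in Ω, ‖fderiv ℝ (twoBump f c x₀ x₁) x‖ ^ p ≤
      (∫ x in Ω, |deriv f ‖x - x₀‖| ^ p) + c ^ p * ∫ x in Ω, |deriv f ‖x - x₁‖| ^ p := by
  have int₀ := (hf.integrable_abs_deriv_rpow_norm_sub volume hp x₀).restrict (s := Ω)
  have int₁ := (hf.integrable_abs_deriv_rpow_norm_sub volume hp x₁).restrict (s := Ω)
  rw [← integral_const_mul, ← integral_add int₀ (int₁.const_mul _)]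
  exact integral_mono_of_nonneg (.of_forall fun x => by positivity)
    (int₀.add (int₁.const_mul _))
    (ae_restrict_of_ae (hf.ae_norm_fderiv_twoBump_rpow_le volume hR hc hp.le))

lemma IsRadialProfile.muPQ_le_twoBump (hf : IsRadialProfile R f) (hR : 2 * R ≤ ‖x₁ - x₀‖)
    (hp : 0 < p) (hq : 1 < q) (hc : 0 ≤ c)
    (hmean : c ^ (q - 1) * ∫ x in Ω, f ‖x - x₁‖ ^ (q - 1) = ∫ x in Ω, f ‖x - x₀‖ ^ (q - 1))
    (hpos : 0 < ∫ x in Ω, f ‖x - x₀‖ ^ q) :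
    muPQ p q Ω ≤ ((∫ x in Ω, |deriv f ‖x - x₀‖| ^ p) +
        c ^ p * ∫ x in Ω, |deriv f ‖x - x₁‖| ^ p) /
      ((∫ x in Ω, f ‖x - x₀‖ ^ q) + c ^ q * ∫ x in Ω, f ‖x - x₁‖ ^ q) ^ (p / q) := by
  have hq₀ : 0 < q := zero_lt_one.trans hq
  obtain ⟨K, hK⟩ := hf.exists_lipschitzWith_twoBump c x₀ x₁
  have mass_nonneg (y) : 0 ≤ ∫ x in Ω, f ‖x - y‖ ^ q :=
    integral_nonneg fun x => rpow_nonneg (hf.nonneg _) _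
  have mass := hf.setIntegral_abs_twoBump_rpow (Ω := Ω) hR hc hq₀
  refine (muPQ_le_rayleighQuot hK.lipschitzOnWith ?_ ?_).trans ?_
  · by_contra! zero
    have : ∫ x in Ω, |twoBump f c x₀ x₁ x| ^ q = 0 :=
      setIntegral_eq_zero_of_forall_eq_zero fun x hx => by rw [zero x hx, abs_zero,
        zero_rpow hq₀.ne']
    have := mul_nonneg (rpow_nonneg hc q) (mass_nonneg x₁)
    linarith
  · rw [hf.setIntegral_abs_twoBump_rpow_sub_two_mul hR hc hq, hmean, sub_self]
  · rw [rayleighQuot, mass]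
    have := mul_nonneg (rpow_nonneg hc q) (mass_nonneg x₁)
    gcongr
    exact hf.setIntegral_norm_fderiv_twoBump_rpow_le hR hc hp

end RayleighQuotient

end TwoBump

section TwoBumpEstimates

variable {N : ℕ} [NeZero N] {p q R a b η Λ s : ℝ} {f : ℝ → ℝ}
  {Ω : Set (EuclideanSpace ℝ (Fin N))} {x x₀ x₁ : EuclideanSpace ℝ (Fin N)}
  {W : Set (sphere (0 : EuclideanSpace ℝ (Fin N)) 1)}

namespace IsRadialProfile

lemma setIntegral_rpow_norm_sub_le (hf : IsRadialProfile R f) (hs : 0 < s)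
    (x : EuclideanSpace ℝ (Fin N)) :
    ∫ y in Ω, f ‖y - x‖ ^ s ≤ sphereArea N * radialMass N s f := by
  rw [radialMass, ← integral_fun_norm_eq_sphereArea_mul fun r => f r ^ s,
    ← integral_sub_right_eq_self (fun y : EuclideanSpace ℝ (Fin N) => f ‖y‖ ^ s) x]
  exact setIntegral_le_integral (hf.integrable_rpow_norm_sub volume hs x)
    (.of_forall fun y => rpow_nonneg (hf.nonneg _) s)

lemma rpow_mul_le_setIntegral_Ioc (hf : IsRadialProfile R f) (hs : 0 < s) (ha : 0 ≤ a) {t : ℝ}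
    (hat : a ≤ t) :
    f a ^ s * (a ^ N / N) ≤ ∫ r in Ioc 0 t, r ^ (N - 1) * f r ^ s := by
  have int (t : ℝ) : IntegrableOn (fun r => r ^ (N - 1) * f r ^ s) (Ioc 0 t) :=
    (hf.integrableOn_mass hs).mono_set fun r hr => hr.1
  calc f a ^ s * (a ^ N / N) = ∫ r in Ioc 0 a, f a ^ s * r ^ (N - 1) := by
        rw [integral_const_mul, setIntegral_Ioc_pow_sub_one ha]
    _ ≤ ∫ r in Ioc 0 a, r ^ (N - 1) * f r ^ s := by
        refine setIntegral_mono_on (by fun_prop : Continuous _).integrableOn_Ioc (int a)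
          measurableSet_Ioc fun r hr => ?_
        rw [mul_comm]
        exact mul_le_mul_of_nonneg_left
          (rpow_le_rpow (hf.nonneg a) (hf.antitone hr.2) hs.le) (pow_nonneg hr.1.le _)
    _ ≤ ∫ r in Ioc 0 t, r ^ (N - 1) * f r ^ s := by
        refine setIntegral_mono_set (int t) ?_ (Ioc_subset_Ioc_right hat).eventuallyLE
        filter_upwards [ae_restrict_mem measurableSet_Ioc] with r hr
        exact mul_nonneg (pow_nonneg hr.1.le _) (rpow_nonneg (hf.nonneg r) s)

lemma rpow_mul_toSphere_le_setIntegral (hf : IsRadialProfile R f) (hs : 0 < s) (ha : 0 ≤ a)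
    (hΩo : IsOpen Ω) (hΩb : Bornology.IsBounded Ω) (hΩc : Convex ℝ Ω) (hx : x ∈ closure Ω)
    (hW : MeasurableSet W) (hWa : ∀ ω ∈ W, a ≤ rayLength Ω x ω) :
    f a ^ s * (a ^ N / N) * volume.toSphere.real W ≤ ∫ y in Ω, f ‖y - x‖ ^ s := by
  have neg_le := setIntegral_fun_norm_sub_le volume hΩo hΩb hΩc hx (h := fun r => -f r ^ s)
    (η := 0) (γ := f a ^ s * (a ^ N / N)) (S := Ici a)
    (hf.integrable_rpow_norm_sub volume hs x).neg.integrableOn ?_ ?_ hW hWa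
  · rw [integral_neg] at neg_le
    linarith
  all_goals simp only [mul_neg, integral_neg, finrank_euclideanSpace_fin, zero_sub, neg_le_neg_iff]
  · exact fun t _ => neg_nonpos.2 (setIntegral_nonneg measurableSet_Ioc fun r hr =>
      mul_nonneg (pow_nonneg hr.1.le _) (rpow_nonneg (hf.nonneg r) s))
  · exact fun t hat => hf.rpow_mul_le_setIntegral_Ioc hs ha hat

lemma rpow_mul_le_mul_setIntegral_Ioc (hf : IsRadialProfile R f) (hq : 1 < q) (ha : 0 ≤ a)
    (has : a ≤ s) (hsb : s ≤ b) :
    f b ^ q * (a ^ N / N) ≤ f s * ∫ r in Ioc 0 s, r ^ (N - 1) * f r ^ (q - 1) :=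
  calc f b ^ q * (a ^ N / N) = f b * (f b ^ (q - 1) * (a ^ N / N)) := by
        rw [← mul_rpow_sub_one_eq_rpow (hf.nonneg b) hq, mul_assoc]
    _ ≤ f s * (f a ^ (q - 1) * (a ^ N / N)) := by
        have rpow_le := rpow_le_rpow (hf.nonneg b) (hf.antitone (has.trans hsb)) (sub_pos.2 hq).le
        exact mul_le_mul (hf.antitone hsb) (mul_le_mul_of_nonneg_right rpow_le (by positivity))
          (mul_nonneg (rpow_nonneg (hf.nonneg b) _) (by positivity)) (hf.nonneg s)
    _ ≤ f s * ∫ r in Ioc 0 s, r ^ (N - 1) * f r ^ (q - 1) :=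
        mul_le_mul_of_nonneg_left (hf.rpow_mul_le_setIntegral_Ioc (sub_pos.2 hq) ha has)
          (hf.nonneg s)

omit [NeZero N] in
lemma setIntegral_Ioc_energy_sub_mass_le (hf : IsRadialProfile R f) (hp : 0 < p) (hq : 1 < q)
    (hnear : ∫ r in Ioc 0 s, r ^ (N - 1) * |deriv f r| ^ p ≤ Λ * excessMass N q f s + η) :
    ∫ r in Ioc 0 s, r ^ (N - 1) * (|deriv f r| ^ p - Λ * f r ^ q) ≤
      η - Λ * (f s * ∫ r in Ioc 0 s, r ^ (N - 1) * f r ^ (q - 1)) := by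
  simp only [mul_sub, mul_left_comm _ Λ]
  rw [integral_sub ((hf.integrableOn_energy hp).mono_set fun r hr => hr.1)
    (((hf.integrableOn_mass (zero_lt_one.trans hq)).mono_set fun r hr => hr.1).const_mul Λ),
    integral_const_mul]
  rw [hf.excessMass_eq_sub hq] at hnear
  linarith

/-- The near-minimality of `f` on every ball bounds the energy on the star-shaped `Ω`; the rays
that leave `Ω` while `f` is still positive yield the gain. -/
lemma setIntegral_abs_deriv_rpow_le (hf : IsRadialProfile R f) (hp : 0 < p) (hq : 1 < q)
    (hΛ : 0 ≤ Λ) (hnear : ∀ s, 0 ≤ s → ∫ r in Ioc 0 s, r ^ (N - 1) * |deriv f r| ^ p ≤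
      Λ * excessMass N q f s + η) (ha : 0 ≤ a)
    (hΩo : IsOpen Ω) (hΩb : Bornology.IsBounded Ω) (hΩc : Convex ℝ Ω) (hx : x ∈ closure Ω)
    (hW : MeasurableSet W) (hWab : ∀ ω ∈ W, rayLength Ω x ω ∈ Icc a b) :
    ∫ y in Ω, |deriv f ‖y - x‖| ^ p ≤ Λ * (∫ y in Ω, f ‖y - x‖ ^ q) + η * sphereArea N -
      Λ * (f b ^ q * (a ^ N / N)) * volume.toSphere.real W := by
  have energy_int := hf.integrable_abs_deriv_rpow_norm_sub volume hp x
  have mass_int := (hf.integrable_rpow_norm_sub volume (zero_lt_one.trans hq) x).const_mul Λ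
  have le_on_ball (s : ℝ) (hs : 0 ≤ s) := hf.setIntegral_Ioc_energy_sub_mass_le hp hq (hnear s hs)
  have le := setIntegral_fun_norm_sub_le volume hΩo hΩb hΩc hx (W := W) (S := Icc a b)
    (h := fun r => |deriv f r| ^ p - Λ * f r ^ q) (η := η) (γ := Λ * (f b ^ q * (a ^ N / N)))
    (energy_int.sub mass_int).integrableOn ?_ ?_ hW hWab
  · rw [integral_sub energy_int.restrict mass_int.restrict, integral_const_mul] at le
    rw [sphereArea]
    linarith
  all_goals rw [finrank_euclideanSpace_fin]
  · refine fun s hs => (le_on_ball s hs).trans (sub_le_self η (mul_nonneg hΛ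
      (mul_nonneg (hf.nonneg s) (setIntegral_nonneg measurableSet_Ioc fun r hr =>
        mul_nonneg (pow_nonneg hr.1.le _) (rpow_nonneg (hf.nonneg r) _)))))
  · rintro s ⟨has, hsb⟩
    exact (le_on_ball s (ha.trans has)).trans (sub_le_sub_left
      (mul_le_mul_of_nonneg_left (hf.rpow_mul_le_mul_setIntegral_Ioc hq ha has hsb) hΛ) η)

end IsRadialProfile

lemma exists_pos_le_setIntegral_rpow (hΩo : IsOpen Ω) (hΩb : Bornology.IsBounded Ω)
    (hΩc : Convex ℝ Ω) (hne : Ω.Nonempty) (hx : x ∈ closure Ω) (hb : 0 < b) {m : ℝ} (hm : 0 < m)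
    (hs : 0 < s) :
    ∃ α > 0, ∀ ⦃R f⦄, IsRadialProfile R f → m ≤ f b → α ≤ ∫ y in Ω, f ‖y - x‖ ^ s := by
  obtain ⟨a, ha, hab, sector_pos⟩ :=
    exists_toSphere_pos_of_mem_closure volume hΩo hΩc hne hx hb
  refine ⟨m ^ s * (a ^ N / N) * volume.toSphere.real _,
    mul_pos (mul_pos (rpow_pos_of_pos hm s) ?_) sector_pos, fun R f hf hmb => ?_⟩
  · have := NeZero.pos N
    positivity
  · have rpow_le : m ^ s ≤ f a ^ s := rpow_le_rpow hm.le (hmb.trans (hf.antitone hab)) hs.le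
    refine le_trans ?_ (hf.rpow_mul_toSphere_le_setIntegral hs ha.le hΩo hΩb hΩc hx
      (hΩo.preimage (by fun_prop)).measurableSet
      fun ω hω => le_rayLength hΩb (norm_eq_of_mem_sphere ω) ha hω)
    exact mul_le_mul_of_nonneg_right (mul_le_mul_of_nonneg_right rpow_le (by positivity))
      measureReal_nonneg

lemma add_rpow_mul_le_rpow_mul_rpow {A₀ A₁ c S : ℝ} (hp : 0 < p) (hpq : p ≤ q) (hA₀ : 0 < A₀)
    (hA₁ : 0 ≤ A₁) (hc : 0 ≤ c) (hS : A₀ + A₁ ≤ S) :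
    A₀ + c ^ p * A₁ ≤ (A₀ + c ^ q * A₁) ^ (p / q) * S ^ (1 - p / q) := by
  have hq : 0 < q := hp.trans_le hpq
  have hθ₁ : p / q ≤ 1 := (div_le_one hq).2 hpq
  have hT : 0 < A₀ + A₁ := add_pos_of_pos_of_nonneg hA₀ hA₁
  have concave := (Real.concaveOn_rpow (div_pos hp hq).le hθ₁).2 (mem_Ici.2 zero_le_one)
    (mem_Ici.2 (rpow_nonneg hc q)) (div_nonneg hA₀.le hT.le) (div_nonneg hA₁ hT.le)
    (by field_simp)
  simp only [smul_eq_mul, mul_one, one_rpow, div_mul_eq_mul_div, ← add_div] at concave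
  rw [← rpow_mul hc, mul_div_cancel₀ _ hq.ne'] at concave
  rw [div_rpow (by positivity) hT.le, mul_comm A₁, mul_comm A₁] at concave
  calc A₀ + c ^ p * A₁ = (A₀ + c ^ p * A₁) / (A₀ + A₁) * (A₀ + A₁) := by field_simp
    _ ≤ (A₀ + c ^ q * A₁) ^ (p / q) / (A₀ + A₁) ^ (p / q) * (A₀ + A₁) := by gcongr
    _ = (A₀ + c ^ q * A₁) ^ (p / q) * (A₀ + A₁) ^ (1 - p / q) := by
        rw [rpow_sub hT, rpow_one]
        ring
    _ ≤ (A₀ + c ^ q * A₁) ^ (p / q) * S ^ (1 - p / q) := by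
        have := sub_nonneg.2 hθ₁
        gcongr

lemma add_rpow_mul_div_le {A₀ A₁ P₀ P₁ ε₀ ε₁ c S : ℝ} (hp : 0 < p) (hpq : p ≤ q) (hA₀ : 0 < A₀)
    (hA₁ : 0 ≤ A₁) (hc : 0 ≤ c) (hS : A₀ + A₁ ≤ S) (hΛ : 0 ≤ Λ) (hP₀ : P₀ ≤ Λ * A₀ + ε₀)
    (hP₁ : P₁ ≤ Λ * A₁ + ε₁) :
    (P₀ + c ^ p * P₁) / (A₀ + c ^ q * A₁) ^ (p / q) ≤
      S ^ (1 - p / q) * Λ + (ε₀ + c ^ p * ε₁) / (A₀ + c ^ q * A₁) ^ (p / q) := by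
  have hD : 0 < (A₀ + c ^ q * A₁) ^ (p / q) := by positivity
  have holder := mul_le_mul_of_nonneg_left
    (add_rpow_mul_le_rpow_mul_rpow hp hpq hA₀ hA₁ hc hS) hΛ
  have := mul_le_mul_of_nonneg_left hP₁ (rpow_nonneg hc p)
  rw [div_le_iff₀ hD, add_mul, div_mul_cancel₀ _ hD.ne']
  linarith

lemma exists_rpow_sub_one_mul_eq {M₀ M₁ B β : ℝ} (hq : 1 < q) (hM₀ : 0 < M₀) (hM₀B : M₀ ≤ B)
    (hβ : 0 < β) (hβM₁ : β ≤ M₁) :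
    ∃ c, 0 < c ∧ c ≤ (B / β) ^ (1 / (q - 1)) ∧ c ^ (q - 1) * M₁ = M₀ := by
  have hM₁ : 0 < M₁ := hβ.trans_le hβM₁
  have hq₁ : 0 < q - 1 := sub_pos.2 hq
  have : 0 ≤ B := hM₀.le.trans hM₀B
  refine ⟨(M₀ / M₁) ^ (1 / (q - 1)), by positivity, by gcongr, ?_⟩
  rw [← rpow_mul (by positivity), one_div_mul_cancel hq₁.ne', rpow_one, div_mul_cancel₀ _ hM₁.ne']

/-- Two points of the closure of `Ω` that realize its diameter. -/
structure IsDiametralPair {E : Type*} [SeminormedAddCommGroup E] (Ω : Set E) (x₀ x₁ : E) :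
    Prop where
  left_mem_closure : x₀ ∈ closure Ω
  right_mem_closure : x₁ ∈ closure Ω
  norm_sub_eq_diam : ‖x₁ - x₀‖ = diam Ω

lemma norm_sub_le_diam_of_mem_closure {E : Type*} [SeminormedAddCommGroup E] {Ω : Set E}
    (hΩ : Bornology.IsBounded Ω) {x y : E} (hx : x ∈ closure Ω) (hy : y ∈ closure Ω) :
    ‖x - y‖ ≤ diam Ω := by
  rw [← dist_eq_norm, ← diam_closure]
  exact dist_le_diam_of_mem hΩ.closure hx hy

lemma exists_isDiametralPair {E : Type*} [SeminormedAddCommGroup E] [ProperSpace E] {Ω : Set E}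
    (hΩ : Bornology.IsBounded Ω) (hne : Ω.Nonempty) : ∃ x₀ x₁, IsDiametralPair Ω x₀ x₁ := by
  have compact := hΩ.isCompact_closure
  obtain ⟨⟨x₁, x₀⟩, ⟨hx₁, hx₀⟩, hmax⟩ := (compact.prod compact).exists_isMaxOn
    (hne.closure.prod hne.closure) (f := fun z => dist z.1 z.2) (by fun_prop)
  refine ⟨x₀, x₁, hx₀, hx₁, (norm_sub_le_diam_of_mem_closure hΩ hx₁ hx₀).antisymm ?_⟩
  rw [← dist_eq_norm]
  exact diam_le_of_forall_dist_le dist_nonneg fun x hx y hy =>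
    hmax (mk_mem_prod (subset_closure hx) (subset_closure hy))

namespace IsDiametralPair

lemma setIntegral_rpow_add_le (hdiam : IsDiametralPair Ω x₀ x₁) (hΩ : MeasurableSet Ω)
    (hΩb : Bornology.IsBounded Ω) (hf : IsRadialProfile R f) (hs : 0 < s) :
    (∫ x in Ω, f ‖x - x₀‖ ^ s) + ∫ x in Ω, f ‖x - x₁‖ ^ s ≤ sphereArea N * radialMass N s f := by
  rw [radialMass, ← integral_fun_norm_eq_sphereArea_mul fun r => f r ^ s]
  have int : Integrable fun x : EuclideanSpace ℝ (Fin N) => f ‖x‖ ^ s := by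
    simpa only [sub_zero] using hf.integrable_rpow_norm_sub volume hs
      (0 : EuclideanSpace ℝ (Fin N))
  have norm_sub_le {y : EuclideanSpace ℝ (Fin N)} (hy : y ∈ closure Ω) (x) (hx : x ∈ Ω) :
      ‖x - y‖ ≤ ‖x₁ - x₀‖ :=
    (norm_sub_le_diam_of_mem_closure hΩb (subset_closure hx) hy).trans hdiam.norm_sub_eq_diam.ge
  exact setIntegral_sub_add_setIntegral_sub_le (g := fun x => f ‖x‖ ^ s) hΩ
    (norm_sub_le hdiam.left_mem_closure) (norm_sub_le hdiam.right_mem_closure) int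
    fun x => rpow_nonneg (hf.nonneg ‖x‖) s

lemma muPQ_le_of_nearMinimizer (hdiam : IsDiametralPair Ω x₀ x₁) (hR : 2 * R ≤ diam Ω)
    (hp : 0 < p) (hpq : p ≤ q) (hq : 1 < q) (hΩo : IsOpen Ω) (hΩb : Bornology.IsBounded Ω)
    (hΩc : Convex ℝ Ω) (hf : IsRadialProfile R f) (hmass : radialMass N q f = 1) (hΛ : 0 ≤ Λ)
    (hnear : ∀ s, 0 ≤ s → ∫ r in Ioc 0 s, r ^ (N - 1) * |deriv f r| ^ p ≤
      Λ * excessMass N q f s + η)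
    (ha : 0 ≤ a) (hW : MeasurableSet W) (hWab : ∀ ω ∈ W, rayLength Ω x₀ ω ∈ Icc a b)
    {c : ℝ} (hc : 0 ≤ c)
    (hmean : c ^ (q - 1) * ∫ x in Ω, f ‖x - x₁‖ ^ (q - 1) = ∫ x in Ω, f ‖x - x₀‖ ^ (q - 1))
    (hpos : 0 < ∫ x in Ω, f ‖x - x₀‖ ^ q) :
    muPQ p q Ω ≤ sphereArea N ^ (1 - p / q) * Λ +
      (η * (sphereArea N * (1 + c ^ p)) -
        Λ * (f b ^ q * (a ^ N / N)) * volume.toSphere.real W) /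
      ((∫ x in Ω, f ‖x - x₀‖ ^ q) + c ^ q * ∫ x in Ω, f ‖x - x₁‖ ^ q) ^ (p / q) := by
  have energy₀ := hf.setIntegral_abs_deriv_rpow_le hp hq hΛ hnear ha hΩo hΩb hΩc
    hdiam.left_mem_closure hW hWab
  have energy₁ := hf.setIntegral_abs_deriv_rpow_le (W := ∅) (b := b) hp hq hΛ hnear ha hΩo hΩb hΩc
    hdiam.right_mem_closure .empty (by simp)
  rw [measureReal_empty, mul_zero, sub_zero] at energy₁
  rw [add_sub_assoc] at energy₀
  have mass_le := hdiam.setIntegral_rpow_add_le hΩo.measurableSet hΩb hf (zero_lt_one.trans hq)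
  rw [hmass, mul_one] at mass_le
  have hR' : 2 * R ≤ ‖x₁ - x₀‖ := hR.trans hdiam.norm_sub_eq_diam.ge
  refine (hf.muPQ_le_twoBump hR' hp hq hc hmean hpos).trans
    ((add_rpow_mul_div_le hp hpq hpos (integral_nonneg fun x => rpow_nonneg (hf.nonneg _) q)
      hc mass_le hΛ energy₀ energy₁).trans_eq ?_)
  ring

lemma exists_balanced_of_nearMinimizer (hdiam : IsDiametralPair Ω x₀ x₁) (hp : 1 < p)
    (hpq : p ≤ q) (hκ : 0 < p / N + p / q - 1) (hΩo : IsOpen Ω) (hΩb : Bornology.IsBounded Ω)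
    (hΩc : Convex ℝ Ω) (hne : Ω.Nonempty) (hb : 0 < b) (hbR : b < R) :
    ∃ η₀ > 0, ∃ m > 0, ∃ α > 0, ∃ C > 0, ∀ f, IsRadialProfile R f → radialMass N q f = 1 →
      radialEnergy N p f ≤ radialEigenvalue N p q R + η₀ →
      m ≤ f b ∧ α ≤ (∫ x in Ω, f ‖x - x₀‖ ^ q) ∧ ∃ c, 0 ≤ c ∧ c ≤ C ∧
        c ^ (q - 1) * ∫ x in Ω, f ‖x - x₁‖ ^ (q - 1) = ∫ x in Ω, f ‖x - x₀‖ ^ (q - 1) := by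
  have hq : 1 < q := hp.trans_le hpq
  have hq₁ : 0 < q - 1 := sub_pos.2 hq
  obtain ⟨m, hm, η₀, hη₀, le_f⟩ := exists_le_nearMinimizer (N := N) hp hpq hκ hb hbR
  obtain ⟨α, hα, le_A₀⟩ := exists_pos_le_setIntegral_rpow hΩo hΩb hΩc hne
    hdiam.left_mem_closure hb hm (zero_lt_one.trans hq)
  obtain ⟨β₀, hβ₀, le_M₀⟩ := exists_pos_le_setIntegral_rpow hΩo hΩb hΩc hne
    hdiam.left_mem_closure hb hm hq₁
  obtain ⟨β₁, hβ₁, le_M₁⟩ := exists_pos_le_setIntegral_rpow hΩo hΩb hΩc hne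
    hdiam.right_mem_closure hb hm hq₁
  have hR : 0 < R := hb.trans hbR
  have hS := sphereArea_pos (N := N)
  refine ⟨η₀, hη₀, m, hm, α, hα, (sphereArea N * (R ^ N / N + 1) / β₁) ^ (1 / (q - 1)),
    by positivity, fun f hf hmass henergy => ?_⟩
  have hmf := le_f f hf hmass henergy
  have M₀_le : ∫ x in Ω, f ‖x - x₀‖ ^ (q - 1) ≤ sphereArea N * (R ^ N / N + 1) := by
    refine (hf.setIntegral_rpow_norm_sub_le hq₁ x₀).trans
      (mul_le_mul_of_nonneg_left ?_ hS.le)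
    exact hmass ▸ hf.radialMass_sub_one_le (N := N) hq hR.le
  obtain ⟨c, hc, hcC, hmean⟩ := exists_rpow_sub_one_mul_eq hq (hβ₀.trans_le (le_M₀ hf hmf))
    M₀_le hβ₁ (le_M₁ hf hmf)
  exact ⟨hmf, le_A₀ hf hmf, c, hc.le, hcC, hmean⟩

end IsDiametralPair

lemma sub_div_rpow_le {A₀ A₁ C S c e g α : ℝ} (hp : 0 ≤ p) (hq : 0 < q) (he : 0 ≤ e) (hg : 0 ≤ g)
    (hα : 0 < α) (hαA₀ : α ≤ A₀) (hA₁ : 0 ≤ A₁) (hS : A₀ + A₁ ≤ S) (hc : 0 ≤ c) (hcC : c ≤ C) :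
    (e * (S * (1 + c ^ p)) - g) / (A₀ + c ^ q * A₁) ^ (p / q) ≤
      e * (S * (1 + C ^ p) / α ^ (p / q)) - g / (S * (1 + C ^ q)) ^ (p / q) := by
  have hA₀ : 0 < A₀ := hα.trans_le hαA₀
  have hD : α ≤ A₀ + c ^ q * A₁ := hαA₀.trans (le_add_of_nonneg_right (by positivity))
  have hS₀ : 0 ≤ S := (add_nonneg hA₀.le hA₁).trans hS
  have hDS : A₀ + c ^ q * A₁ ≤ S * (1 + C ^ q) :=
    calc A₀ + c ^ q * A₁ ≤ S + C ^ q * S :=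
          add_le_add (by linarith) (mul_le_mul (rpow_le_rpow hc hcC hq.le) (by linarith) hA₁
            (rpow_nonneg (hc.trans hcC) q))
      _ = S * (1 + C ^ q) := by ring
  have : 0 < (A₀ + c ^ q * A₁) ^ (p / q) := rpow_pos_of_pos (hα.trans_le hD) _
  have hC : 0 ≤ C ^ p := rpow_nonneg (hc.trans hcC) p
  rw [sub_div, ← mul_div_assoc]
  gcongr

namespace IsDiametralPair

theorem exists_muPQ_le (hdiam : IsDiametralPair Ω x₀ x₁) (hR : 2 * R ≤ diam Ω)
    (hp : 1 < p) (hpq : p ≤ q) (hκ : 0 < p / N + p / q - 1) (hΩo : IsOpen Ω)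
    (hΩb : Bornology.IsBounded Ω) (hΩc : Convex ℝ Ω) (hne : Ω.Nonempty)
    (ha : 0 < a) (hb : 0 < b) (hbR : b < R)
    (hW : MeasurableSet W) (hWab : ∀ ω ∈ W, rayLength Ω x₀ ω ∈ Icc a b) :
    ∃ G > 0, muPQ p q Ω ≤ sphereArea N ^ (1 - p / q) * radialEigenvalue N p q R -
      volume.toSphere.real W * G := by
  have hp₀ : 0 < p := zero_lt_one.trans hp
  have hq : 1 < q := hp.trans_le hpq
  have hq₀ : 0 < q := hp₀.trans_le hpq
  have hR₀ : 0 < R := hb.trans hbR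
  have hN : (0 : ℝ) < N := Nat.cast_pos.2 (NeZero.pos N)
  have hΛ := radialEigenvalue_pos (N := N) hp hq₀ hκ hR₀
  have hS := sphereArea_pos (N := N)
  obtain ⟨η₀, hη₀, m, hm, α, hα, C, hC, balanced⟩ :=
    hdiam.exists_balanced_of_nearMinimizer hp hpq hκ hΩo hΩb hΩc hne hb hbR
  set Λ := radialEigenvalue N p q R
  set K := sphereArea N * (1 + C ^ p) / α ^ (p / q)
  set D := (sphereArea N * (1 + C ^ q)) ^ (p / q)
  have hK : 0 < K := by positivity
  refine ⟨Λ * (m ^ q * (a ^ N / N)) / D, by positivity, le_of_forall_pos_le_add fun ε hε => ?_⟩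
  set η := min η₀ (ε / K)
  have hη : 0 < η := lt_min hη₀ (div_pos hε hK)
  obtain ⟨f, hf, hmass, henergy, hnear⟩ := exists_nearMinimizer (N := N) hp hpq hR₀ hη
  obtain ⟨hmf, hαA₀, c, hc, hcC, hmean⟩ :=
    balanced f hf hmass (henergy.trans (add_le_add_right (min_le_left _ _) _))
  have mass_le := hdiam.setIntegral_rpow_add_le hΩo.measurableSet hΩb hf hq₀
  rw [hmass, mul_one] at mass_le
  calc muPQ p q Ω ≤ _ := hdiam.muPQ_le_of_nearMinimizer hR hp₀ hpq hq hΩo hΩb hΩc hf hmass hΛ.le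
        hnear ha.le hW hWab hc hmean (hα.trans_le hαA₀)
    _ ≤ _ := add_le_add_right (sub_div_rpow_le hp₀.le hq₀ hη.le
        (mul_nonneg (mul_nonneg hΛ.le (mul_nonneg (rpow_nonneg (hf.nonneg b) q) (by positivity)))
          measureReal_nonneg)
        hα hαA₀ (integral_nonneg fun x => rpow_nonneg (hf.nonneg _) q) mass_le hc hcC) _
    _ ≤ sphereArea N ^ (1 - p / q) * Λ + (ε -
        Λ * (m ^ q * (a ^ N / N)) * volume.toSphere.real W / D) := by
      gcongr
      exact (le_div_iff₀ hK).1 (min_le_right η₀ (ε / K))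
    _ = _ := by ring

end IsDiametralPair

end TwoBumpEstimates

section Isodiametric

open scoped Pointwise

variable {E : Type*} [NormedAddCommGroup E] [NormedSpace ℝ E] [FiniteDimensional ℝ E]
  {Ω : Set E} {ρ : ℝ}

lemma sub_subset_closedBall_diam {E : Type*} [SeminormedAddCommGroup E] {Ω : Set E}
    (hΩ : Bornology.IsBounded Ω) : Ω - Ω ⊆ closedBall 0 (diam Ω) := by
  rintro _ ⟨x, hx, y, hy, rfl⟩
  rw [mem_closedBall_zero_iff, ← dist_eq_norm]
  exact dist_le_diam_of_mem hΩ hx hy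

variable [MeasurableSpace E] [BorelSpace E] (μ : Measure E) [μ.IsAddHaarMeasure]

lemma exists_pos_measure_ball_eq [Nontrivial E] (hΩo : IsOpen Ω) (hΩb : Bornology.IsBounded Ω)
    (hne : Ω.Nonempty) : ∃ ρ > 0, μ Ω = μ (ball 0 ρ) := by
  obtain ⟨ρ, hρ, eq⟩ := exists_measure_ball_eq μ (hΩb.measure_lt_top (μ := μ)).ne
  refine ⟨ρ, hρ.lt_of_ne' fun h => (hΩo.measure_pos μ hne).ne' ?_, eq.symm⟩
  rw [← eq, h, ball_zero, measure_empty]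

lemma measure_ball_two_mul_le_measure_sub (hΩ : IsOpen Ω) (hρ : 0 < ρ) (h : μ Ω = μ (ball 0 ρ)) :
    μ (ball 0 (2 * ρ)) ≤ μ (Ω - Ω) := by
  rw [two_mul, sub_eq_add_neg]
  exact measure_ball_add_le_measure_add μ hΩ hΩ.neg hρ hρ h ((Measure.measure_neg μ Ω).trans h)

theorem two_mul_le_diam_of_measure_eq [Nontrivial E] (hΩo : IsOpen Ω)
    (hΩb : Bornology.IsBounded Ω) (hρ : 0 < ρ) (h : μ Ω = μ (ball 0 ρ)) : 2 * ρ ≤ diam Ω := by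
  by_contra! lt
  refine ((measure_ball_lt_measure_ball_iff μ diam_nonneg).2 lt).not_ge ?_
  rw [← Measure.addHaar_closedBall_eq_addHaar_ball μ 0 (diam Ω)]
  exact (measure_ball_two_mul_le_measure_sub μ hΩo hρ h).trans
    (measure_mono (sub_subset_closedBall_diam hΩb))

lemma closedBall_subset_closure_of_measure_ball_le [Nontrivial E] {C : Set E} {R : ℝ} (hR : R ≠ 0)
    (hCR : C ⊆ closedBall 0 R) (hμC : μ (ball 0 R) ≤ μ C) : closedBall 0 R ⊆ closure C := by
  rw [← closure_ball _ hR]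
  refine closure_minimal (fun x hx => ?_) isClosed_closure
  by_contra hxC
  have isOpen : IsOpen (ball 0 R \ closure C) := isOpen_ball.sdiff isClosed_closure
  have disjoint : Disjoint C (ball 0 R \ closure C) :=
    disjoint_sdiff_right.mono_left subset_closure
  have union_le : μ C + μ (ball 0 R \ closure C) ≤ μ (ball 0 R) := by
    rw [← measure_union disjoint isOpen.measurableSet,
      ← Measure.addHaar_closedBall_eq_addHaar_ball μ 0 R]
    exact measure_mono (union_subset hCR (sdiff_subset.trans ball_subset_closedBall))
  exact (ENNReal.lt_add_right (measure_ne_top_of_subset hCR measure_closedBall_lt_top.ne)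
    (isOpen.measure_pos μ ⟨x, hx, hxC⟩).ne').not_ge (union_le.trans hμC)

lemma exists_sub_eq_of_measure_eq [Nontrivial E] (hΩo : IsOpen Ω)
    (hΩb : Bornology.IsBounded Ω) (hρ : 0 < ρ) (h : μ Ω = μ (ball 0 ρ)) (hdiam : diam Ω = 2 * ρ)
    {v : E} (hv : ‖v‖ ≤ diam Ω) :
    ∃ x ∈ closure Ω, ∃ y ∈ closure Ω, x - y = v := by
  have isClosed : IsClosed (closure Ω - closure Ω) := by
    rw [sub_eq_add_neg]
    exact (hΩb.isCompact_closure.add hΩb.isCompact_closure.neg).isClosed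
  have v_mem : v ∈ closure (Ω - Ω) :=
    closedBall_subset_closure_of_measure_ball_le μ (by positivity)
      (hdiam ▸ sub_subset_closedBall_diam hΩb) (measure_ball_two_mul_le_measure_sub μ hΩo hρ h)
      (mem_closedBall_zero_iff.2 (hv.trans_eq hdiam))
  exact closure_minimal (sub_subset_sub subset_closure subset_closure) isClosed v_mem

end Isodiametric

section SupportingBall

variable {E : Type*} [NormedAddCommGroup E] [InnerProductSpace ℝ E] {Ω : Set E}
  {x₀ e w : E} {d t : ℝ}

lemma norm_smul_sub_smul_sq (hw : ‖w‖ = 1) (he : ‖e‖ = 1) :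
    ‖t • w - d • e‖ ^ 2 = d ^ 2 - t * (2 * d * inner ℝ w e - t) := by
  rw [norm_sub_sq_real, norm_smul, norm_smul, hw, he, real_inner_smul_left, real_inner_smul_right,
    mul_one, mul_one, Real.norm_eq_abs, Real.norm_eq_abs, sq_abs, sq_abs]
  ring

lemma add_smul_mem_ball_iff (hw : ‖w‖ = 1) (he : ‖e‖ = 1) (hd : 0 ≤ d) (ht : 0 < t) :
    x₀ + t • w ∈ ball (x₀ + d • e) d ↔ t < 2 * d * inner ℝ w e := by
  rw [mem_ball, dist_eq_norm, add_sub_add_left_eq_sub, ← sq_lt_sq₀ (norm_nonneg _) hd,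
    norm_smul_sub_smul_sq hw he, sub_lt_self_iff, mul_pos_iff_of_pos_left ht, sub_pos]

lemma add_smul_mem_closedBall_iff (hw : ‖w‖ = 1) (he : ‖e‖ = 1) (hd : 0 ≤ d) (ht : 0 < t) :
    x₀ + t • w ∈ closedBall (x₀ + d • e) d ↔ t ≤ 2 * d * inner ℝ w e := by
  rw [mem_closedBall, dist_eq_norm, add_sub_add_left_eq_sub, ← sq_le_sq₀ (norm_nonneg _) hd,
    norm_smul_sub_smul_sq hw he, sub_le_self_iff, mul_nonneg_iff_of_pos_left ht, sub_nonneg]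

/-- A ray through `x₀` from a point of `Ω` on the wrong side of the tangent hyperplane would enter
the ball. -/
lemma inner_sub_nonneg_of_ball_subset (hΩ : Convex ℝ Ω) (hx₀ : x₀ ∉ Ω) (he : ‖e‖ = 1) (hd : 0 < d)
    (hball : ball (x₀ + d • e) d ⊆ Ω) {x : E} (hx : x ∈ Ω) : 0 ≤ inner ℝ (x - x₀) e := by
  by_contra! neg
  have hxx₀ : 0 < ‖x - x₀‖ := norm_sub_pos_iff.2 fun h => hx₀ (h ▸ hx)
  set w := ‖x - x₀‖⁻¹ • (x₀ - x)
  have hw : ‖w‖ = 1 := by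
    rw [norm_smul, norm_inv, norm_norm, norm_sub_rev x₀, inv_mul_cancel₀ hxx₀.ne']
  have inner_pos : 0 < inner ℝ w e := by
    rw [real_inner_smul_left, ← neg_sub x, inner_neg_left]
    exact mul_pos (inv_pos.2 hxx₀) (neg_pos.2 neg)
  have ht : 0 < d * inner ℝ w e := mul_pos hd inner_pos
  have beyond : x₀ + (d * inner ℝ w e) • w ∈ Ω :=
    hball ((add_smul_mem_ball_iff hw he hd.le ht).2 (by linarith))
  refine hx₀ (hΩ.segment_subset hx beyond (mem_segment_iff_sameRay.2 ?_))
  rw [add_sub_cancel_left]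
  exact .nonneg_smul_right (.pos_smul_right .rfl (inv_pos.2 hxx₀)) ht.le

lemma exists_tangent_ball_subset [FiniteDimensional ℝ E] [Nontrivial E] (hΩo : IsOpen Ω)
    (hΩb : Bornology.IsBounded Ω) (hne : Ω.Nonempty) :
    ∃ x₀ ∉ Ω, ∃ e : E, ‖e‖ = 1 ∧ ∃ d > 0, ball (x₀ + d • e) d ⊆ Ω := by
  obtain ⟨z, hz⟩ := hne
  have : ProperSpace E := FiniteDimensional.proper ℝ E
  have compl_nonempty : Ωᶜ.Nonempty :=
    nonempty_compl.2 fun h => NormedSpace.unbounded_univ ℝ E (h ▸ hΩb)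
  obtain ⟨x₀, hx₀, infDist_eq⟩ := hΩo.isClosed_compl.exists_infDist_eq_dist compl_nonempty z
  have hzx₀ : 0 < ‖z - x₀‖ := norm_sub_pos_iff.2 fun h => hx₀ (h ▸ hz)
  refine ⟨x₀, hx₀, ‖z - x₀‖⁻¹ • (z - x₀), ?_, ‖z - x₀‖, hzx₀, ?_⟩
  · rw [norm_smul, norm_inv, norm_norm, inv_mul_cancel₀ hzx₀.ne']
  · rw [smul_inv_smul₀ hzx₀.ne', add_sub_cancel, ← dist_eq_norm, ← infDist_eq]
    exact ball_infDist_compl_subset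

lemma mem_closure_of_ball_subset (he : ‖e‖ = 1) (hd : 0 < d) (hball : ball (x₀ + d • e) d ⊆ Ω) :
    x₀ ∈ closure Ω := by
  refine closure_mono hball ?_
  rw [closure_ball _ hd.ne', mem_closedBall, dist_self_add_right, norm_smul, he, mul_one,
    Real.norm_of_nonneg hd.le]

lemma eq_smul_of_le_inner {v : E} {D : ℝ} (he : ‖e‖ = 1) (hv : ‖v‖ ≤ D) (h : D ≤ inner ℝ v e) :
    v = D • e := by
  have hD : 0 ≤ D := (norm_nonneg v).trans hv
  have sq_nonpos : ‖v - D • e‖ ^ 2 ≤ 0 := by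
    rw [norm_sub_sq_real, real_inner_smul_right, norm_smul, he, Real.norm_of_nonneg hD]
    nlinarith [norm_nonneg v]
  exact sub_eq_zero.1 (norm_eq_zero.1 (pow_eq_zero_iff two_ne_zero |>.1
    (sq_nonpos.antisymm (sq_nonneg _))))

lemma exists_sphere_inner_eq (hE : 1 < Module.rank ℝ E) (he : ‖e‖ = 1) (ht : t ∈ Icc (-1) 1) :
    ∃ ω : sphere (0 : E) 1, inner ℝ (ω : E) e = t := by
  have mem {v : E} (hv : ‖v‖ = 1) : v ∈ sphere (0 : E) 1 := mem_sphere_zero_iff_norm.2 hv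
  obtain ⟨ω, hω, eq⟩ := (isPreconnected_sphere hE 0 1).intermediate_value
    (mem ((norm_neg e).trans he)) (mem he) (f := fun v => inner ℝ v e) (by fun_prop)
    (by simpa [he] using ht)
  exact ⟨⟨ω, hω⟩, eq⟩

lemma toSphere_real_strip_pos [MeasurableSpace E] [BorelSpace E] [FiniteDimensional ℝ E]
    (μ : Measure E) [μ.IsAddHaarMeasure] (hE : 1 < Module.rank ℝ E) (he : ‖e‖ = 1) {s : ℝ}
    (hs : -1 ≤ s) (hst : s < t) (ht : t ≤ 1) :
    0 < μ.toSphere.real {ω | inner ℝ (ω : E) e ∈ Ioo s t} := by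
  have isOpen : IsOpen {ω : sphere (0 : E) 1 | inner ℝ (ω : E) e ∈ Ioo s t} :=
    isOpen_Ioo.preimage (by fun_prop)
  obtain ⟨u, hsu, hut⟩ := exists_between hst
  obtain ⟨ω, hω⟩ := exists_sphere_inner_eq hE he ⟨hs.trans hsu.le, hut.le.trans ht⟩
  exact ENNReal.toReal_pos (isOpen.measure_pos _ ⟨ω, hsu.trans_eq hω.symm, hω.trans_lt hut⟩).ne'
    (measure_ne_top _ _)

end SupportingBall

section EqualVolumeBall

variable {N : ℕ} [NeZero N] {p q r ρ : ℝ} {Ω : Set (EuclideanSpace ℝ (Fin N))}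
  {c : EuclideanSpace ℝ (Fin N)}

lemma ltCritical.div_add_div_sub_one_pos (hp : 0 < p) (hpq : p ≤ q) (hq : ltCritical N p q) :
    0 < p / N + p / q - 1 := by
  have hN : (0 : ℝ) < N := Nat.cast_pos.2 (NeZero.pos N)
  have hq0 : 0 < q := hp.trans_le hpq
  rcases lt_or_ge p N with hpN | hpN
  · have : q * (N - p) < N * p := (lt_div_iff₀ (sub_pos.2 hpN)).1 (hq hpN)
    have eq : p / N + p / q - 1 = (N * p - q * (N - p)) / (N * q) := by field_simp; ring
    rw [eq]
    exact div_pos (sub_pos.2 this) (mul_pos hN hq0)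
  · have := (one_le_div hN).2 hpN
    have := div_pos hp hq0
    linarith

lemma volume_ball_ratio_rpow (hr : 0 ≤ r) (hρ : 0 ≤ ρ) (κ : ℝ)
    (h : volume Ω = volume (ball (0 : EuclideanSpace ℝ (Fin N)) ρ)) :
    ((volume (ball c r)).toReal / (volume Ω).toReal) ^ κ = (r / ρ) ^ (N * κ) := by
  rw [h, Measure.addHaar_ball _ _ hr, Measure.addHaar_ball _ _ hρ, finrank_euclideanSpace_fin,
    ENNReal.toReal_mul, ENNReal.toReal_mul, ENNReal.toReal_ofReal (pow_nonneg hr N),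
    ENNReal.toReal_ofReal (pow_nonneg hρ N), mul_div_mul_right, ← div_pow,
    rpow_mul (div_nonneg hr hρ), rpow_natCast]
  exact (ENNReal.toReal_pos (measure_ball_pos _ _ one_pos).ne' measure_ball_lt_top.ne).ne'

lemma isDiametralPair_of_tangent_ball {e x₀ : EuclideanSpace ℝ (Fin N)} {d : ℝ} (hΩo : IsOpen Ω)
    (hΩb : Bornology.IsBounded Ω) (hΩc : Convex ℝ Ω) (hρ : 0 < ρ)
    (h : volume Ω = volume (ball (0 : EuclideanSpace ℝ (Fin N)) ρ)) (hdiam : diam Ω = 2 * ρ)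
    (hx₀ : x₀ ∉ Ω) (he : ‖e‖ = 1) (hd : 0 < d) (hball : ball (x₀ + d • e) d ⊆ Ω) :
    IsDiametralPair Ω x₀ (x₀ + diam Ω • e) := by
  have norm_diam_smul : ‖diam Ω • e‖ = diam Ω := by
    rw [norm_smul, he, mul_one, Real.norm_of_nonneg diam_nonneg]
  have hx₀Ω : x₀ ∈ closure Ω := mem_closure_of_ball_subset he hd hball
  obtain ⟨x₁, hx₁, w, hw, hsub⟩ :=
    exists_sub_eq_of_measure_eq volume hΩo hΩb hρ h hdiam norm_diam_smul.le
  have isClosed : IsClosed {x | 0 ≤ inner ℝ (x - x₀) e} :=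
    isClosed_le continuous_const (by fun_prop)
  have inner_nonneg : 0 ≤ inner ℝ (w - x₀) e :=
    closure_minimal (fun x hx => inner_sub_nonneg_of_ball_subset hΩc hx₀ he hd hball hx) isClosed hw
  have le_inner : diam Ω ≤ inner ℝ (x₁ - x₀) e := by
    rw [← sub_add_sub_cancel x₁ w x₀, hsub, inner_add_left, real_inner_smul_left,
      real_inner_self_eq_norm_sq, he]
    linarith
  have eq : x₁ - x₀ = diam Ω • e :=
    eq_smul_of_le_inner he (norm_sub_le_diam_of_mem_closure hΩb hx₁ hx₀Ω) le_inner
  rw [← eq, add_sub_cancel]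
  exact ⟨hx₀Ω, hx₁, by rw [eq, norm_diam_smul]⟩

/-- Along directions nearly orthogonal to the diameter, `Ω` leaves the ball of radius `ρ` around the
endpoint `x₀` early, so the bump centred there is truncated and loses a definite amount of energy.
-/
lemma muPQ_lt_of_diam_eq (hN : 2 ≤ N) (hp : 1 < p) (hpq : p ≤ q) (hκ : 0 < p / N + p / q - 1)
    (hΩo : IsOpen Ω) (hΩb : Bornology.IsBounded Ω) (hΩc : Convex ℝ Ω) (hne : Ω.Nonempty)
    (hρ : 0 < ρ) (h : volume Ω = volume (ball (0 : EuclideanSpace ℝ (Fin N)) ρ))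
    (hdiam : diam Ω = 2 * ρ) :
    muPQ p q Ω < sphereArea N ^ (1 - p / q) * radialEigenvalue N p q ρ := by
  obtain ⟨x₀, hx₀, e, he, d, hd, hball⟩ := exists_tangent_ball_subset hΩo hΩb hne
  have pair := isDiametralPair_of_tangent_ball hΩo hΩb hΩc hρ h hdiam hx₀ he hd hball
  have subset_closedBall : Ω ⊆ closedBall (x₀ + diam Ω • e) (diam Ω) := fun x hx =>
    mem_closedBall_iff_norm.2
      (norm_sub_le_diam_of_mem_closure hΩb (subset_closure hx) pair.right_mem_closure)
  set W : Set (sphere (0 : EuclideanSpace ℝ (Fin N)) 1) :=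
    {ω | inner ℝ (ω : EuclideanSpace ℝ (Fin N)) e ∈ Ioo (1 / 16) (1 / 8)}
  have rayLength_mem : ∀ ω ∈ W, rayLength Ω x₀ ω ∈ Icc (d / 8) (ρ / 2) := fun ω hω => by
    have norm_ω := norm_eq_of_mem_sphere ω
    constructor
    · refine le_rayLength hΩb norm_ω (by positivity)
        (hball ((add_smul_mem_ball_iff norm_ω he hd.le (by positivity)).2 ?_))
      linarith [mul_lt_mul_of_pos_left hω.1 hd]
    · refine rayLength_le hΩo hΩc pair.left_mem_closure (half_pos hρ) fun hmem => ?_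
      have := (add_smul_mem_closedBall_iff norm_ω he diam_nonneg (half_pos hρ)).1
        (subset_closedBall hmem)
      rw [hdiam] at this
      linarith [mul_lt_mul_of_pos_left hω.2 hρ]
  obtain ⟨G, hG, hle⟩ := pair.exists_muPQ_le hdiam.ge hp hpq hκ hΩo hΩb hΩc hne (W := W)
    (by positivity) (half_pos hρ) (half_lt_self hρ) (measurableSet_Ioo.preimage (by fun_prop))
    rayLength_mem
  have rank : 1 < Module.rank ℝ (EuclideanSpace ℝ (Fin N)) := by
    rw [← Module.finrank_eq_rank, finrank_euclideanSpace_fin]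
    exact_mod_cast hN
  have volume_W : 0 < volume.toSphere.real W :=
    toSphere_real_strip_pos volume rank he (by norm_num) (by norm_num) (by norm_num)
  exact hle.trans_lt (sub_lt_self _ (mul_pos volume_W hG))

lemma muPQ_lt_of_lt_diam (hp : 1 < p) (hpq : p ≤ q) (hκ : 0 < p / N + p / q - 1)
    (hΩo : IsOpen Ω) (hΩb : Bornology.IsBounded Ω) (hΩc : Convex ℝ Ω) (hne : Ω.Nonempty)
    (hρ : 0 < ρ) (hdiam : 2 * ρ < diam Ω) :
    muPQ p q Ω < sphereArea N ^ (1 - p / q) * radialEigenvalue N p q ρ := by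
  obtain ⟨x₀, x₁, pair⟩ := exists_isDiametralPair hΩb hne
  have hq : 0 < q := by linarith
  have hN : (0 : ℝ) < N := Nat.cast_pos.2 (NeZero.pos N)
  set R := diam Ω / 2 with R_def
  have hρR : ρ < R := by linarith
  have hR : 0 < R := hρ.trans hρR
  obtain ⟨G, -, hle⟩ := pair.exists_muPQ_le (R := R) (by linarith) hp hpq hκ hΩo hΩb hΩc hne
    (half_pos hR) (half_pos hR) (half_lt_self hR) MeasurableSet.empty (by simp)
  calc muPQ p q Ω ≤ sphereArea N ^ (1 - p / q) * radialEigenvalue N p q R := by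
        simpa using hle
    _ < sphereArea N ^ (1 - p / q) *
        (radialEigenvalue N p q R * (R / ρ) ^ (N * (p / N + p / q - 1))) := by
      refine mul_lt_mul_of_pos_left ?_ (rpow_pos_of_pos sphereArea_pos _)
      exact lt_mul_of_one_lt_right (radialEigenvalue_pos hp hq hκ hR)
        (one_lt_rpow ((one_lt_div hρ).2 hρR) (mul_pos hN hκ))
    _ ≤ sphereArea N ^ (1 - p / q) * radialEigenvalue N p q ρ :=
      mul_le_mul_of_nonneg_left (radialEigenvalue_mul_rpow_le (by linarith) hq hρ hR)
        (rpow_nonneg sphereArea_pos.le _)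

lemma muPQ_lt_of_volume_eq (hN : 2 ≤ N) (hp : 1 < p) (hpq : p ≤ q) (hκ : 0 < p / N + p / q - 1)
    (hΩo : IsOpen Ω) (hΩb : Bornology.IsBounded Ω) (hΩc : Convex ℝ Ω) (hne : Ω.Nonempty)
    (hρ : 0 < ρ) (h : volume Ω = volume (ball (0 : EuclideanSpace ℝ (Fin N)) ρ)) :
    muPQ p q Ω < sphereArea N ^ (1 - p / q) * radialEigenvalue N p q ρ :=
  (two_mul_le_diam_of_measure_eq volume hΩo hΩb hρ h).lt_or_eq.elim
    (muPQ_lt_of_lt_diam hp hpq hκ hΩo hΩb hΩc hne hρ)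
    (fun hdiam => muPQ_lt_of_diam_eq hN hp hpq hκ hΩo hΩb hΩc hne hρ h hdiam.symm)

lemma radialEigenvalue_le_mul_rpow (hp : 0 < p) (hq : 0 < q) (hr : 0 < r) (hρ : 0 < ρ) :
    radialEigenvalue N p q ρ ≤ radialEigenvalue N p q r * (r / ρ) ^ (N * (p / N + p / q - 1)) := by
  have := radialEigenvalue_mul_rpow_le (N := N) hp hq hr hρ
  rwa [← inv_div, inv_rpow (div_nonneg hr.le hρ.le), ← div_eq_mul_inv,
    div_le_iff₀ (rpow_pos_of_pos (div_pos hr hρ) _)] at this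

end EqualVolumeBall

/-- Corollary 4.2. Let `1 < p ≤ q < p*`. For every open bounded convex
set `Ω ⊂ ℝ^N` and every open ball `B ⊂ ℝ^N`,
`μ_{p,q}(Ω) < λ_{p,q}(B) · (|B|/|Ω|)^(p/N + p/q - 1)`. -/
theorem muPQ_lt_lambdaPQ_ball_volume {N : ℕ} (hN : 2 ≤ N) (p q : ℝ) (hp : 1 < p)
    (hpq : p ≤ q) (hq : ltCritical N p q)
    (Ω : Set (EuclideanSpace ℝ (Fin N))) (hΩo : IsOpen Ω)
    (hΩb : Bornology.IsBounded Ω) (hΩc : Convex ℝ Ω) (hΩne : Ω.Nonempty)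
    (c : EuclideanSpace ℝ (Fin N)) (r : ℝ) (hr : 0 < r) :
    muPQ p q Ω < lambdaPQ p q (ball c r) *
      ((volume (ball c r)).toReal / (volume Ω).toReal) ^ (p / N + p / q - 1) := by
  have : NeZero N := ⟨by omega⟩
  have hp0 : 0 < p := one_pos.trans hp
  have hq0 : 0 < q := hp0.trans_le hpq
  have hκ : 0 < p / N + p / q - 1 := hq.div_add_div_sub_one_pos hp0 hpq
  obtain ⟨ρ, hρ, volume_eq⟩ := exists_pos_measure_ball_eq volume hΩo hΩb hΩne
  calc muPQ p q Ω < sphereArea N ^ (1 - p / q) * radialEigenvalue N p q ρ :=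
        muPQ_lt_of_volume_eq hN hp hpq hκ hΩo hΩb hΩc hΩne hρ volume_eq
    _ ≤ sphereArea N ^ (1 - p / q) *
          (radialEigenvalue N p q r * (r / ρ) ^ (N * (p / N + p / q - 1))) :=
        mul_le_mul_of_nonneg_left (radialEigenvalue_le_mul_rpow hp0 hq0 hr hρ)
          (rpow_nonneg sphereArea_pos.le _)
    _ ≤ lambdaPQ p q (ball c r) * (r / ρ) ^ (N * (p / N + p / q - 1)) := by
        rw [← mul_assoc]
        exact mul_le_mul_of_nonneg_right
          (sphereArea_rpow_mul_radialEigenvalue_le_lambdaPQ_ball hp hq0 c hr)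
          (rpow_nonneg (div_nonneg hr.le hρ.le) _)
    _ = lambdaPQ p q (ball c r) *
          ((volume (ball c r)).toReal / (volume Ω).toReal) ^ (p / N + p / q - 1) := by
        rw [volume_ball_ratio_rpow hr.le hρ.le _ volume_eq]
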